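/- There is an absolute constant C > 0 such that for every multiplicative function f : ℕ → [−1,1], all sufficiently large x, and every y with 2 ≤ y ≤ x, one has | ∑_{n ≤ x, P⁺(n) ≤ y} f(n)/n | ≤ C·( (log y)·exp(−𝔻(f,1;y)²) + 1/(log x)^{1−2/π} ), where P⁺(n) denotes the largest prime factor of n (P⁺(1) := 1) and 𝔻(f,1;y)² := ∑_{p ≤ y} (1 − f(p))/p, the sum over primes p ≤ y. -/

import Mathlib

/-!
The sum is the logarithmic partial sum of the multiplicative function `F` obtained by restricting
`f` to `y`-smooth integers. Write `F = b * g` with `g` completely multiplicative and equal to `F` at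
the primes. Then `b` vanishes at the primes, so `∑ |b(m)| m^{-2/3}` converges uniformly in `F`
(`corr_sum_le`), and it suffices to prove, for completely multiplicative `g` with `|g| ≤ 1`,
  `∑_{n ≤ x} g(n)/n ≪ exp(∑_{p ≤ x} g(p)/p) + (log x)^{-(1 - 2/π)}`      (`core`).
For `F` the exponential is `exp(∑_{p ≤ y} f(p)/p)`, and Mertens' upper bound for `∑_{p ≤ y} 1/p`
turns it into `O(log y · exp(-𝔻²))`.

The proof of `core` is of Halász type. The sharp sum is compared with a smoothed sum `T(x) = ∑
g(n)/n · k(x/n)`, where `k(v) = 1 - (2/v²) ∑_{m ≤ v} (v - m)` for `v ≥ 1` decays like `1/v`. The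
difference is a mean value of `1 * g`, which is nonnegative because `g` is real, and hence is
`O(exp(∑ g(p)/p))` (`abs_sum_sub_Tf_le`). Since `log² = 1 * Λ₂`, Selberg's formula for `Λ₂` bounds
`log x · |T(x)|` by `O(1) + O(∫ |T(e^ρ)| dρ)` over `0 ≤ ρ ≤ log x + 1` (`log_mul_Tf_le_integral`).
That integral is cut into dyadic blocks. On a block of size `1/α`, Cauchy–Schwarz and Plancherel
lead to the mean square of `P · G` on the line `Re s = 1 + α`, where `G(s) = ∑ g(n) n^{-s}` and
`P(s) = ∑ g(n) Λ(n) n^{-s}`, so that `-G' = P G` (`integral_phi_sq_le`). There `P` is handled by a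
mean value estimate that uses only Chebyshev's bounds (`weighted_moment`), and `G` by the pointwise
bound
  `|G(1+α+it)|² ≪ (log x · exp(∑_{p ≤ x} g(p)/p) α^{-2/π} + α^{-4/π}) (1 + |t|)^{2/π}`
(`DS_sq_bound`).

The exponent `2/π` is the mean of `|cos|`: one has `log |G(1+α+it)| ≤ ∑_p |cos(t log p)| p^{-1-α} +
O(1)`, and by the Fourier series of `|cos|` the right side is a combination of the `log
|ζ(1+α+2int)|`, which are controlled by a classical zero-free argument (`cosSum_bound`). For `|t| ≤
1` this is averaged with the bound coming from `(1 + g(p))(1 - cos(t log p)) ≥ 0`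
(`primeSum_le_near`); in the average the singular factors in `|t| + α` combine favourably, and that
is where the main term enters.
-/

open Finset

open scoped Classical

noncomputable def primesUpTo (y : ℝ) : Finset ℕ := (Finset.Iic ⌊y⌋₊).filter Nat.Prime

def IsMult (f : ℕ → ℝ) : Prop := f 1 = 1 ∧ ∀ m n : ℕ, Nat.Coprime m n → f (m * n) = f m * f n

/-- `𝔻(f,1;y)² := ∑_{p ≤ y} (1 − f(p))/p`. -/
noncomputable def DsqOne (f : ℕ → ℝ) (y : ℝ) : ℝ := ∑ p ∈ primesUpTo y, (1 - f p) / p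

/-! ### Chebyshev bounds -/

namespace LogHalasz

open ArithmeticFunction (vonMangoldt)

/-- Abel summation: if the partial sums of `c` are at most `C n`, then weighting by a decreasing `w
≥ 0` costs no more than replacing `c` by the constant `C`. -/
theorem abel_le {c w : ℕ → ℝ} {C : ℝ} (hc : ∀ n, ∑ i ∈ Icc 1 n, c i ≤ C * n)
    (hw : ∀ n, 1 ≤ n → w (n + 1) ≤ w n) (hw0 : ∀ n, 0 ≤ w n) (N : ℕ) :
    ∑ i ∈ Icc 1 N, c i * w i ≤ C * ∑ i ∈ Icc 1 N, w i := by
  have key : ∀ N, C * ∑ i ∈ Icc 1 N, w i - ∑ i ∈ Icc 1 N, c i * w i ≥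
      (C * N - ∑ i ∈ Icc 1 N, c i) * w N := by
    intro N
    induction N with
    | zero => simp
    | succ n ih =>
      rw [sum_Icc_succ_top (by omega), sum_Icc_succ_top (by omega), sum_Icc_succ_top (by omega)]
      rcases Nat.eq_zero_or_pos n with rfl | hn
      · simp; linarith
      · have h1 := hc n
        have h2 := hw n hn
        push_cast
        nlinarith [mul_nonneg (sub_nonneg.2 h1) (sub_nonneg.2 h2)]
  have := key N
  nlinarith [mul_nonneg (sub_nonneg.2 (hc N)) (hw0 N)]

/-- The Chebyshev constant: `∑_{n ≤ N} Λ(n) ≤ cheb * N`. -/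
noncomputable def cheb : ℝ := Real.log 4 + 4

theorem cheb_pos : 0 < cheb := by
  have : 0 < Real.log 4 := Real.log_pos (by norm_num)
  unfold cheb; linarith

theorem sum_vonMangoldt_le (N : ℕ) : ∑ i ∈ Icc 1 N, vonMangoldt i ≤ cheb * N := by
  have := Chebyshev.psi_le_const_mul_self (x := N) (by positivity)
  rw [Chebyshev.psi] at this
  simpa [cheb, ← Finset.Icc_add_one_left_eq_Ioc] using this

theorem harmonic_sum_le (N : ℕ) : ∑ i ∈ Icc 1 N, (1 : ℝ) / i ≤ 1 + Real.log N := by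
  have := harmonic_le_one_add_log N
  rw [harmonic_eq_sum_Icc] at this
  simpa using this

theorem sum_vonMangoldt_div_le {x : ℝ} (hx : 1 ≤ x) :
    ∑ i ∈ Icc 1 ⌊x⌋₊, vonMangoldt i / i ≤ cheb * (1 + Real.log x) := by
  have h1 : 1 ≤ ⌊x⌋₊ := Nat.le_floor (by simpa using hx)
  calc ∑ i ∈ Icc 1 ⌊x⌋₊, vonMangoldt i / i = ∑ i ∈ Icc 1 ⌊x⌋₊, vonMangoldt i * ((1 : ℝ) / i) := by
        simp [div_eq_mul_inv]
    _ ≤ cheb * ∑ i ∈ Icc 1 ⌊x⌋₊, (1 : ℝ) / i := by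
        apply abel_le sum_vonMangoldt_le
        · intro n hn
          have : (0 : ℝ) < n := by exact_mod_cast hn
          push_cast
          gcongr; linarith
        · intro n; positivity
    _ ≤ cheb * (1 + Real.log ⌊x⌋₊) := by
        gcongr
        · exact cheb_pos.le
        · exact harmonic_sum_le _
    _ ≤ _ := by
        have : (0 : ℝ) < ⌊x⌋₊ := by exact_mod_cast h1
        gcongr
        · exact cheb_pos.le
        · exact Nat.floor_le (by linarith)

theorem sum_rpow_le {α : ℝ} (hα : 0 < α) (N : ℕ) :
    ∑ i ∈ Icc 1 N, (i : ℝ) ^ (-(1 + α)) ≤ 1 + 1 / α := by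
  have key : ∀ N : ℕ, 1 ≤ N → ∑ i ∈ Icc 1 N, (i : ℝ) ^ (-(1 + α)) ≤
      1 + 1 / α - (N : ℝ) ^ (-α) / α := by
    intro N hN
    induction N, hN using Nat.le_induction with
    | base => simp
    | succ n hn ih =>
      rw [sum_Icc_succ_top (by omega)]
      have hn0 : (0 : ℝ) < n := by exact_mod_cast hn
      have : ((n + 1 : ℕ) : ℝ) ^ (-(1 + α)) ≤ (n : ℝ) ^ (-α) / α - ((n + 1 : ℕ) : ℝ) ^ (-α) / α := by
        have hb := one_add_mul_self_le_rpow_one_add (s := 1 / (n : ℝ)) (p := 1 + α)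
          (by have := one_div_pos.2 hn0; linarith) (by linarith)
        have h1 : (1 + 1 / (n : ℝ)) = (n + 1) / n := by field_simp
        rw [h1] at hb
        -- n^{-α} = (n+1)^{-α} ((n+1)/n)^α
        have hm : (0 : ℝ) < (n : ℝ) + 1 := by linarith
        have e1 : (n : ℝ) ^ (-α) = ((n : ℝ) + 1) ^ (-(1 + α)) * n * ((n + 1) / n) ^ (1 + α) := by
          rw [Real.div_rpow hm.le hn0.le, Real.rpow_neg hm.le, Real.rpow_neg hn0.le,
            Real.rpow_add hn0, Real.rpow_one]
          field_simp
        have e2 : ((n : ℝ) + 1) ^ (-α) = ((n : ℝ) + 1) ^ (-(1 + α)) * (n + 1) := by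
          rw [show -α = -(1 + α) + 1 by ring, Real.rpow_add_one hm.ne']
        push_cast
        rw [e1, e2, ← sub_div, le_div_iff₀ hα]
        have hp : 0 < ((n : ℝ) + 1) ^ (-(1 + α)) := by positivity
        have : α ≤ n * ((n + 1) / n) ^ (1 + α) - (n + 1) := by
          have := mul_le_mul_of_nonneg_left hb hn0.le
          have e : (n : ℝ) * (1 + (1 + α) * (1 / n)) = n + 1 + α := by field_simp; ring
          linarith
        nlinarith [mul_le_mul_of_nonneg_left this hp.le]
      linarith
  rcases Nat.eq_zero_or_pos N with rfl | hN
  · simp; positivity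
  · have := key N hN
    have h2 : 0 ≤ (N : ℝ) ^ (-α) / α := by positivity
    linarith

theorem summable_tsum_le_of_Icc {c : ℕ → ℝ} {B : ℝ} (hc : ∀ n, 0 ≤ c n) (h0 : c 0 = 0)
    (h : ∀ N, ∑ i ∈ Icc 1 N, c i ≤ B) : Summable c ∧ ∑' n, c n ≤ B := by
  have hr : ∀ N, ∑ i ∈ range N, c i ≤ B := by
    intro N
    rcases Nat.eq_zero_or_pos N with rfl | hN
    · simpa using h 0
    · refine le_trans (le_of_eq ?_) (h (N - 1))
      rw [Finset.range_eq_Ico, Finset.sum_eq_sum_Ico_succ_bot hN, h0, zero_add]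
      congr 1
  exact ⟨summable_of_sum_range_le hc hr, Real.tsum_le_of_sum_range_le hc hr⟩

theorem rpow_antitone_aux {α : ℝ} (hα : 0 < α) (n : ℕ) (hn : 1 ≤ n) :
    ((n + 1 : ℕ) : ℝ) ^ (-(1 + α)) ≤ (n : ℝ) ^ (-(1 + α)) := by
  have : (0 : ℝ) < n := by exact_mod_cast hn
  apply Real.rpow_le_rpow_of_nonpos this (by push_cast; linarith) (by linarith)

theorem sum_vonMangoldt_rpow_le {α : ℝ} (hα : 0 < α) :
    Summable (fun n : ℕ => vonMangoldt n * (n : ℝ) ^ (-(1 + α))) ∧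
    ∑' n : ℕ, vonMangoldt n * (n : ℝ) ^ (-(1 + α)) ≤ cheb * (1 + 1 / α) := by
  apply summable_tsum_le_of_Icc
  · intro n; exact mul_nonneg ArithmeticFunction.vonMangoldt_nonneg (by positivity)
  · simp
  · intro N
    refine (abel_le sum_vonMangoldt_le (rpow_antitone_aux hα) (fun n => by positivity) N).trans ?_
    gcongr
    · exact cheb_pos.le
    · exact sum_rpow_le hα N

theorem summable_rpow {α : ℝ} (hα : 0 < α) :
    Summable (fun n : ℕ => (n : ℝ) ^ (-(1 + α))) ∧
    ∑' n : ℕ, (n : ℝ) ^ (-(1 + α)) ≤ 1 + 1 / α := by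
  apply summable_tsum_le_of_Icc
  · intro n; positivity
  · simp; rw [Real.zero_rpow]; linarith
  · exact sum_rpow_le hα

theorem summable_primes {α : ℝ} (hα : 0 < α) :
    Summable (fun p : Nat.Primes => (p : ℝ) ^ (-(1 + α))) :=
  (summable_rpow hα).1.comp_injective Subtype.val_injective

/-- Primes beyond `x` contribute `O(1)` to `∑ p^{-1-α}` once `α log x ≫ 1`. -/
theorem tsum_primes_gt_le {α x : ℝ} (hα : 0 < α) (hx : 1 < x) :
    ∑' p : Nat.Primes, (if x < (p : ℝ) then (p : ℝ) ^ (-(1 + α)) else 0) ≤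
      cheb * (1 + 1 / α) / Real.log x := by
  have hL : 0 < Real.log x := Real.log_pos hx
  obtain ⟨h1, h2⟩ := sum_vonMangoldt_rpow_le hα
  rw [le_div_iff₀ hL]
  refine le_trans ?_ h2
  rw [← tsum_mul_right]
  have h3 := h1.comp_injective (i := ((↑) : Nat.Primes → ℕ)) Subtype.val_injective
  calc _ ≤ ∑' p : Nat.Primes, vonMangoldt (p : ℕ) * ((p : ℕ) : ℝ) ^ (-(1 + α)) := by
        apply Summable.tsum_le_tsum _ _ h3
        · intro p
          have hp0 : (0 : ℝ) < (p : ℕ) := by exact_mod_cast p.2.pos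
          show _ ≤ vonMangoldt (p : ℕ) * ((p : ℕ) : ℝ) ^ (-(1 + α))
          split_ifs with hp
          · rw [ArithmeticFunction.vonMangoldt_apply_prime p.2, mul_comm]
            gcongr
          · simpa using mul_nonneg ArithmeticFunction.vonMangoldt_nonneg (Real.rpow_nonneg hp0.le _)
        · apply Summable.mul_right
          apply Summable.of_nonneg_of_le _ _ (summable_primes hα)
          · intro p; split_ifs <;> positivity
          · intro p; split_ifs
            · exact le_rfl
            · positivity
    _ ≤ _ := by
        exact h1.tsum_subtype_le (fun n : ℕ => vonMangoldt n * (n : ℝ) ^ (-(1 + α))) {p | Nat.Prime p}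
          (fun n => mul_nonneg ArithmeticFunction.vonMangoldt_nonneg (by positivity))

theorem sum_primes_le_vonMangoldt {x : ℝ} :
    ∑ p ∈ primesUpTo x, Real.log p / p ≤ ∑ i ∈ Icc 1 ⌊x⌋₊, vonMangoldt i / i := by
  unfold primesUpTo
  calc _ = ∑ p ∈ (Finset.Iic ⌊x⌋₊).filter Nat.Prime, vonMangoldt p / p := by
        apply sum_congr rfl
        intro p hp
        rw [ArithmeticFunction.vonMangoldt_apply_prime (mem_filter.1 hp).2]
    _ ≤ _ := by
        apply sum_le_sum_of_subset_of_nonneg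
        · intro p hp
          simp at hp ⊢
          exact ⟨hp.2.pos, hp.1⟩
        · intro i _ _
          exact div_nonneg ArithmeticFunction.vonMangoldt_nonneg (by positivity)

end LogHalasz

/-! ### Dirichlet series, Euler products and Mertens sums -/

namespace LogHalasz

/-- The summand `g(n) n^{-s}` of the Dirichlet series of a completely multiplicative `g`. -/
noncomputable def tw (g : ℕ →*₀ ℝ) (s : ℂ) : ℕ →*₀ ℂ where
  toFun n := (g n : ℂ) * (n : ℂ) ^ (-s)
  map_zero' := by simp
  map_one' := by simp
  map_mul' m n := by
    rw [map_mul, Nat.cast_mul, Complex.natCast_mul_natCast_cpow]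
    push_cast; ring

/-- The Dirichlet series `G(s) = ∑ g(n) n^{-s}`. -/
noncomputable def DS (g : ℕ →*₀ ℝ) (s : ℂ) : ℂ := ∑' n, tw g s n

/-- The point `1 + α + it`. -/
noncomputable def pt (α t : ℝ) : ℂ := ((1 + α : ℝ) : ℂ) + (t : ℂ) * Complex.I

@[simp] theorem pt_re (α t : ℝ) : (pt α t).re = 1 + α := by simp [pt]
@[simp] theorem pt_im (α t : ℝ) : (pt α t).im = t := by simp [pt]

theorem norm_tw_le {g : ℕ →*₀ ℝ} (hg : ∀ n, |g n| ≤ 1) (α t : ℝ) (n : ℕ) :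
    ‖tw g (pt α t) n‖ ≤ (n : ℝ) ^ (-(1 + α)) := by
  rcases Nat.eq_zero_or_pos n with rfl | hn
  · simp only [map_zero, norm_zero]; positivity
  · show ‖(g n : ℂ) * (n : ℂ) ^ (-(pt α t))‖ ≤ _
    rw [norm_mul, Complex.norm_natCast_cpow_of_pos hn, Complex.neg_re, pt_re, Complex.norm_real]
    exact mul_le_of_le_one_left (by positivity) (hg n)

theorem summable_norm_tw {g : ℕ →*₀ ℝ} (hg : ∀ n, |g n| ≤ 1) {α : ℝ} (hα : 0 < α) (t : ℝ) :
    Summable (fun n => ‖tw g (pt α t) n‖) :=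
  Summable.of_nonneg_of_le (fun _ => norm_nonneg _) (norm_tw_le hg α t) (summable_rpow hα).1

theorem re_cpow_pt {n : ℕ} (hn : 0 < n) (α t : ℝ) :
    ((n : ℂ) ^ (-(pt α t))).re = Real.cos (t * Real.log n) * (n : ℝ) ^ (-(1 + α)) := by
  have hn' : (n : ℂ) ≠ 0 := by exact_mod_cast hn.ne'
  have hn0 : (0 : ℝ) < n := by exact_mod_cast hn
  rw [Complex.cpow_def_of_ne_zero hn', ← Complex.natCast_log, Complex.exp_re]
  simp only [Complex.mul_re, Complex.mul_im, Complex.neg_re, Complex.neg_im, pt_re, pt_im,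
    Complex.ofReal_re, Complex.ofReal_im, zero_mul, add_zero, sub_zero]
  rw [Real.rpow_def_of_pos hn0, mul_comm]
  congr 1
  rw [← Real.cos_neg]; congr 1; ring

/-- `∑_p g(p) cos(t log p) p^{-1-α}`. -/
noncomputable def primeSum (g : ℕ → ℝ) (α t : ℝ) : ℝ :=
  ∑' p : Nat.Primes, g p * Real.cos (t * Real.log p) * (p : ℝ) ^ (-(1 + α))

/-- `∑_p p^{-2}`, the cost of replacing `log(1 - z)⁻¹` by `z` in an Euler product. -/
noncomputable def eulerConst : ℝ := ∑' p : Nat.Primes, (p : ℝ) ^ (-2 : ℝ)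

theorem summable_primes_sq : Summable (fun p : Nat.Primes => (p : ℝ) ^ (-2 : ℝ)) := by
  have := summable_primes (α := 1) one_pos
  norm_num at this ⊢
  exact this

theorem eulerConst_nonneg : 0 ≤ eulerConst := tsum_nonneg fun p => by positivity

theorem summable_primeSum {g : ℕ → ℝ} (hg : ∀ n, |g n| ≤ 1) {α : ℝ} (hα : 0 < α) (t : ℝ) :
    Summable fun p : Nat.Primes => g p * Real.cos (t * Real.log p) * (p : ℝ) ^ (-(1 + α)) := by
  apply Summable.of_norm_bounded (summable_primes hα)
  intro p
  rw [norm_mul, norm_mul, Real.norm_of_nonneg (by positivity : 0 ≤ (p : ℝ) ^ (-(1 + α)))]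
  refine mul_le_of_le_one_left (by positivity) ?_
  exact mul_le_one₀ (hg p) (norm_nonneg _) (Real.abs_cos_le_one _)

/-- Logarithm of the Euler product, up to a bounded error. -/
theorem norm_DS_eq {g : ℕ →*₀ ℝ} (hg : ∀ n, |g n| ≤ 1) {α : ℝ} (hα : 0 < α) (t : ℝ) :
    ∃ r : ℝ, |r - primeSum g α t| ≤ eulerConst ∧ ‖DS g (pt α t)‖ = Real.exp r := by
  have hs := summable_norm_tw hg hα t
  have hE := EulerProduct.exp_tsum_primes_log_eq_tsum hs
  set l : Nat.Primes → ℂ := fun p => -Complex.log (1 - tw g (pt α t) p) with hl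
  have hb : ∀ p : Nat.Primes, ‖l p - tw g (pt α t) p‖ ≤ (p : ℝ) ^ (-2 : ℝ) := by
    intro p
    have hp2 : (2 : ℝ) ≤ (p : ℝ) := by exact_mod_cast p.2.two_le
    have h1 := norm_tw_le hg α t p
    have h2 : (p : ℝ) ^ (-(1 + α)) ≤ (p : ℝ) ^ (-1 : ℝ) :=
      Real.rpow_le_rpow_of_exponent_le (by linarith) (by linarith)
    have h3 : (p : ℝ) ^ (-1 : ℝ) ≤ 1 / 2 := by
      rw [Real.rpow_neg_one]
      rw [one_div]; gcongr
    set z := tw g (pt α t) p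
    have hz : ‖-z‖ < 1 := by rw [norm_neg]; linarith
    have h4 := Complex.norm_log_one_add_sub_self_le hz
    have e : l p - z = -(Complex.log (1 + -z) - -z) := by simp only [hl, z]; ring_nf
    rw [e, norm_neg]
    refine h4.trans ?_
    rw [norm_neg]
    have h5 : ‖z‖ ≤ (p : ℝ) ^ (-1 : ℝ) := h1.trans h2
    have h6 : (1 - ‖z‖)⁻¹ ≤ 2 := by
      rw [show (2 : ℝ) = (1 / 2)⁻¹ by norm_num]
      gcongr; linarith
    calc ‖z‖ ^ 2 * (1 - ‖z‖)⁻¹ / 2 ≤ ‖z‖ ^ 2 * 2 / 2 := by gcongr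
      _ = ‖z‖ ^ 2 := by ring
      _ ≤ ((p : ℝ) ^ (-1 : ℝ)) ^ 2 := by gcongr
      _ = _ := by
        rw [← Real.rpow_natCast, ← Real.rpow_mul (by positivity)]; norm_num
  have hsz : Summable fun p : Nat.Primes => tw g (pt α t) p :=
    hs.of_norm.comp_injective Subtype.val_injective
  have hsd : Summable fun p : Nat.Primes => l p - tw g (pt α t) p :=
    Summable.of_norm_bounded summable_primes_sq hb
  have hsl : Summable l := by simpa using hsd.add hsz
  refine ⟨(∑' p, l p).re, ?_, ?_⟩
  · have e : primeSum g α t = (∑' p : Nat.Primes, tw g (pt α t) p).re := by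
      rw [Complex.re_tsum hsz, primeSum]
      congr 1; ext p
      show _ = ((g p : ℂ) * ((p : ℕ) : ℂ) ^ (-(pt α t))).re
      rw [Complex.re_ofReal_mul, re_cpow_pt p.2.pos]; ring
    rw [e, ← Complex.sub_re, ← hsl.tsum_sub hsz]
    refine (Complex.abs_re_le_norm _).trans ?_
    exact tsum_of_norm_bounded summable_primes_sq.hasSum hb
  · rw [DS, ← hE, Complex.norm_exp]

theorem norm_DS_le {g : ℕ →*₀ ℝ} (hg : ∀ n, |g n| ≤ 1) {α : ℝ} (hα : 0 < α) (t : ℝ) :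
    ‖DS g (pt α t)‖ ≤ Real.exp (primeSum g α t + eulerConst) := by
  obtain ⟨r, h1, h2⟩ := norm_DS_eq hg hα t
  rw [h2]; gcongr; linarith [(abs_le.1 h1).2]

theorem le_norm_DS {g : ℕ →*₀ ℝ} (hg : ∀ n, |g n| ≤ 1) {α : ℝ} (hα : 0 < α) (t : ℝ) :
    Real.exp (primeSum g α t - eulerConst) ≤ ‖DS g (pt α t)‖ := by
  obtain ⟨r, h1, h2⟩ := norm_DS_eq hg hα t
  rw [h2]; gcongr; linarith [(abs_le.1 h1).1]

theorem norm_DS_le_one_add {g : ℕ →*₀ ℝ} (hg : ∀ n, |g n| ≤ 1) {α : ℝ} (hα : 0 < α) (t : ℝ) :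
    ‖DS g (pt α t)‖ ≤ 1 + 1 / α :=
  (tsum_of_norm_bounded (summable_rpow hα).1.hasSum (norm_tw_le hg α t)).trans (summable_rpow hα).2

/-- The constant function `1` on positive integers, as a completely multiplicative function. -/
noncomputable def oneHom : ℕ →*₀ ℝ where
  toFun n := if n = 0 then 0 else 1
  map_zero' := by simp
  map_one' := by simp
  map_mul' m n := by by_cases hm : m = 0 <;> by_cases hn : n = 0 <;> simp [hm, hn]

theorem oneHom_apply {n : ℕ} (hn : n ≠ 0) : oneHom n = 1 := if_neg hn

theorem abs_oneHom_le (n : ℕ) : |oneHom n| ≤ 1 := by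
  by_cases hn : n = 0
  · simp [hn]
  · simp [oneHom_apply hn]

theorem tw_oneHom {s : ℂ} (hs : s ≠ 0) (n : ℕ) : tw oneHom s n = (n : ℂ) ^ (-s) := by
  show (oneHom n : ℂ) * _ = _
  by_cases hn : n = 0
  · simp [hn, hs]
  · simp [oneHom_apply hn]

theorem pt_ne_zero {α : ℝ} (hα : 0 < α) (t : ℝ) : pt α t ≠ 0 := by
  intro h
  have := congrArg Complex.re h
  simp at this; linarith

theorem DS_oneHom {α : ℝ} (hα : 0 < α) (t : ℝ) : DS oneHom (pt α t) = riemannZeta (pt α t) := by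
  rw [DS, zeta_eq_tsum_one_div_nat_cpow (by simp; exact hα)]
  congr 1; ext n
  rw [tw_oneHom (pt_ne_zero hα t), Complex.cpow_neg, one_div]

/-- `∑_p cos(t log p) p^{-1-α}`. -/
noncomputable def cosSum (α t : ℝ) : ℝ := primeSum (fun _ => 1) α t

theorem cosSum_eq (α t : ℝ) : cosSum α t = primeSum oneHom α t := by
  unfold cosSum primeSum
  congr 1; ext p
  rw [oneHom_apply p.2.pos.ne']

theorem exp_cosSum_le {α : ℝ} (hα : 0 < α) (t : ℝ) :
    Real.exp (cosSum α t - eulerConst) ≤ ‖riemannZeta (pt α t)‖ := by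
  rw [cosSum_eq, ← DS_oneHom hα]; exact le_norm_DS abs_oneHom_le hα t

theorem norm_zeta_le_exp {α : ℝ} (hα : 0 < α) (t : ℝ) :
    ‖riemannZeta (pt α t)‖ ≤ Real.exp (cosSum α t + eulerConst) := by
  rw [cosSum_eq, ← DS_oneHom hα]; exact norm_DS_le abs_oneHom_le hα t

theorem cosSum_zero_le {α : ℝ} (hα : 0 < α) :
    cosSum α 0 ≤ Real.log (1 + 1 / α) + eulerConst := by
  have h1 := exp_cosSum_le hα 0
  have h2 := norm_DS_le_one_add abs_oneHom_le hα 0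
  rw [DS_oneHom hα] at h2
  have h3 := Real.log_le_log (Real.exp_pos _) (h1.trans h2)
  rw [Real.log_exp] at h3; linarith

theorem cosSum_zero_eq (α : ℝ) : cosSum α 0 = ∑' p : Nat.Primes, (p : ℝ) ^ (-(1 + α)) := by
  simp [cosSum, primeSum]

/-- A sum over primes up to `x` as a sum over all primes. -/
theorem sum_primesUpTo_eq_tsum {x : ℝ} (hx : 0 ≤ x) (h : ℕ → ℝ) :
    HasSum (fun p : Nat.Primes => if (p : ℝ) ≤ x then h p else 0) (∑ p ∈ primesUpTo x, h p) := by
  have h1 : HasSum (fun n : ℕ => if n ∈ primesUpTo x then h n else 0) (∑ p ∈ primesUpTo x, h p) := by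
    rw [← sum_congr rfl fun p (hp : p ∈ primesUpTo x) => if_pos (t := h p) (e := 0) hp]
    exact hasSum_sum_of_ne_finset_zero (fun b hb => if_neg hb)
  have h2 := (Function.Injective.hasSum_iff (f := fun n : ℕ => if n ∈ primesUpTo x then h n else 0)
    (g := ((↑) : Nat.Primes → ℕ)) (a := ∑ p ∈ primesUpTo x, h p) Subtype.val_injective (by
      intro n hn
      apply if_neg
      intro hn'
      apply hn
      exact ⟨⟨n, (mem_filter.1 hn').2⟩, rfl⟩)).2 h1
  refine h2.congr_fun ?_
  intro p
  simp only [Function.comp, primesUpTo, mem_filter, mem_Iic, p.2, and_true, Nat.le_floor_iff hx]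

/-- Truncating at `x` and shifting the abscissa cost `O(1 + α log x + 1/(α log x))`. -/
theorem abs_tsum_sub_sum_le {α x : ℝ} (hα : 0 < α) (hx : 1 < x) (h : ℕ → ℝ) (hh : ∀ n, |h n| ≤ 1) :
    |∑' p : Nat.Primes, h p * (p : ℝ) ^ (-(1 + α)) - ∑ p ∈ primesUpTo x, h p / p| ≤
      cheb * (1 + 1 / α) / Real.log x + α * (cheb * (1 + Real.log x)) := by
  have hx0 : 0 ≤ x := by linarith
  have hs : Summable fun p : Nat.Primes => h p * (p : ℝ) ^ (-(1 + α)) := by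
    apply Summable.of_norm_bounded (summable_primes hα)
    intro p
    rw [norm_mul, Real.norm_of_nonneg (by positivity : 0 ≤ (p : ℝ) ^ (-(1 + α)))]
    exact mul_le_of_le_one_left (by positivity) (hh p)
  have h1 := sum_primesUpTo_eq_tsum hx0 (fun p => h p / p)
  have h2 := sum_primesUpTo_eq_tsum hx0 (fun p => Real.log p / p)
  have hgt : Summable fun p : Nat.Primes => if x < (p : ℝ) then (p : ℝ) ^ (-(1 + α)) else 0 := by
    apply Summable.of_nonneg_of_le _ _ (summable_primes hα)
    · intro p; split_ifs <;> positivity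
    · intro p; split_ifs
      · exact le_rfl
      · positivity
  rw [← h1.tsum_eq, ← hs.tsum_sub h1.summable]
  have hsum := hgt.hasSum.add (h2.mul_left α)
  rw [← Real.norm_eq_abs]
  refine (tsum_of_norm_bounded hsum ?_).trans ?_
  · intro p
    have hp0 : (0 : ℝ) < (p : ℕ) := by exact_mod_cast p.2.pos
    have hp1 : (1 : ℝ) ≤ (p : ℕ) := by exact_mod_cast p.2.one_lt.le
    by_cases hp : (p : ℝ) ≤ x
    · simp only [hp, if_true, not_lt.2 hp, if_false, zero_add]
      have e : h p * (p : ℝ) ^ (-(1 + α)) - h p / p = h p * (((p : ℝ) ^ (-α) - 1) / p) := by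
        rw [neg_add, Real.rpow_add hp0, Real.rpow_neg_one]; field_simp
      rw [e, norm_mul]
      refine (mul_le_of_le_one_left (norm_nonneg _) (hh p)).trans ?_
      rw [norm_div, Real.norm_of_nonneg hp0.le, ← mul_div_assoc]
      gcongr
      rw [Real.norm_eq_abs, abs_sub_comm, abs_of_nonneg]
      · rw [Real.rpow_def_of_pos hp0]
        have := Real.add_one_le_exp (Real.log p * -α)
        linarith
      · have := Real.rpow_le_one_of_one_le_of_nonpos hp1 (show -α ≤ 0 by linarith)
        linarith
    · simp only [hp, if_false, not_le.1 hp, if_true, mul_zero, add_zero, sub_zero]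
      rw [norm_mul, Real.norm_of_nonneg (by positivity : 0 ≤ (p : ℝ) ^ (-(1 + α)))]
      exact mul_le_of_le_one_left (by positivity) (hh p)
  · gcongr
    · exact tsum_primes_gt_le hα hx
    · exact sum_primes_le_vonMangoldt.trans (sum_vonMangoldt_div_le hx.le)

/-- Upper bound in Mertens' second theorem. -/
theorem mertens_upper : ∃ C : ℝ, 0 ≤ C ∧ ∀ x : ℝ, 2 ≤ x →
    ∑ p ∈ primesUpTo x, (1 : ℝ) / p ≤ Real.log (Real.log x) + C := by
  refine ⟨4 * eulerConst + 100 * cheb + 100, by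
    have := eulerConst_nonneg; have := cheb_pos; positivity, ?_⟩
  intro x hx
  have hl2 : 0.69 < Real.log x := lt_of_lt_of_le (by linarith [Real.log_two_gt_d9])
    (Real.log_le_log (by norm_num) hx)
  have hL : 0 < Real.log x := by linarith
  set L := Real.log x with hLdef
  have hα : 0 < 1 / L := by positivity
  have h1 := abs_tsum_sub_sum_le hα (by linarith : 1 < x) (fun _ => 1) (by simp)
  simp only [one_mul] at h1
  rw [← cosSum_zero_eq, ← hLdef] at h1
  have h2 := cosSum_zero_le hα
  have h3 := (abs_le.1 h1).1
  have hc := cheb_pos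
  have hE := eulerConst_nonneg
  have e1 : cheb * (1 + 1 / (1 / L)) / L + 1 / L * (cheb * (1 + L)) = 2 * cheb * (1 + 1 / L) := by
    field_simp; ring
  have h4 : 1 / L ≤ 2 := by rw [div_le_iff₀ hL]; linarith
  have e2 : Real.log (1 + 1 / (1 / L)) = Real.log L + Real.log (1 + 1 / L) := by
    rw [← Real.log_mul hL.ne' (by positivity)]; congr 1; field_simp; ring
  have h5 : Real.log (1 + 1 / L) ≤ 2 := by
    have := Real.log_le_sub_one_of_pos (show 0 < 1 + 1 / L by positivity)
    linarith
  rw [e1] at h3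
  nlinarith

end LogHalasz

/-! ### Euler–Maclaurin approximation to `ζ` near the line `Re s = 1` -/

namespace LogHalasz

theorem hasDerivAt_cpow_neg {s : ℂ} (hs : s ≠ 0) {u : ℝ} (hu : u ≠ 0) :
    HasDerivAt (fun y : ℝ => (y : ℂ) ^ (-s)) (-s * (u : ℂ) ^ (-s - 1)) u := by
  have h := hasDerivAt_ofReal_cpow_const' (x := u) (r := -s - 1) hu
    (by intro h; apply hs; linear_combination -h)
  have h2 := h.const_mul (-s)
  refine (h2.congr_of_eventuallyEq (Filter.Eventually.of_forall fun y => ?_))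
  simp only [sub_add_cancel]
  field_simp

theorem norm_cpow_diff_le {s : ℂ} (hs : s ≠ 0) (hre : 1 ≤ s.re) {n u : ℝ} (hn : 1 ≤ n) (hu1 : n ≤ u)
    (hu2 : u ≤ n + 1) : ‖(u : ℂ) ^ (-s) - ((n + 1 : ℝ) : ℂ) ^ (-s)‖ ≤ ‖s‖ * n ^ (-2 : ℝ) := by
  have h := (convex_Icc n (n + 1)).norm_image_sub_le_of_norm_hasDerivWithin_le (𝕜 := ℝ)
    (f := fun y : ℝ => (y : ℂ) ^ (-s)) (f' := fun u : ℝ => -s * (u : ℂ) ^ (-s - 1))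
    (C := ‖s‖ * n ^ (-2 : ℝ)) (x := n + 1) (y := u)
    (fun x hx => (hasDerivAt_cpow_neg hs (by linarith [hx.1])).hasDerivWithinAt) ?_
    ⟨by linarith, le_rfl⟩ ⟨hu1, hu2⟩
  · refine h.trans ?_
    have : ‖u - (n + 1)‖ ≤ 1 := by rw [Real.norm_eq_abs, abs_le]; constructor <;> linarith
    exact mul_le_of_le_one_right (by positivity) this
  · intro x hx
    have hx0 : 0 < x := by linarith [hx.1]
    rw [norm_mul, norm_neg, Complex.norm_cpow_eq_rpow_re_of_pos hx0]
    gcongr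
    simp only [Complex.sub_re, Complex.neg_re, Complex.one_re]
    calc x ^ (-s.re - 1) ≤ x ^ (-2 : ℝ) :=
          Real.rpow_le_rpow_of_exponent_le (by linarith [hx.1]) (by linarith)
      _ ≤ n ^ (-2 : ℝ) := Real.rpow_le_rpow_of_nonpos (by linarith) hx.1 (by norm_num)

/-- One step of Euler–Maclaurin summation for `∑ n^{-s}`. -/
theorem norm_step_le {s : ℂ} (hs : s ≠ 0) (hs1 : s ≠ 1) (hre : 1 ≤ s.re) {n : ℝ} (hn : 1 ≤ n) :
    ‖((n + 1 : ℝ) : ℂ) ^ (-s) + (((n + 1 : ℝ) : ℂ) ^ (1 - s) - (n : ℂ) ^ (1 - s)) / (s - 1)‖ ≤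
      ‖s‖ * n ^ (-2 : ℝ) := by
  have hs1' : s - 1 ≠ 0 := sub_ne_zero.2 hs1
  have hd : ∀ x ∈ Set.Icc n (n + 1), HasDerivWithinAt
      (fun y : ℝ => (y : ℂ) ^ (-s + 1) / (-s + 1) - (y : ℂ) * ((n + 1 : ℝ) : ℂ) ^ (-s))
      ((x : ℂ) ^ (-s) - ((n + 1 : ℝ) : ℂ) ^ (-s)) (Set.Icc n (n + 1)) x := by
    intro x hx
    have hx0 : x ≠ 0 := by linarith [hx.1]
    have h1 := hasDerivAt_ofReal_cpow_const' (x := x) (r := -s) hx0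
      (by intro h; apply hs1; linear_combination -h)
    have h2 : HasDerivAt (fun y : ℝ => (y : ℂ) * ((n + 1 : ℝ) : ℂ) ^ (-s))
        (1 * ((n + 1 : ℝ) : ℂ) ^ (-s)) x :=
      (Complex.ofRealCLM.hasDerivAt (x := x)).mul_const (((n + 1 : ℝ) : ℂ) ^ (-s))
    rw [one_mul] at h2
    exact (h1.sub h2).hasDerivWithinAt
  have h := (convex_Icc n (n + 1)).norm_image_sub_le_of_norm_hasDerivWithin_le (𝕜 := ℝ)
    (C := ‖s‖ * n ^ (-2 : ℝ)) (x := n) (y := n + 1) hd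
    (fun x hx => norm_cpow_diff_le hs hre hn hx.1 hx.2)
    ⟨le_rfl, by linarith⟩ ⟨by linarith, le_rfl⟩
  have e1 : ‖n + 1 - n‖ = 1 := by simp
  rw [e1, mul_one] at h
  refine le_trans (le_of_eq ?_) h
  rw [← norm_neg]
  congr 1
  have e2 : -s + 1 = -(s - 1) := by ring
  have e3 : 1 - s = -(s - 1) := by ring
  rw [e2, e3, div_neg, div_neg, sub_div]
  push_cast
  ring

/-- Partial sums of `ζ(s)` corrected by the Euler–Maclaurin main term. -/
noncomputable def zApprox (s : ℂ) (N : ℕ) : ℂ :=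
  ∑ n ∈ Icc 1 N, (n : ℂ) ^ (-s) + (N : ℂ) ^ (1 - s) / (s - 1)

/-- The Euler–Maclaurin errors `O(‖s‖/n²)` telescope. -/
theorem zApprox_diff {s : ℂ} (hs : s ≠ 0) (hs1 : s ≠ 1) (hre : 1 ≤ s.re) {N : ℕ} (hN : 1 ≤ N)
    (M : ℕ) (hM : N ≤ M) : ‖zApprox s M - zApprox s N‖ ≤ 2 * ‖s‖ * (1 / N - 1 / M) := by
  induction M, hM using Nat.le_induction with
  | base => simp
  | succ n hn ih =>
    have hn1 : (1 : ℝ) ≤ n := by exact_mod_cast hN.trans hn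
    have hn0 : (0 : ℝ) < n := by linarith
    have h1 := norm_step_le hs hs1 hre hn1
    have e : zApprox s (n + 1) - zApprox s N = (zApprox s n - zApprox s N) +
        (((n + 1 : ℝ) : ℂ) ^ (-s) +
          (((n + 1 : ℝ) : ℂ) ^ (1 - s) - ((n : ℝ) : ℂ) ^ (1 - s)) / (s - 1)) := by
      unfold zApprox
      rw [sum_Icc_succ_top (by omega)]
      push_cast
      ring
    rw [e]
    refine (norm_add_le _ _).trans ((add_le_add ih h1).trans ?_)
    have : (n : ℝ) ^ (-2 : ℝ) ≤ 2 * (1 / n - 1 / ((n + 1 : ℕ) : ℝ)) := by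
      rw [Real.rpow_neg hn0.le, show (2 : ℝ) = ((2 : ℕ) : ℝ) by norm_num, Real.rpow_natCast]
      push_cast
      rw [div_sub_div _ _ hn0.ne' (by linarith), inv_eq_one_div, ← mul_div_assoc,
        div_le_div_iff₀ (by positivity) (by positivity)]
      nlinarith
    nlinarith [norm_nonneg s]

theorem pt_ne_one {α : ℝ} (hα : 0 < α) (t : ℝ) : pt α t ≠ 1 := by
  intro h
  have := congrArg Complex.re h
  simp at this; linarith

theorem norm_zeta_sub_zApprox {α : ℝ} (hα : 0 < α) (t : ℝ) {N : ℕ} (hN : 1 ≤ N) :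
    ‖riemannZeta (pt α t) - zApprox (pt α t) N‖ ≤ 2 * ‖pt α t‖ / N := by
  have hs := pt_ne_zero hα t
  have hs1 := pt_ne_one hα t
  have hlim : Filter.Tendsto (fun M => zApprox (pt α t) M) Filter.atTop
      (nhds (riemannZeta (pt α t))) := by
    have h1 : Filter.Tendsto (fun M : ℕ => ∑ n ∈ Icc 1 M, (n : ℂ) ^ (-(pt α t))) Filter.atTop
        (nhds (riemannZeta (pt α t))) := by
      have h := (summable_norm_tw abs_oneHom_le hα t).of_norm.hasSum.tendsto_sum_nat
      have h' := h.comp (Filter.tendsto_add_atTop_nat 1)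
      change Filter.Tendsto _ _ (nhds (DS oneHom (pt α t))) at h'
      rw [DS_oneHom hα] at h'
      refine h'.congr fun M => ?_
      simp only [Function.comp]
      rw [Finset.range_eq_Ico, Finset.sum_eq_sum_Ico_succ_bot (by omega), map_zero, zero_add]
      exact sum_congr rfl fun n _ => tw_oneHom hs n
    have h2 : Filter.Tendsto (fun M : ℕ => (M : ℂ) ^ (1 - pt α t) / (pt α t - 1)) Filter.atTop
        (nhds 0) := by
      rw [tendsto_zero_iff_norm_tendsto_zero]
      have h3 : Filter.Tendsto (fun M : ℕ => (M : ℝ) ^ (-α) / ‖pt α t - 1‖) Filter.atTop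
          (nhds 0) := by
        have := ((tendsto_rpow_neg_atTop hα).comp tendsto_natCast_atTop_atTop).div_const
          ‖pt α t - 1‖
        simpa using this
      refine h3.congr' ?_
      filter_upwards [Filter.eventually_gt_atTop 0] with M hM
      rw [norm_div, Complex.norm_natCast_cpow_of_pos hM]
      simp
    simpa [zApprox] using h1.add h2
  refine le_of_tendsto (hlim.sub_const _).norm ?_
  filter_upwards [Filter.eventually_ge_atTop N] with M hM
  refine (zApprox_diff hs hs1 (by simp [hα.le]) hN M hM).trans ?_
  have hM0 : (0 : ℝ) ≤ 1 / M := by positivity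
  rw [mul_sub, mul_one_div]
  have := mul_nonneg (mul_nonneg zero_le_two (norm_nonneg (pt α t))) hM0
  linarith

theorem norm_pt_le {α τ : ℝ} (hα : 0 < α) (hα1 : α ≤ 1) (hτ : 0 ≤ τ) : ‖pt α τ‖ ≤ 2 * (1 + τ) := by
  unfold pt
  refine (norm_add_le _ _).trans ?_
  rw [norm_mul, Complex.norm_I, Complex.norm_real, Complex.norm_real, Real.norm_of_nonneg hτ,
    Real.norm_of_nonneg (by linarith)]
  linarith

theorem norm_pt_sub_one_ge {α τ : ℝ} : |τ| ≤ ‖pt α τ - 1‖ := by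
  have := Complex.abs_im_le_norm (pt α τ - 1)
  simpa using this

theorem norm_sum_cpow_le {α : ℝ} (hα : 0 < α) (τ : ℝ) (N : ℕ) :
    ‖∑ n ∈ Icc 1 N, (n : ℂ) ^ (-(pt α τ))‖ ≤ 1 + Real.log N := by
  refine le_trans (norm_sum_le _ _) (le_trans (sum_le_sum fun n hn => ?_) (harmonic_sum_le N))
  have hn1 := (mem_Icc.1 hn).1
  rw [Complex.norm_natCast_cpow_of_pos hn1, Complex.neg_re, pt_re, one_div, ← Real.rpow_neg_one]
  exact Real.rpow_le_rpow_of_exponent_le (by exact_mod_cast hn1) (by linarith)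

/-- Moving the abscissa from `1 + β` to `1 + α` changes `n^{c-s}` by at most `(β - α) n^{c-1} log
n`. -/
theorem norm_cpow_shift {α β τ : ℝ} (hα : 0 ≤ α) (hαβ : α ≤ β) {n : ℕ} (hn : 1 ≤ n) (c : ℝ) :
    ‖(n : ℂ) ^ ((c : ℂ) - pt α τ) - (n : ℂ) ^ ((c : ℂ) - pt β τ)‖ ≤
      (β - α) * Real.log n * (n : ℝ) ^ (c - 1) := by
  have hn1 : (1 : ℝ) ≤ n := by exact_mod_cast hn
  have hn0 : (0 : ℝ) < n := by linarith
  have hnc : (n : ℂ) ≠ 0 := by exact_mod_cast hn0.ne'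
  have e : (c : ℂ) - pt β τ = ((c : ℂ) - pt α τ) + ((α - β : ℝ) : ℂ) := by
    unfold pt; push_cast; ring
  rw [e, Complex.cpow_add _ _ hnc, ← mul_one_sub, norm_mul, Complex.norm_natCast_cpow_of_pos hn,
    mul_comm]
  have e2 : (n : ℂ) ^ (((α - β : ℝ)) : ℂ) = (((n : ℝ) ^ (α - β) : ℝ) : ℂ) := by
    rw [Complex.ofReal_cpow hn0.le]; simp
  rw [e2, ← Complex.ofReal_one, ← Complex.ofReal_sub, Complex.norm_real, Real.norm_of_nonneg]
  · gcongr
    · rw [Real.rpow_def_of_pos hn0]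
      have := Real.add_one_le_exp (Real.log n * (α - β))
      nlinarith
    · simp; linarith
  · have := Real.rpow_le_one_of_one_le_of_nonpos hn1 (show α - β ≤ 0 by linarith)
    linarith

/-- Upper bound for `ζ` from truncating its Dirichlet series at an arbitrary `N`. -/
theorem norm_zeta_upper_N {α τ : ℝ} (hα : 0 < α) (hα1 : α ≤ 1) (hτ : 1 ≤ τ) {N : ℕ} (hN : 1 ≤ N) :
    ‖riemannZeta (pt α τ)‖ ≤ 2 + Real.log N + 4 * (1 + τ) / N := by
  have h1 := norm_zeta_sub_zApprox hα τ hN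
  have h2 := norm_sum_cpow_le hα τ N
  have h3 : ‖(N : ℂ) ^ (1 - pt α τ) / (pt α τ - 1)‖ ≤ 1 := by
    rw [norm_div, Complex.norm_natCast_cpow_of_pos hN]
    refine div_le_one_of_le₀ ?_ (norm_nonneg _)
    calc (N : ℝ) ^ (1 - pt α τ).re ≤ 1 :=
          Real.rpow_le_one_of_one_le_of_nonpos (by exact_mod_cast hN) (by simp; linarith)
      _ ≤ |τ| := by rw [abs_of_nonneg (by linarith)]; exact hτ
      _ ≤ _ := norm_pt_sub_one_ge
  have h4 := norm_add_le (riemannZeta (pt α τ) - zApprox (pt α τ) N) (zApprox (pt α τ) N)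
  rw [sub_add_cancel] at h4
  have h5 : ‖zApprox (pt α τ) N‖ ≤ _ := norm_add_le _ _
  have h6 : 2 * ‖pt α τ‖ / N ≤ 4 * (1 + τ) / N := by
    refine div_le_div_of_nonneg_right ?_ (Nat.cast_nonneg N)
    linarith [norm_pt_le hα hα1 (by linarith : 0 ≤ τ)]
  linarith

/-- Variation of `ζ` in the horizontal direction, from truncating its Dirichlet series at `N`. -/
theorem norm_zeta_lip_N {α β τ : ℝ} (hα : 0 < α) (hαβ : α ≤ β) (hβ : β ≤ 1) (hτ : 1 ≤ τ) {N : ℕ}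
    (hN : 1 ≤ N) : ‖riemannZeta (pt α τ) - riemannZeta (pt β τ)‖ ≤
      β * (1 + Real.log N) ^ 2 + 8 * (1 + τ) / N := by
  have hβ0 : 0 < β := by linarith
  have hN1 : (1 : ℝ) ≤ N := by exact_mod_cast hN
  have hlog : 0 ≤ Real.log N := Real.log_nonneg hN1
  have h1 := norm_zeta_sub_zApprox hα τ hN
  have h2 := norm_zeta_sub_zApprox hβ0 τ hN
  have h3 : ‖∑ n ∈ Icc 1 N, (n : ℂ) ^ (-(pt α τ)) - ∑ n ∈ Icc 1 N, (n : ℂ) ^ (-(pt β τ))‖ ≤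
      β * Real.log N * (1 + Real.log N) := by
    rw [← sum_sub_distrib]
    refine (norm_sum_le _ _).trans ?_
    calc ∑ n ∈ Icc 1 N, ‖(n : ℂ) ^ (-(pt α τ)) - (n : ℂ) ^ (-(pt β τ))‖
        ≤ ∑ n ∈ Icc 1 N, β * Real.log N * (1 / (n : ℝ)) := by
          refine sum_le_sum fun n hn => ?_
          obtain ⟨hn1, hn2⟩ := mem_Icc.1 hn
          have := norm_cpow_shift (τ := τ) hα.le hαβ hn1 0
          simp only [Complex.ofReal_zero, zero_sub, Real.rpow_neg_one] at this
          refine this.trans ?_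
          rw [one_div]
          have hn1' : (1 : ℝ) ≤ n := by exact_mod_cast hn1
          have hl : 0 ≤ Real.log n := Real.log_nonneg hn1'
          gcongr
          linarith
      _ ≤ _ := by
          rw [← mul_sum]
          gcongr
          exact harmonic_sum_le N
  have hd1 : 1 ≤ ‖pt α τ - 1‖ := by
    refine le_trans ?_ norm_pt_sub_one_ge; rw [abs_of_nonneg] <;> linarith
  have hd2 : 1 ≤ ‖pt β τ - 1‖ := by
    refine le_trans ?_ norm_pt_sub_one_ge; rw [abs_of_nonneg] <;> linarith
  have hs1 := sub_ne_zero.2 (pt_ne_one hα τ)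
  have hs2 := sub_ne_zero.2 (pt_ne_one hβ0 τ)
  have h4 : ‖(N : ℂ) ^ (1 - pt α τ) / (pt α τ - 1) - (N : ℂ) ^ (1 - pt β τ) / (pt β τ - 1)‖ ≤
      β * Real.log N + β := by
    have e : (N : ℂ) ^ (1 - pt α τ) / (pt α τ - 1) - (N : ℂ) ^ (1 - pt β τ) / (pt β τ - 1) =
        ((N : ℂ) ^ (1 - pt α τ) - (N : ℂ) ^ (1 - pt β τ)) / (pt α τ - 1) +
        (N : ℂ) ^ (1 - pt β τ) * ((pt β τ - pt α τ) / ((pt α τ - 1) * (pt β τ - 1))) := by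
      field_simp; ring
    rw [e]
    refine (norm_add_le _ _).trans (add_le_add ?_ ?_)
    · rw [norm_div]
      refine (div_le_self (norm_nonneg _) hd1).trans ?_
      have := norm_cpow_shift (τ := τ) hα.le hαβ hN 1
      simp only [Complex.ofReal_one, sub_self, Real.rpow_zero, mul_one] at this
      refine this.trans ?_
      gcongr; linarith
    · rw [norm_mul, norm_div, norm_mul, Complex.norm_natCast_cpow_of_pos hN]
      have a1 : (N : ℝ) ^ (1 - pt β τ).re ≤ 1 :=
        Real.rpow_le_one_of_one_le_of_nonpos hN1 (by simp; linarith)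
      have a2 : ‖pt β τ - pt α τ‖ ≤ β := by
        have : pt β τ - pt α τ = ((β - α : ℝ) : ℂ) := by unfold pt; push_cast; ring
        rw [this, Complex.norm_real, Real.norm_of_nonneg (by linarith)]; linarith
      calc _ ≤ 1 * (β / 1) := by
            gcongr
            nlinarith
        _ = β := by ring
  have e5 : riemannZeta (pt α τ) - riemannZeta (pt β τ) =
      (riemannZeta (pt α τ) - zApprox (pt α τ) N) - (riemannZeta (pt β τ) - zApprox (pt β τ) N) +
      ((∑ n ∈ Icc 1 N, (n : ℂ) ^ (-(pt α τ)) - ∑ n ∈ Icc 1 N, (n : ℂ) ^ (-(pt β τ))) +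
      ((N : ℂ) ^ (1 - pt α τ) / (pt α τ - 1) - (N : ℂ) ^ (1 - pt β τ) / (pt β τ - 1))) := by
    unfold zApprox; ring
  have h6 : 2 * ‖pt α τ‖ / N ≤ 4 * (1 + τ) / N := by
    refine div_le_div_of_nonneg_right ?_ (Nat.cast_nonneg N)
    linarith [norm_pt_le hα (by linarith) (by linarith : 0 ≤ τ)]
  have h7 : 2 * ‖pt β τ‖ / N ≤ 4 * (1 + τ) / N := by
    refine div_le_div_of_nonneg_right ?_ (Nat.cast_nonneg N)
    linarith [norm_pt_le hβ0 hβ (by linarith : 0 ≤ τ)]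
  rw [e5]
  refine (norm_add_le _ _).trans ?_
  have h8 := norm_sub_le (riemannZeta (pt α τ) - zApprox (pt α τ) N)
    (riemannZeta (pt β τ) - zApprox (pt β τ) N)
  have h9 := norm_add_le
    (∑ n ∈ Icc 1 N, (n : ℂ) ^ (-(pt α τ)) - ∑ n ∈ Icc 1 N, (n : ℂ) ^ (-(pt β τ)))
    ((N : ℂ) ^ (1 - pt α τ) / (pt α τ - 1) - (N : ℂ) ^ (1 - pt β τ) / (pt β τ - 1))
  have e10 : 8 * (1 + τ) / N = 4 * (1 + τ) / N + 4 * (1 + τ) / N := by ring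
  rw [e10]
  nlinarith [mul_nonneg hβ0.le hlog]

end LogHalasz

/-! ### Bounds for `log |ζ(1 + α + iτ)|` -/

namespace LogHalasz

/-- A truncation point of size about `U⁶`, whose logarithm is absorbed by `U^{1/16}`. -/
theorem ceil_pow_aux {U : ℝ} (hU : 2 ≤ U) : ∃ N : ℕ, 1 ≤ N ∧ U ^ 6 ≤ N ∧
    1 + Real.log N ≤ 113 * U ^ (1 / 16 : ℝ) := by
  refine ⟨⌈U ^ 6⌉₊, ?_, Nat.le_ceil _, ?_⟩
  · exact Nat.one_le_iff_ne_zero.2 (Nat.ceil_pos.2 (by positivity)).ne'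
  have h0 : 0 < U := by linarith
  have h1 : (⌈U ^ 6⌉₊ : ℝ) ≤ U ^ 7 := by
    have := (Nat.ceil_lt_add_one (by positivity : 0 ≤ U ^ 6)).le
    have h6 : (1 : ℝ) ≤ U ^ 6 := one_le_pow₀ (by linarith)
    nlinarith
  have hp : (0 : ℝ) < ⌈U ^ 6⌉₊ := by exact_mod_cast Nat.ceil_pos.2 (by positivity)
  have h2 := Real.log_le_log hp h1
  rw [Real.log_pow] at h2
  have h3 := Real.log_le_rpow_div h0.le (by norm_num : (0 : ℝ) < 1 / 16)
  have h4 : 1 ≤ U ^ (1 / 16 : ℝ) := Real.one_le_rpow (by linarith) (by norm_num)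
  push_cast at h2
  have e : U ^ (1 / 16 : ℝ) / (1 / 16) = 16 * U ^ (1 / 16 : ℝ) := by ring
  rw [e] at h3
  linarith

theorem sq_rpow_aux {U : ℝ} (hU : 0 ≤ U) : (U ^ (1 / 16 : ℝ)) ^ 2 = U ^ (1 / 8 : ℝ) := by
  rw [← Real.rpow_natCast, ← Real.rpow_mul hU]; norm_num

/-- A weak but uniform upper bound for `ζ` to the right of the line `Re s = 1`. -/
theorem zeta_upper {α τ : ℝ} (hα : 0 < α) (hα1 : α ≤ 1) (hτ : 1 ≤ τ) :
    ‖riemannZeta (pt α τ)‖ ≤ 20000 * (1 + τ) ^ (1 / 8 : ℝ) := by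
  obtain ⟨N, hN, h1, h2⟩ := ceil_pow_aux (U := 1 + τ) (by linarith)
  set U := 1 + τ with hU
  have h3 := norm_zeta_upper_N hα hα1 hτ hN
  have hU1 : 1 ≤ U := by linarith
  have h4 : 4 * U / N ≤ 4 := by
    rw [div_le_iff₀ (by linarith [one_le_pow₀ hU1 (n := 6)])]
    have : U ≤ U ^ 6 := le_self_pow₀ hU1 (by norm_num)
    linarith
  have h5 : 1 ≤ U ^ (1 / 16 : ℝ) := Real.one_le_rpow hU1 (by norm_num)
  rw [← sq_rpow_aux (by linarith : 0 ≤ U)]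
  nlinarith

/-- `ζ(1 + α + iτ)` is nearly Lipschitz in `α`, with a small power of `1 + τ` as constant. -/
theorem zeta_lip {α β τ : ℝ} (hα : 0 < α) (hαβ : α ≤ β) (hβ : β ≤ 1) (hτ : 1 ≤ τ) :
    ‖riemannZeta (pt α τ) - riemannZeta (pt β τ)‖ ≤
      20000 * (β * (1 + τ) ^ (1 / 8 : ℝ) + 1 / (1 + τ) ^ 5) := by
  obtain ⟨N, hN, h1, h2⟩ := ceil_pow_aux (U := 1 + τ) (by linarith)
  set U := 1 + τ with hU
  have h3 := norm_zeta_lip_N hα hαβ hβ hτ hN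
  have hU1 : 1 ≤ U := by linarith
  have hU0 : 0 < U := by linarith
  have h4 : 8 * U / N ≤ 8 * (1 / U ^ 5) := by
    rw [div_le_iff₀ (by linarith [one_le_pow₀ hU1 (n := 6)])]
    calc 8 * U = 8 * (1 / U ^ 5) * U ^ 6 := by field_simp
      _ ≤ _ := by gcongr
  have h5 : (1 + Real.log N) ^ 2 ≤ (113 * U ^ (1 / 16 : ℝ)) ^ 2 := by
    have : 0 ≤ Real.log N := Real.log_natCast_nonneg N
    gcongr
  rw [mul_pow, sq_rpow_aux hU0.le] at h5
  have h6 : 0 < 1 / U ^ 5 := by positivity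
  have h7 : 0 ≤ U ^ (1 / 8 : ℝ) := by positivity
  have hβ0 : 0 ≤ β := by linarith
  have h8 := mul_le_mul_of_nonneg_left h5 hβ0
  nlinarith [mul_nonneg hβ0 h7]

/-- The `3 + 4cos θ + cos 2θ ≥ 0` inequality, summed over primes. -/
theorem three_four_one {α : ℝ} (hα : 0 < α) (τ : ℝ) :
    0 ≤ 3 * cosSum α 0 + 4 * cosSum α τ + cosSum α (2 * τ) := by
  have hg : ∀ n : ℕ, |(fun _ : ℕ => (1 : ℝ)) n| ≤ 1 := by simp
  have h0 := (summable_primeSum hg hα 0).hasSum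
  have h1 := (summable_primeSum hg hα τ).hasSum
  have h2 := (summable_primeSum hg hα (2 * τ)).hasSum
  have h := ((h0.mul_left 3).add (h1.mul_left 4)).add h2
  refine h.nonneg fun p => ?_
  have e : Real.cos (2 * τ * Real.log p) = 2 * Real.cos (τ * Real.log p) ^ 2 - 1 := by
    rw [mul_assoc, Real.cos_two_mul]
  simp only [one_mul, zero_mul, Real.cos_zero, e]
  have hp : 0 ≤ (p : ℝ) ^ (-(1 + α)) := by positivity
  nlinarith [mul_nonneg hp (sq_nonneg (Real.cos (τ * Real.log p) + 1))]

theorem cosSum_le_log {α : ℝ} (hα : 0 < α) (t : ℝ) {B : ℝ} (hB : ‖riemannZeta (pt α t)‖ ≤ B) :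
    cosSum α t ≤ Real.log B + eulerConst := by
  have h1 := (exp_cosSum_le hα t).trans hB
  have h3 := Real.log_le_log (Real.exp_pos _) h1
  rw [Real.log_exp] at h3; linarith

theorem log_le_cosSum {α : ℝ} (hα : 0 < α) (t : ℝ) {B : ℝ} (hB0 : 0 < B)
    (hB : B ≤ ‖riemannZeta (pt α t)‖) : Real.log B - eulerConst ≤ cosSum α t := by
  have h1 := hB.trans (norm_zeta_le_exp hα t)
  have h3 := Real.log_le_log hB0 h1
  rw [Real.log_exp] at h3; linarith

/-- The lower bound for `ζ` given directly by the `3-4-1` inequality; it degenerates like `α^{3/4}`.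
-/
theorem zeta_lower_341 : ∃ c : ℝ, 0 < c ∧ ∀ α τ : ℝ, 0 < α → α ≤ 1 → 1 ≤ τ →
    c * α ^ (3 / 4 : ℝ) * (1 + τ) ^ (-(1 / 32) : ℝ) ≤ ‖riemannZeta (pt α τ)‖ := by
  refine ⟨Real.exp (-(3 / 4 * Real.log 2 + 2 * eulerConst + Real.log 40000 / 4)), Real.exp_pos _, ?_⟩
  intro α τ hα hα1 hτ
  refine le_trans ?_ (exp_cosSum_le hα τ)
  have h := three_four_one hα τ
  have h1 := cosSum_zero_le hα
  have h2 : ‖riemannZeta (pt α (2 * τ))‖ ≤ 40000 * (1 + τ) ^ (1 / 8 : ℝ) := by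
    refine (zeta_upper hα hα1 (by linarith : 1 ≤ 2 * τ)).trans ?_
    have : (1 + 2 * τ) ^ (1 / 8 : ℝ) ≤ (2 * (1 + τ)) ^ (1 / 8 : ℝ) := by gcongr; linarith
    rw [Real.mul_rpow (by norm_num) (by linarith)] at this
    have h3 : (2 : ℝ) ^ (1 / 8 : ℝ) ≤ 2 := by
      conv_rhs => rw [← Real.rpow_one 2]
      exact Real.rpow_le_rpow_of_exponent_le (by norm_num) (by norm_num)
    have h4 : 0 ≤ (1 + τ) ^ (1 / 8 : ℝ) := by positivity
    nlinarith
  have h3 := cosSum_le_log hα _ h2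
  rw [Real.log_mul (by norm_num) (by positivity), Real.log_rpow (by linarith)] at h3
  have h4 : Real.log (1 + 1 / α) ≤ Real.log 2 - Real.log α := by
    rw [← Real.log_div (by norm_num) hα.ne']
    apply Real.log_le_log (by positivity)
    rw [le_div_iff₀ hα, add_mul, one_div_mul_cancel hα.ne']; linarith
  rw [Real.rpow_def_of_pos hα, Real.rpow_def_of_pos (by linarith : 0 < 1 + τ), ← Real.exp_add,
    ← Real.exp_add]
  apply Real.exp_le_exp.2
  linarith

/-- `(s - 1) ζ(s)`, continued to `s = 1`. -/
noncomputable def zetaReg : ℂ → ℂ := Function.update (fun s => (s - 1) * riemannZeta s) 1 1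

theorem continuous_zetaReg : Continuous zetaReg := by
  rw [continuous_iff_continuousAt]
  intro s
  by_cases hs : s = 1
  · subst hs
    exact continuousAt_update_same.2 riemannZeta_residue_one
  · rw [zetaReg, continuousAt_update_of_ne hs]
    exact (continuousAt_id.sub continuousAt_const).mul
      (differentiableAt_riemannZeta hs).continuousAt

theorem zetaReg_ne_zero {s : ℂ} (hs : 1 ≤ s.re) : zetaReg s ≠ 0 := by
  by_cases h : s = 1
  · simp [zetaReg, h]
  · rw [zetaReg, Function.update_of_ne h]
    exact mul_ne_zero (sub_ne_zero.2 h) (riemannZeta_ne_zero_of_one_le_re hs)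

/-- In a bounded range, `(s - 1) ζ(s)` is bounded above and below, since it is continuous and `ζ`
does not vanish on `Re s ≥ 1`. -/
theorem zeta_compact (T : ℝ) (hT : 0 ≤ T) : ∃ c C : ℝ, 0 < c ∧ 0 < C ∧ ∀ α τ : ℝ, 0 < α → α ≤ 1 →
    0 ≤ τ → τ ≤ T → c ≤ ‖pt α τ - 1‖ * ‖riemannZeta (pt α τ)‖ ∧
      ‖pt α τ - 1‖ * ‖riemannZeta (pt α τ)‖ ≤ C := by
  have hK : IsCompact (Set.Icc (0 : ℝ) 1 ×ˢ Set.Icc (0 : ℝ) T) := isCompact_Icc.prod isCompact_Icc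
  have hne : (Set.Icc (0 : ℝ) 1 ×ˢ Set.Icc (0 : ℝ) T).Nonempty :=
    ⟨(0, 0), ⟨⟨le_rfl, zero_le_one⟩, ⟨le_rfl, hT⟩⟩⟩
  have hcont : Continuous fun q : ℝ × ℝ => ‖zetaReg (pt q.1 q.2)‖ := by
    apply Continuous.norm
    apply continuous_zetaReg.comp
    unfold pt; fun_prop
  obtain ⟨q, hq, hmin⟩ := hK.exists_isMinOn hne hcont.continuousOn
  obtain ⟨q', hq', hmax⟩ := hK.exists_isMaxOn hne hcont.continuousOn
  have hpos : ∀ q : ℝ × ℝ, q ∈ (Set.Icc (0 : ℝ) 1 ×ˢ Set.Icc (0 : ℝ) T) →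
      0 < ‖zetaReg (pt q.1 q.2)‖ := fun q hq =>
    norm_pos_iff.2 (zetaReg_ne_zero (by rw [pt_re]; linarith [hq.1.1]))
  refine ⟨_, _, hpos q hq, hpos q' hq', ?_⟩
  intro α τ h1 h2 h3 h4
  have hm : (α, τ) ∈ (Set.Icc (0 : ℝ) 1 ×ˢ Set.Icc (0 : ℝ) T) := ⟨⟨h1.le, h2⟩, ⟨h3, h4⟩⟩
  have e : ‖zetaReg (pt α τ)‖ = ‖pt α τ - 1‖ * ‖riemannZeta (pt α τ)‖ := by
    rw [zetaReg, Function.update_of_ne (pt_ne_one h1 τ), norm_mul]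
  rw [← e]
  exact ⟨hmin hm, hmax hm⟩

/-- A lower bound for `ζ` that is uniform as `α → 0`: use the `3-4-1` bound at a suitable abscissa
`1 + β`, and `zeta_lip` to move from `β` to a smaller `α`. -/
theorem zeta_lower : ∃ c T : ℝ, 0 < c ∧ 1 ≤ T ∧ ∀ α τ : ℝ, 0 < α → α ≤ 1 → T ≤ τ →
    c * (1 + τ) ^ (-(1 / 2) : ℝ) ≤ ‖riemannZeta (pt α τ)‖ := by
  obtain ⟨c, hc, h341⟩ := zeta_lower_341
  set δ := min 1 (c / 80000) with hδ
  have hδ0 : 0 < δ := by positivity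
  have hδ1 : δ ≤ 1 := min_le_left _ _
  have hδc : 80000 * δ ≤ c := by
    have := min_le_right 1 (c / 80000)
    rw [← hδ] at this; linarith
  set ε := δ ^ 4 with hε
  have hε0 : 0 < ε := by positivity
  have hε1 : ε ≤ 1 := pow_le_one₀ hδ0.le hδ1
  refine ⟨c * δ ^ 3 / 2, 1 + 1 / ε, by positivity, by linarith [one_div_pos.2 hε0], ?_⟩
  intro α τ hα hα1 hτ
  have h1ε : 0 < 1 / ε := by positivity
  set U := 1 + τ with hU
  have hτ1 : 1 ≤ τ := by linarith
  have hU1 : 1 ≤ U := by linarith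
  have hU0 : 0 < U := by linarith
  -- `5/8 · 3/4 + 1/32 = 1/2` and `5/8 - 1/8 = 1/2`: the main term and the Lipschitz error balance.
  set β := ε * U ^ (-(5 / 8) : ℝ) with hβ
  have hβ0 : 0 < β := by positivity
  have hUr : U ^ (-(5 / 8) : ℝ) ≤ 1 := Real.rpow_le_one_of_one_le_of_nonpos hU1 (by norm_num)
  have hβ1 : β ≤ 1 := mul_le_one₀ hε1 (by positivity) hUr
  have hβ34 : β ^ (3 / 4 : ℝ) = δ ^ 3 * U ^ (-(15 / 32) : ℝ) := by
    rw [hβ, Real.mul_rpow hε0.le (by positivity), ← Real.rpow_mul hU0.le, hε, ← Real.rpow_natCast,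
      ← Real.rpow_mul hδ0.le]
    norm_num
  have key : c * β ^ (3 / 4 : ℝ) * U ^ (-(1 / 32) : ℝ) = c * δ ^ 3 * U ^ (-(1 / 2) : ℝ) := by
    rw [hβ34, mul_assoc, mul_assoc, ← Real.rpow_add hU0, mul_assoc]
    norm_num
  have hUp : 0 < U ^ (-(1 / 2) : ℝ) := by positivity
  rcases le_total β α with hle | hle
  · refine le_trans ?_ (h341 α τ hα hα1 hτ1)
    have : c * β ^ (3 / 4 : ℝ) * U ^ (-(1 / 32) : ℝ) ≤ c * α ^ (3 / 4 : ℝ) * U ^ (-(1 / 32) : ℝ) := by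
      gcongr
    rw [key] at this
    refine le_trans ?_ this
    have : 0 < c * δ ^ 3 := by positivity
    nlinarith
  · have h1 := h341 β τ hβ0 hβ1 hτ1
    rw [key] at h1
    have h2 := zeta_lip hα hle hβ1 hτ1
    rw [← hU] at h2
    have e1 : β * U ^ (1 / 8 : ℝ) = δ ^ 4 * U ^ (-(1 / 2) : ℝ) := by
      rw [hβ, mul_assoc, ← Real.rpow_add hU0]; norm_num [hε]
    have e2 : 1 / U ^ 5 ≤ δ ^ 4 * U ^ (-(1 / 2) : ℝ) := by
      have a1 : 1 / ε ≤ U := by linarith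
      have a2 : 1 ≤ ε * U := by rw [div_le_iff₀ hε0] at a1; linarith
      have a3 : U ^ (-1 : ℝ) ≤ U ^ (-(1 / 2) : ℝ) :=
        Real.rpow_le_rpow_of_exponent_le hU1 (by norm_num)
      rw [Real.rpow_neg_one] at a3
      calc 1 / U ^ 5 ≤ ε * U * (1 / U ^ 5) := le_mul_of_one_le_left (by positivity) a2
        _ ≤ ε * U * (1 / U ^ 2) := by gcongr <;> norm_num
        _ = ε * U⁻¹ := by field_simp
        _ ≤ _ := by gcongr
    have h3 : ‖riemannZeta (pt α τ) - riemannZeta (pt β τ)‖ ≤ c * δ ^ 3 / 2 * U ^ (-(1 / 2) : ℝ) := by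
      refine h2.trans ?_
      rw [e1]
      calc _ ≤ 20000 * (δ ^ 4 * U ^ (-(1 / 2) : ℝ) + δ ^ 4 * U ^ (-(1 / 2) : ℝ)) := by gcongr
        _ = (80000 * δ) * δ ^ 3 / 2 * U ^ (-(1 / 2) : ℝ) := by ring
        _ ≤ _ := by gcongr
    have h4 := norm_sub_norm_le (riemannZeta (pt β τ)) (riemannZeta (pt α τ))
    rw [norm_sub_rev] at h4
    linarith

/-- Size of `log |ζ(1 + α + iτ)|`, uniformly in `0 < α ≤ 1`. -/
theorem cosSum_bound : ∃ C : ℝ, 0 ≤ C ∧ ∀ α τ : ℝ, 0 < α → α ≤ 1 → 0 ≤ τ →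
    |cosSum α τ + Real.log (min 1 (τ + α))| ≤ C + Real.log (1 + τ) / 2 := by
  obtain ⟨c, T, hc, hT, hlow⟩ := zeta_lower
  obtain ⟨c', C', hc', hC', hcomp⟩ := zeta_compact T (by linarith)
  have hE := eulerConst_nonneg
  refine ⟨|Real.log c| + |Real.log 20000| + |Real.log c'| + |Real.log C'| + eulerConst + Real.log 2 +
    Real.log (1 + T), ?_, ?_⟩
  · have : 0 ≤ Real.log 2 := Real.log_nonneg (by norm_num)
    have : 0 ≤ Real.log (1 + T) := Real.log_nonneg (by linarith)
    positivity
  intro α τ hα hα1 hτ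
  have l2 : 0 ≤ Real.log 2 := Real.log_nonneg (by norm_num)
  have lT : 0 ≤ Real.log (1 + T) := Real.log_nonneg (by linarith)
  have lτ : 0 ≤ Real.log (1 + τ) := Real.log_nonneg (by linarith)
  have b1 := neg_abs_le (Real.log c)
  have b2 := le_abs_self (Real.log 20000)
  have b3 := neg_abs_le (Real.log c')
  have b4 := le_abs_self (Real.log C')
  have b1' := abs_nonneg (Real.log c)
  have b2' := abs_nonneg (Real.log 20000)
  have b3' := abs_nonneg (Real.log c')
  have b4' := abs_nonneg (Real.log C')
  rcases le_total T τ with hTτ | hTτ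
  · have hU0 : 0 < 1 + τ := by linarith
    rw [min_eq_left (by linarith), Real.log_one, add_zero]
    have h1 := cosSum_le_log hα τ (zeta_upper hα hα1 (hT.trans hTτ))
    have h2 := log_le_cosSum hα τ (by positivity) (hlow α τ hα hα1 hTτ)
    rw [Real.log_mul (by norm_num) (by positivity), Real.log_rpow hU0] at h1
    rw [Real.log_mul hc.ne' (by positivity), Real.log_rpow hU0] at h2
    rw [abs_le]
    constructor <;> linarith
  · obtain ⟨g1, g2⟩ := hcomp α τ hα hα1 hτ hTτ
    have hd : 0 < ‖pt α τ - 1‖ := norm_pos_iff.2 (sub_ne_zero.2 (pt_ne_one hα τ))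
    have hz : 0 < ‖riemannZeta (pt α τ)‖ := by
      by_contra h
      have : ‖riemannZeta (pt α τ)‖ = 0 := le_antisymm (not_lt.1 h) (norm_nonneg _)
      rw [this, mul_zero] at g1; linarith
    have h1 := cosSum_le_log hα τ le_rfl
    have h2 := log_le_cosSum hα τ hz le_rfl
    have g1' := Real.log_le_log hc' g1
    have g2' := Real.log_le_log (by positivity) g2
    rw [Real.log_mul hd.ne' hz.ne'] at g1' g2'
    have hm : 0 < τ + α := by linarith
    have e0 : pt α τ - 1 = (α : ℂ) + (τ : ℂ) * Complex.I := by unfold pt; push_cast; ring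
    have d1 : ‖pt α τ - 1‖ ≤ τ + α := by
      rw [e0]
      refine (norm_add_le _ _).trans ?_
      rw [norm_mul, Complex.norm_I, Complex.norm_real, Complex.norm_real, Real.norm_of_nonneg hτ,
        Real.norm_of_nonneg hα.le]
      linarith
    have d2 : (τ + α) / 2 ≤ ‖pt α τ - 1‖ := by
      have a1 := Complex.abs_re_le_norm (pt α τ - 1)
      have a2 := Complex.abs_im_le_norm (pt α τ - 1)
      have e1 : (pt α τ - 1).re = α := by simp
      have e2 : (pt α τ - 1).im = τ := by simp
      rw [e1, abs_of_pos hα] at a1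
      rw [e2, abs_of_nonneg hτ] at a2
      linarith
    have d1' := Real.log_le_log hd d1
    have d2' := Real.log_le_log (by linarith) d2
    rw [Real.log_div hm.ne' (by norm_num)] at d2'
    have m1 : Real.log (min 1 (τ + α)) ≤ Real.log (τ + α) :=
      Real.log_le_log (by positivity) (min_le_right _ _)
    have m2 : Real.log (τ + α) - Real.log (1 + T) ≤ Real.log (min 1 (τ + α)) := by
      rw [← Real.log_div hm.ne' (by linarith)]
      apply Real.log_le_log (by positivity)
      apply le_min
      · rw [div_le_one (by linarith)]; linarith
      · exact div_le_self hm.le (by linarith)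
    rw [abs_le]
    constructor <;> linarith

end LogHalasz

/-! ### The Fourier series of `|cos θ|` -/

namespace LogHalasz

/-- The Fourier coefficients of `|cos θ|` with respect to `e^{2inθ}`. -/
noncomputable def dcoef (n : ℤ) : ℝ := 2 / Real.pi * ((-1) ^ n.natAbs / (1 - 4 * (n : ℝ) ^ 2))

theorem one_sub_ne (n : ℤ) : (1 - 4 * (n : ℝ) ^ 2) ≠ 0 := by
  have : (1 - 4 * n ^ 2 : ℤ) ≠ 0 := by omega
  exact_mod_cast this

theorem cos_int_pi (n : ℤ) : Real.cos (n * Real.pi) = (-1) ^ n.natAbs := by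
  rw [Real.cos_int_mul_pi]
  rcases Int.natAbs_eq n with h | h
  · conv_lhs => rw [h]
    rw [zpow_natCast]
  · conv_lhs => rw [h]
    rw [zpow_neg, zpow_natCast, ← inv_pow]; norm_num

instance : Fact (0 < Real.pi) := ⟨Real.pi_pos⟩

theorem abs_cos_periodic : Function.Periodic (fun θ : ℝ => ((|Real.cos θ| : ℝ) : ℂ)) Real.pi := by
  intro θ; simp [Real.cos_add_pi]

/-- `|cos θ|` as a continuous function on `ℝ / πℤ`. -/
noncomputable def absCos : C(AddCircle Real.pi, ℂ) where
  toFun := abs_cos_periodic.lift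
  continuous_toFun := by
    apply continuous_coinduced_dom.2
    show Continuous fun θ : ℝ => abs_cos_periodic.lift (θ : AddCircle Real.pi)
    simp only [Function.Periodic.lift_coe]
    fun_prop

theorem absCos_coe (θ : ℝ) : absCos (θ : AddCircle Real.pi) = ((|Real.cos θ| : ℝ) : ℂ) :=
  abs_cos_periodic.lift_coe θ

theorem fourierCoeff_absCos (n : ℤ) : fourierCoeff absCos n = (dcoef n : ℂ) := by
  rw [fourierCoeff_eq_intervalIntegral _ _ (-(Real.pi / 2))]
  have e1 : -(Real.pi / 2) + Real.pi = Real.pi / 2 := by ring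
  rw [e1]
  have hpi := Real.pi_pos
  have hn : (1 - 4 * (n : ℂ) ^ 2) ≠ 0 := by exact_mod_cast one_sub_ne n
  set c : ℂ := -2 * n * Complex.I with hc
  have hc2 : c ^ 2 = -4 * (n : ℂ) ^ 2 := by
    rw [hc, mul_pow, Complex.I_sq]; ring
  have e2 : ∫ x in (-(Real.pi / 2))..(Real.pi / 2), fourier (-n) (x : AddCircle Real.pi) • absCos x =
      ∫ x in (-(Real.pi / 2))..(Real.pi / 2), Complex.exp (c * x) * Complex.cos x := by
    apply intervalIntegral.integral_congr
    intro x hx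
    rw [Set.uIcc_of_le (by linarith)] at hx
    simp only [smul_eq_mul]
    rw [absCos_coe, abs_of_nonneg (Real.cos_nonneg_of_mem_Icc hx), fourier_coe_apply]
    rw [Complex.ofReal_cos]
    congr 2
    have : (Real.pi : ℂ) ≠ 0 := by exact_mod_cast hpi.ne'
    rw [hc]; push_cast; field_simp
  have hder : ∀ x ∈ Set.uIcc (-(Real.pi / 2)) (Real.pi / 2), HasDerivAt
      (fun x : ℝ => Complex.exp (c * x) * (Complex.sin x + c * Complex.cos x) / (1 - 4 * (n : ℂ) ^ 2))
      (Complex.exp (c * x) * Complex.cos x) x := by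
    intro x _
    have hx : HasDerivAt (fun z : ℂ => Complex.exp (c * z) * (Complex.sin z + c * Complex.cos z) /
        (1 - 4 * (n : ℂ) ^ 2)) (Complex.exp (c * x) * Complex.cos x) (x : ℂ) := by
      have a1 : HasDerivAt (fun z : ℂ => Complex.exp (c * z)) (Complex.exp (c * x) * (c * 1)) (x : ℂ) :=
        ((hasDerivAt_id (x : ℂ)).const_mul c).cexp
      have a2 := (Complex.hasDerivAt_sin (x : ℂ)).add ((Complex.hasDerivAt_cos (x : ℂ)).const_mul c)
      have a3 := (a1.mul a2).div_const (1 - 4 * (n : ℂ) ^ 2)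
      refine a3.congr_deriv ?_
      rw [div_eq_iff hn]
      simp only [Pi.add_apply]
      linear_combination (Complex.exp (c * x) * Complex.cos x) * hc2
    exact hx.comp_ofReal
  rw [e2, intervalIntegral.integral_eq_sub_of_hasDerivAt hder (by
    apply Continuous.intervalIntegrable; fun_prop)]
  have s1 : Complex.sin ((Real.pi / 2 : ℝ) : ℂ) = 1 := by push_cast; exact Complex.sin_pi_div_two
  have s2 : Complex.cos ((Real.pi / 2 : ℝ) : ℂ) = 0 := by push_cast; exact Complex.cos_pi_div_two
  have s3 : Complex.sin ((-(Real.pi / 2) : ℝ) : ℂ) = -1 := by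
    rw [Complex.ofReal_neg, Complex.sin_neg, s1]
  have s4 : Complex.cos ((-(Real.pi / 2) : ℝ) : ℂ) = 0 := by
    rw [Complex.ofReal_neg, Complex.cos_neg, s2]
  have s5 : Complex.exp (c * ((Real.pi / 2 : ℝ) : ℂ)) + Complex.exp (c * ((-(Real.pi / 2) : ℝ) : ℂ)) =
      2 * ((-1) ^ n.natAbs : ℝ) := by
    rw [← cos_int_pi, Complex.ofReal_cos, Complex.cos]
    have t1 : c * ((Real.pi / 2 : ℝ) : ℂ) = -((n * Real.pi : ℝ) : ℂ) * Complex.I := by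
      rw [hc]; push_cast; ring
    have t2 : c * ((-(Real.pi / 2) : ℝ) : ℂ) = ((n * Real.pi : ℝ) : ℂ) * Complex.I := by
      rw [hc]; push_cast; ring
    rw [t1, t2]; ring
  rw [s1, s2, s3, s4]
  simp only [mul_zero, add_zero, mul_one, mul_neg]
  have s6 : ∀ a b d : ℂ, a / d - -b / d = (a + b) / d := by intros; ring
  rw [s6, s5, dcoef]
  rw [Complex.real_smul]
  push_cast
  ring

theorem abs_dcoef_le (n : ℤ) : |dcoef n| ≤ |(n : ℝ)| ^ (-2 : ℝ) ∨ n = 0 := by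
  by_cases hn : n = 0
  · exact Or.inr hn
  left
  have h1 : (1 : ℝ) ≤ |(n : ℝ)| := by
    have : (1 : ℤ) ≤ |n| := Int.one_le_abs hn
    exact_mod_cast this
  have hpi := Real.pi_gt_three
  rw [dcoef, abs_mul, abs_div, abs_div, abs_pow, abs_neg, abs_one, one_pow,
    abs_of_pos Real.pi_pos, abs_two, Real.rpow_neg (abs_nonneg _)]
  rw [show (2 : ℝ) = ((2 : ℕ) : ℝ) by norm_num, Real.rpow_natCast, sq_abs]
  have h2 : (1 : ℝ) ≤ (n : ℝ) ^ 2 := by rw [← sq_abs]; nlinarith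
  have h3 : |1 - ((4 : ℝ)) * (n : ℝ) ^ 2| = 4 * (n : ℝ) ^ 2 - 1 := by
    rw [abs_of_neg (by linarith)]; ring
  rw [h3, inv_eq_one_div]
  push_cast
  calc 2 / Real.pi * (1 / (4 * (n : ℝ) ^ 2 - 1)) ≤ 1 * (1 / (4 * (n : ℝ) ^ 2 - 1)) := by
        gcongr
        · apply one_div_nonneg.2; linarith
        · rw [div_le_one Real.pi_pos]; linarith
    _ ≤ _ := by
        rw [one_mul]
        apply one_div_le_one_div_of_le <;> linarith

theorem summable_abs_dcoef : Summable fun n : ℤ => |dcoef n| := by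
  have h := Real.summable_abs_int_rpow (b := 2) (by norm_num)
  refine (Summable.of_norm_bounded_eventually h ?_)
  have : {n : ℤ | ¬ ‖|dcoef n|‖ ≤ |(n : ℝ)| ^ (-2 : ℝ)} ⊆ {0} := by
    intro n hn
    rcases abs_dcoef_le n with h | h
    · exact absurd (by simpa using h) hn
    · exact h
  exact (Set.finite_singleton _).subset this

theorem summable_dcoef_log : Summable fun n : ℤ => |dcoef n| * Real.log (2 * |(n : ℝ)|) := by
  have h := (Real.summable_abs_int_rpow (b := 3 / 2) (by norm_num)).mul_left (2 * 2 ^ (1 / 2 : ℝ))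
  refine Summable.of_norm_bounded h ?_
  intro n
  by_cases hn : n = 0
  · subst hn; simp
  have h1 : (1 : ℝ) ≤ |(n : ℝ)| := by
    have : (1 : ℤ) ≤ |n| := Int.one_le_abs hn
    exact_mod_cast this
  have h2 := (abs_dcoef_le n).resolve_right hn
  have h3 := Real.log_le_rpow_div (x := 2 * |(n : ℝ)|) (by positivity) (by norm_num : (0 : ℝ) < 1 / 2)
  have h4 : 0 ≤ Real.log (2 * |(n : ℝ)|) := Real.log_nonneg (by linarith)
  rw [Real.norm_of_nonneg (by positivity)]
  have h0 : 0 < |(n : ℝ)| := by linarith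
  calc |dcoef n| * Real.log (2 * |(n : ℝ)|) ≤
        |(n : ℝ)| ^ (-2 : ℝ) * ((2 * |(n : ℝ)|) ^ (1 / 2 : ℝ) / (1 / 2)) := by gcongr
    _ = 2 * 2 ^ (1 / 2 : ℝ) * (|(n : ℝ)| ^ (-2 : ℝ) * |(n : ℝ)| ^ (1 / 2 : ℝ)) := by
        rw [Real.mul_rpow (by norm_num) h0.le]; ring
    _ = _ := by rw [← Real.rpow_add h0]; norm_num

/-- The Fourier expansion of `|cos θ|`. -/
theorem hasSum_abs_cos (θ : ℝ) :
    HasSum (fun n : ℤ => dcoef n * Real.cos (2 * n * θ)) |Real.cos θ| := by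
  have hs : Summable (fourierCoeff absCos) := by
    apply Summable.of_norm
    refine summable_abs_dcoef.congr fun n => ?_
    rw [fourierCoeff_absCos, Complex.norm_real, Real.norm_eq_abs]
  have h := has_pointwise_sum_fourier_series_of_summable hs (θ : AddCircle Real.pi)
  rw [absCos_coe] at h
  have h2 := Complex.hasSum_re h
  simp only [Complex.ofReal_re] at h2
  refine h2.congr_fun fun n => ?_
  rw [fourierCoeff_absCos, fourier_coe_apply, smul_eq_mul, Complex.re_ofReal_mul]
  congr 1
  have : (2 * Real.pi * Complex.I * n * θ / Real.pi : ℂ) = ((2 * n * θ : ℝ) : ℂ) * Complex.I := by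
    have : (Real.pi : ℂ) ≠ 0 := by exact_mod_cast Real.pi_pos.ne'
    push_cast; field_simp
  rw [this, Complex.exp_ofReal_mul_I_re]

theorem dcoef_zero : dcoef 0 = 2 / Real.pi := by simp [dcoef]

theorem hasSum_dcoef : HasSum dcoef 1 := by
  simpa using hasSum_abs_cos 0

/-- All terms of `∑_{n ≠ 0} d_n (-1)^n` are negative, so evaluating the Fourier series at `θ = π/2`
gives `∑_{n ≠ 0} |d_n| = d_0 = 2/π`. -/
theorem hasSum_abs_dcoef : HasSum (fun n : ℤ => if n = 0 then 0 else |dcoef n|) (2 / Real.pi) := by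
  have h := hasSum_abs_cos (Real.pi / 2)
  rw [Real.cos_pi_div_two, abs_zero] at h
  have h2 := (hasSum_ite_eq (0 : ℤ) (2 / Real.pi)).sub h
  rw [sub_zero] at h2
  refine h2.congr_fun fun n => ?_
  have e : (2 * n * (Real.pi / 2) : ℝ) = n * Real.pi := by ring
  rw [e, cos_int_pi]
  split_ifs with hn
  · subst hn; simp [dcoef_zero]
  · rw [zero_sub, dcoef]
    have h1 : (1 : ℝ) ≤ |(n : ℝ)| := by
      have : (1 : ℤ) ≤ |n| := Int.one_le_abs hn
      exact_mod_cast this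
    have h2 : (1 : ℝ) ≤ (n : ℝ) ^ 2 := by rw [← sq_abs]; nlinarith
    rw [abs_mul, abs_div, abs_div, abs_pow, abs_neg, abs_one, one_pow,
      abs_of_pos Real.pi_pos, abs_two, abs_of_neg (by linarith : 1 - 4 * (n : ℝ) ^ 2 < 0)]
    have : ((-1 : ℝ) ^ n.natAbs) * (-1) ^ n.natAbs = 1 := by rw [← mul_pow]; norm_num
    have h3 := one_sub_ne n
    have h4 : -(1 - 4 * (n : ℝ) ^ 2) ≠ 0 := neg_ne_zero.2 h3
    have hp := Real.pi_pos.ne'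
    rw [div_neg, mul_assoc, div_mul_eq_mul_div ((-1 : ℝ) ^ n.natAbs), this]
    ring

end LogHalasz

/-! ### Pointwise bounds for the Dirichlet series `G` -/

namespace LogHalasz

/-- `∑_p |cos(t log p)| p^{-1-α}`. -/
noncomputable def absSum (α t : ℝ) : ℝ :=
  ∑' p : Nat.Primes, |Real.cos (t * Real.log p)| * (p : ℝ) ^ (-(1 + α))

theorem summable_absSum {α : ℝ} (hα : 0 < α) (t : ℝ) :
    Summable fun p : Nat.Primes => |Real.cos (t * Real.log p)| * (p : ℝ) ^ (-(1 + α)) := by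
  apply Summable.of_nonneg_of_le (fun p => by positivity) _ (summable_primes hα)
  intro p
  exact mul_le_of_le_one_left (by positivity) (Real.abs_cos_le_one _)

/-- The Fourier series of `|cos|`, summed over primes. -/
theorem hasSum_absSum {α : ℝ} (hα : 0 < α) (t : ℝ) :
    HasSum (fun n : ℤ => dcoef n * cosSum α (2 * n * t)) (absSum α t) := by
  set F : ℤ → Nat.Primes → ℝ := fun n p =>
    dcoef n * Real.cos (2 * n * (t * Real.log p)) * (p : ℝ) ^ (-(1 + α)) with hF
  have hsum : Summable (Function.uncurry F) := by
    refine Summable.of_norm_bounded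
      (summable_abs_dcoef.mul_of_nonneg (summable_primes hα) (fun _ => abs_nonneg _)
        (fun p => by show (0 : ℝ) ≤ (p : ℝ) ^ (-(1 + α)); positivity)) ?_
    rintro ⟨n, p⟩
    simp only [Function.uncurry, hF]
    rw [norm_mul, norm_mul, Real.norm_of_nonneg (by positivity : 0 ≤ (p : ℝ) ^ (-(1 + α)))]
    gcongr
    exact mul_le_of_le_one_right (abs_nonneg _) (Real.abs_cos_le_one _)
  have h1 : ∀ n, ∑' p, F n p = dcoef n * cosSum α (2 * n * t) := by
    intro n
    rw [cosSum, primeSum, ← tsum_mul_left]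
    congr 1; ext p
    simp only [hF]; ring_nf
  have h2 : ∀ p : Nat.Primes, ∑' n, F n p = |Real.cos (t * Real.log p)| * (p : ℝ) ^ (-(1 + α)) := by
    intro p
    exact ((hasSum_abs_cos (t * Real.log p)).mul_right _).tsum_eq
  have h3 : ∑' p, ∑' n, F n p = ∑' n, ∑' p, F n p := hsum.tsum_comm
  have hs : Summable fun n => ∑' p, F n p := hsum.prod
  have e : absSum α t = ∑' n, ∑' p, F n p := by
    rw [← h3, absSum]; exact tsum_congr fun p => (h2 p).symm
  rw [e]
  exact hs.hasSum.congr_fun fun n => (h1 n).symm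

theorem cosSum_neg (α t : ℝ) : cosSum α (-t) = cosSum α t := by
  unfold cosSum primeSum
  congr 1; ext p; rw [neg_mul, Real.cos_neg]

theorem cosSum_abs (α t : ℝ) : cosSum α |t| = cosSum α t := by
  rcases abs_choice t with h | h <;> rw [h]
  exact cosSum_neg α t

/-- The `n = 0` term of `hasSum_absSum` gives `(2/π) log (1/α)`; the others are controlled by
`cosSum_bound`, and their coefficients have total mass `2/π`. -/
theorem absSum_le : ∃ C : ℝ, 0 ≤ C ∧ ∀ α t : ℝ, 0 < α → α ≤ 1 →
    absSum α t ≤ -(2 / Real.pi) * Real.log α - (1 - 2 / Real.pi) * Real.log (min 1 (|t| + α)) +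
      1 / Real.pi * Real.log (1 + |t|) + C := by
  obtain ⟨C, hC, hbd⟩ := cosSum_bound
  set K := ∑' n : ℤ, |dcoef n| * Real.log (2 * |(n : ℝ)|) with hK
  have hK0 : 0 ≤ K := tsum_nonneg fun n => by
    by_cases hn : n = 0
    · simp [hn]
    · have h1 : (1 : ℝ) ≤ |(n : ℝ)| := by
        have : (1 : ℤ) ≤ |n| := Int.one_le_abs hn
        exact_mod_cast this
      have : 0 ≤ Real.log (2 * |(n : ℝ)|) := Real.log_nonneg (by linarith)
      positivity
  have hE := eulerConst_nonneg
  have hpi := Real.pi_pos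
  have l2 : 0 ≤ Real.log 2 := Real.log_nonneg (by norm_num)
  refine ⟨2 / Real.pi * (Real.log 2 + eulerConst + C) + 3 / 2 * K, by positivity, ?_⟩
  intro α t hα hα1
  set M := -Real.log (min 1 (|t| + α)) with hM
  set B := C + Real.log (1 + |t|) / 2 with hB
  have hm0 : 0 < min 1 (|t| + α) := by positivity
  have hterm : ∀ n : ℤ, dcoef n * cosSum α (2 * n * t) ≤
      (if n = 0 then 2 / Real.pi * (cosSum α 0 - M) else 0) + dcoef n * M +
      (if n = 0 then 0 else |dcoef n|) * B + 3 / 2 * (|dcoef n| * Real.log (2 * |(n : ℝ)|)) := by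
    intro n
    by_cases hn : n = 0
    · subst hn; simp [dcoef_zero]; linarith
    simp only [hn, if_false, zero_add]
    have h1 : (1 : ℝ) ≤ |(n : ℝ)| := by
      have : (1 : ℤ) ≤ |n| := Int.one_le_abs hn
      exact_mod_cast this
    have ht := abs_nonneg t
    set τ := |2 * n * t| with hτ
    have eτ : τ = 2 * |(n : ℝ)| * |t| := by rw [hτ, abs_mul, abs_mul, abs_two]
    have hb := hbd α τ hα hα1 (abs_nonneg _)
    rw [hτ, cosSum_abs, ← hτ] at hb
    have hn0 : 0 < 2 * |(n : ℝ)| := by linarith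
    have l1 : Real.log (1 + τ) ≤ Real.log (2 * |(n : ℝ)|) + Real.log (1 + |t|) := by
      rw [← Real.log_mul hn0.ne' (by positivity)]
      apply Real.log_le_log (by positivity)
      rw [eτ]; nlinarith
    have l2 : Real.log (min 1 (|t| + α)) ≤ Real.log (min 1 (τ + α)) := by
      apply Real.log_le_log hm0
      apply min_le_min le_rfl
      rw [eτ]; nlinarith
    have l3 : Real.log (min 1 (τ + α)) ≤ Real.log (2 * |(n : ℝ)|) + Real.log (min 1 (|t| + α)) := by
      rw [← Real.log_mul hn0.ne' hm0.ne']
      apply Real.log_le_log (by positivity)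
      rcases le_total 1 (|t| + α) with h | h
      · rw [min_eq_left h]
        exact (min_le_left _ _).trans (by linarith)
      · rw [min_eq_right h]
        refine (min_le_right _ _).trans ?_
        rw [eτ]; nlinarith
    have hd : |cosSum α (2 * n * t) - M| ≤ B + 3 / 2 * Real.log (2 * |(n : ℝ)|) := by
      rw [abs_le] at hb ⊢
      constructor <;> linarith [hb.1, hb.2]
    have : dcoef n * (cosSum α (2 * n * t) - M) ≤
        |dcoef n| * (B + 3 / 2 * Real.log (2 * |(n : ℝ)|)) := by
      refine (le_abs_self _).trans ?_
      rw [abs_mul]; gcongr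
    linarith
  have hsum := (((hasSum_ite_eq (0 : ℤ) (2 / Real.pi * (cosSum α 0 - M))).add
    (hasSum_dcoef.mul_right M)).add (hasSum_abs_dcoef.mul_right B)).add
    (summable_dcoef_log.hasSum.mul_left (3 / 2))
  have h := hasSum_le hterm (hasSum_absSum hα t) hsum
  rw [← hK] at h
  have h0 := cosSum_zero_le hα
  have h4 : Real.log (1 + 1 / α) ≤ Real.log 2 - Real.log α := by
    rw [← Real.log_div (by norm_num) hα.ne']
    apply Real.log_le_log (by positivity)
    rw [le_div_iff₀ hα, add_mul, one_div_mul_cancel hα.ne']; linarith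
  have h5 : 2 / Real.pi * cosSum α 0 ≤ 2 / Real.pi * (Real.log 2 - Real.log α + eulerConst) := by
    gcongr; linarith
  have e1 : 2 / Real.pi * B = 2 / Real.pi * C + 1 / Real.pi * Real.log (1 + |t|) := by
    rw [hB]; ring
  have e2 : Real.log (min 1 (|t| + α)) = -M := by rw [hM]; ring
  rw [e2]
  rw [e1] at h
  linarith

theorem primeSum_le_absSum {g : ℕ → ℝ} (hg : ∀ n, |g n| ≤ 1) {α : ℝ} (hα : 0 < α) (t : ℝ) :
    primeSum g α t ≤ absSum α t := by
  refine (summable_primeSum hg hα t).tsum_le_tsum (fun p => ?_) (summable_absSum hα t)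
  gcongr
  refine (le_abs_self _).trans ?_
  rw [abs_mul]
  exact mul_le_of_le_one_left (abs_nonneg _) (hg p)

/-- The logarithm of the main term: `∑_{p ≤ x} g(p)/p`. -/
noncomputable def pSum (g : ℕ → ℝ) (x : ℝ) : ℝ := ∑ p ∈ primesUpTo x, g p / p

/-- For nonnegative coefficients the truncation at `x` needs only an upper bound for the tail. -/
theorem tsum_le_sum_add {α x : ℝ} (hα : 0 < α) (hx : 1 < x) (h : ℕ → ℝ) (h0 : ∀ n, 0 ≤ h n)
    (h2 : ∀ n, h n ≤ 2) : ∑' p : Nat.Primes, h p * (p : ℝ) ^ (-(1 + α)) ≤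
      ∑ p ∈ primesUpTo x, h p / p + 2 * (cheb * (1 + 1 / α) / Real.log x) := by
  have hx0 : 0 ≤ x := by linarith
  have hs : Summable fun p : Nat.Primes => h p * (p : ℝ) ^ (-(1 + α)) := by
    refine Summable.of_nonneg_of_le (fun p => mul_nonneg (h0 p) (by positivity)) ?_
      ((summable_primes hα).mul_left 2)
    intro p; gcongr; exact h2 p
  have h1 := sum_primesUpTo_eq_tsum hx0 (fun p => h p / p)
  have hgt : Summable fun p : Nat.Primes => if x < (p : ℝ) then (p : ℝ) ^ (-(1 + α)) else 0 := by
    apply Summable.of_nonneg_of_le _ _ (summable_primes hα)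
    · intro p; split_ifs <;> positivity
    · intro p; split_ifs
      · exact le_rfl
      · positivity
  have hsum := h1.add (hgt.hasSum.mul_left 2)
  refine (hasSum_le ?_ hs.hasSum hsum).trans ?_
  · intro p
    have hp1 : (1 : ℝ) ≤ (p : ℕ) := by exact_mod_cast p.2.one_lt.le
    by_cases hp : (p : ℝ) ≤ x
    · simp only [hp, if_true, not_lt.2 hp, if_false, mul_zero, add_zero]
      rw [div_eq_mul_inv, ← Real.rpow_neg_one]
      refine mul_le_mul_of_nonneg_left ?_ (h0 p)
      exact Real.rpow_le_rpow_of_exponent_le hp1 (by linarith)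
    · simp only [hp, if_false, not_le.1 hp, if_true, zero_add]
      gcongr; exact h2 p
  · gcongr
    exact tsum_primes_gt_le hα hx

/-- Near the real axis `G` is small when `∑ g(p)/p` is: since `(1 + g)(1 - cos) ≥ 0`, one has
`g cos ≤ (1 + g) - cos`, and `∑ cos(t log p) p^{-1-α}` is about `-log (|t| + α)`. -/
theorem primeSum_le_near : ∃ C : ℝ, 0 ≤ C ∧
    ∀ g : ℕ → ℝ, (∀ n, |g n| ≤ 1) → ∀ x α t : ℝ, 3 ≤ x → 1 / (2 * Real.log x) ≤ α → α ≤ 1 → |t| ≤ 1 →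
    primeSum g α t ≤ Real.log (Real.log x) + pSum g x + Real.log (min 1 (|t| + α)) + C := by
  obtain ⟨C, hC, hbd⟩ := cosSum_bound
  obtain ⟨C', hC', hmer⟩ := mertens_upper
  have hc := cheb_pos
  refine ⟨C + C' + 6 * cheb + 1, by positivity, ?_⟩
  intro g hg x α t hx hα hα1 ht
  have hL1 : 1 ≤ Real.log x := by
    rw [Real.le_log_iff_exp_le (by linarith)]
    linarith [Real.exp_one_lt_d9]
  have hL : 0 < Real.log x := by linarith
  have hα0 : 0 < α := lt_of_lt_of_le (by positivity) hα
  have hone : ∀ n : ℕ, |(fun _ : ℕ => (1 : ℝ)) n| ≤ 1 := by simp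
  have s1 := summable_primeSum hg hα0 t
  have s2 := summable_primeSum hone hα0 t
  have s3 : Summable fun p : Nat.Primes => (1 + g p) * (p : ℝ) ^ (-(1 + α)) := by
    have := (summable_primeSum hone hα0 0).add (summable_primeSum hg hα0 0)
    refine this.congr fun p => ?_
    simp; ring
  have h1 : primeSum g α t ≤ ∑' p : Nat.Primes, (1 + g p) * (p : ℝ) ^ (-(1 + α)) - cosSum α t := by
    rw [cosSum, primeSum, primeSum, ← s3.tsum_sub s2]
    refine s1.tsum_le_tsum (fun p => ?_) (s3.sub s2)
    rw [← sub_mul]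
    refine mul_le_mul_of_nonneg_right ?_ (by positivity)
    have a1 : 0 ≤ 1 + g p := by linarith [(abs_le.1 (hg p)).1]
    have a2 : 0 ≤ 1 - Real.cos (t * Real.log p) := by linarith [Real.cos_le_one (t * Real.log p)]
    nlinarith [mul_nonneg a1 a2]
  have h2 := tsum_le_sum_add hα0 (by linarith : 1 < x) (fun n => 1 + g n)
    (fun n => by linarith [(abs_le.1 (hg n)).1]) (fun n => by linarith [(abs_le.1 (hg n)).2])
  have e : ∑ p ∈ primesUpTo x, (1 + g p) / p = ∑ p ∈ primesUpTo x, (1 : ℝ) / p + pSum g x := by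
    rw [pSum, ← sum_add_distrib]
    exact sum_congr rfl fun p _ => by ring
  simp only [e] at h2
  have h3 := hmer x (by linarith)
  have h4 := hbd α |t| hα0 hα1 (abs_nonneg t)
  rw [cosSum_abs] at h4
  have h5 := (abs_le.1 h4).1
  have h6 : Real.log (1 + |t|) ≤ 1 := by
    have := Real.log_le_sub_one_of_pos (show 0 < 1 + |t| by positivity)
    linarith
  have h7 : cheb * (1 + 1 / α) / Real.log x ≤ 3 * cheb := by
    rw [div_le_iff₀ hL]
    have : 1 / α ≤ 2 * Real.log x := by
      rw [div_le_iff₀ (by positivity)] at hα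
      rw [div_le_iff₀ hα0]; linarith
    nlinarith
  linarith

theorem log_ge_one {x : ℝ} (hx : 3 ≤ x) : 1 ≤ Real.log x := by
  rw [Real.le_log_iff_exp_le (by linarith)]
  linarith [Real.exp_one_lt_d9]

/-- The pointwise bound for `|G(1 + α + it)|²` used on the whole line. -/
theorem DS_sq_bound : ∃ C : ℝ, 0 < C ∧ ∀ g : ℕ →*₀ ℝ, (∀ n, |g n| ≤ 1) → ∀ x α t : ℝ, 3 ≤ x →
    1 / (2 * Real.log x) ≤ α → α ≤ 1 →
    ‖DS g (pt α t)‖ ^ 2 ≤ C * (Real.log x * Real.exp (pSum g x) * α ^ (-(2 / Real.pi)) +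
      α ^ (-(4 / Real.pi))) * (1 + |t|) ^ (2 / Real.pi) := by
  obtain ⟨C1, hC1, h1⟩ := absSum_le
  obtain ⟨C2, hC2, h2⟩ := primeSum_le_near
  have hE := eulerConst_nonneg
  refine ⟨Real.exp (2 * C1 + C2 + 2 * eulerConst + 1), Real.exp_pos _, ?_⟩
  intro g hg x α t hx hα hα1
  have hL1 := log_ge_one hx
  have hL : 0 < Real.log x := by linarith
  have hα0 : 0 < α := lt_of_lt_of_le (by positivity) hα
  have hpi3 := Real.pi_gt_three
  have hpi := Real.pi_pos
  have hD := norm_DS_le hg hα0 t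
  have hP := primeSum_le_absSum hg hα0 t
  have hA := h1 α t hα0 hα1
  have ht0 := abs_nonneg t
  have ha : 0 ≤ 1 - 2 / Real.pi := by
    rw [sub_nonneg, div_le_one hpi]; linarith
  have hm0 : 0 < min 1 (|t| + α) := by positivity
  have hm1 : Real.log (min 1 (|t| + α)) ≤ 0 := Real.log_nonpos hm0.le (min_le_left _ _)
  have hlt : 0 ≤ Real.log (1 + |t|) := Real.log_nonneg (by linarith)
  have hpos1 : 0 < Real.log x * Real.exp (pSum g x) * α ^ (-(2 / Real.pi)) := by positivity
  have hpos2 : 0 < α ^ (-(4 / Real.pi)) := by positivity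
  have hpos3 : 0 < (1 + |t|) ^ (2 / Real.pi) := by positivity
  have hsq : ∀ r : ℝ, Real.exp r ^ 2 = Real.exp (2 * r) := fun r => by
    rw [← Real.exp_nat_mul]; norm_num
  -- For `|t| ≤ 1`, `|G|²` is the product of one factor bounded by `absSum_le` and one bounded by
  -- `primeSum_le_near`: the powers of `m = min 1 (|t| + α)` multiply to `m^{2/π} ≤ 1`. For `|t| ≥ 1`,
  -- both factors are bounded by `absSum_le`.
  rcases le_total |t| 1 with ht | ht
  · have hN := h2 g hg x α t hx hα hα1 ht
    have hkey : 2 * (primeSum g α t + eulerConst) ≤ (2 * C1 + C2 + 2 * eulerConst + 1) +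
        ((Real.log (Real.log x) + pSum g x + Real.log α * (-(2 / Real.pi))) +
          Real.log (1 + |t|) * (2 / Real.pi)) := by
      have a1 : 1 / Real.pi * Real.log (1 + |t|) ≤ Real.log (1 + |t|) * (2 / Real.pi) := by
        rw [mul_comm]; gcongr; norm_num
      have a2 : 2 / Real.pi * Real.log (min 1 (|t| + α)) ≤ 0 :=
        mul_nonpos_of_nonneg_of_nonpos (by positivity) hm1
      linarith
    calc ‖DS g (pt α t)‖ ^ 2 ≤ Real.exp (primeSum g α t + eulerConst) ^ 2 := by gcongr
      _ ≤ Real.exp ((2 * C1 + C2 + 2 * eulerConst + 1) +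
        ((Real.log (Real.log x) + pSum g x + Real.log α * (-(2 / Real.pi))) +
          Real.log (1 + |t|) * (2 / Real.pi))) := by
          rw [hsq]; exact Real.exp_le_exp.2 hkey
      _ = Real.exp (2 * C1 + C2 + 2 * eulerConst + 1) *
          (Real.log x * Real.exp (pSum g x) * α ^ (-(2 / Real.pi))) * (1 + |t|) ^ (2 / Real.pi) := by
          generalize 2 * C1 + C2 + 2 * eulerConst + 1 = K
          rw [Real.exp_add, Real.exp_add, Real.exp_add, Real.exp_add, Real.exp_log hL,
            Real.rpow_def_of_pos hα0, Real.rpow_def_of_pos (by linarith : 0 < 1 + |t|)]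
          ring
      _ ≤ _ := by gcongr; linarith
  · have em : min 1 (|t| + α) = 1 := min_eq_left (by linarith)
    rw [em, Real.log_one, mul_zero, sub_zero] at hA
    have hkey : 2 * (primeSum g α t + eulerConst) ≤ (2 * C1 + C2 + 2 * eulerConst + 1) +
        (Real.log α * (-(4 / Real.pi)) + Real.log (1 + |t|) * (2 / Real.pi)) := by
      have e1 : Real.log α * (-(4 / Real.pi)) = 2 * (-(2 / Real.pi) * Real.log α) := by ring
      have e2 : Real.log (1 + |t|) * (2 / Real.pi) = 2 * (1 / Real.pi * Real.log (1 + |t|)) := by ring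
      linarith
    calc ‖DS g (pt α t)‖ ^ 2 ≤ Real.exp (primeSum g α t + eulerConst) ^ 2 := by gcongr
      _ ≤ Real.exp ((2 * C1 + C2 + 2 * eulerConst + 1) +
        (Real.log α * (-(4 / Real.pi)) + Real.log (1 + |t|) * (2 / Real.pi))) := by
          rw [hsq]; exact Real.exp_le_exp.2 hkey
      _ = Real.exp (2 * C1 + C2 + 2 * eulerConst + 1) *
          α ^ (-(4 / Real.pi)) * (1 + |t|) ^ (2 / Real.pi) := by
          generalize 2 * C1 + C2 + 2 * eulerConst + 1 = K
          rw [Real.exp_add, Real.exp_add, Real.rpow_def_of_pos hα0,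
            Real.rpow_def_of_pos (by linarith : 0 < 1 + |t|)]
          ring
      _ ≤ _ := by gcongr; linarith

/-- At the real point `1 + 1/log x` the series `G` has size at most `exp(∑_{p ≤ x} g(p)/p)`. -/
theorem DS_real_bound : ∃ C : ℝ, 0 < C ∧ ∀ g : ℕ →*₀ ℝ, (∀ n, |g n| ≤ 1) → ∀ x : ℝ, 3 ≤ x →
    ‖DS g (pt (1 / Real.log x) 0)‖ ≤ C * Real.exp (pSum g x) := by
  refine ⟨Real.exp (4 * cheb + eulerConst), Real.exp_pos _, ?_⟩
  intro g hg x hx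
  have hL1 := log_ge_one hx
  have hL : 0 < Real.log x := by linarith
  have hc := cheb_pos
  have h1 := norm_DS_le hg (one_div_pos.2 hL) 0
  have h2 := abs_tsum_sub_sum_le (one_div_pos.2 hL) (by linarith : 1 < x) g hg
  refine h1.trans ?_
  rw [← Real.exp_add]
  apply Real.exp_le_exp.2
  have e : primeSum g (1 / Real.log x) 0 =
      ∑' p : Nat.Primes, g p * (p : ℝ) ^ (-(1 + 1 / Real.log x)) := by
    simp [primeSum]
  rw [← e] at h2
  have h3 := (abs_le.1 h2).2
  have e1 : cheb * (1 + 1 / (1 / Real.log x)) / Real.log x +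
      1 / Real.log x * (cheb * (1 + Real.log x)) = 2 * cheb * (1 + 1 / Real.log x) := by
    field_simp; ring
  have h4 : 1 / Real.log x ≤ 1 := by rw [div_le_one hL]; exact hL1
  rw [e1] at h3
  have : pSum g x = ∑ p ∈ primesUpTo x, g p / p := rfl
  nlinarith

end LogHalasz

/-! ### Selberg’s formula -/

namespace LogHalasz
open ArithmeticFunction (vonMangoldt)

/-- Summing a Dirichlet convolution over `n ≤ N` by the first divisor. -/
theorem sum_dirichlet {M : Type*} [AddCommMonoid M] (H : ℕ → ℕ → M) (N : ℕ) :
    ∑ n ∈ Icc 1 N, ∑ q ∈ n.divisorsAntidiagonal, H q.1 q.2 =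
      ∑ d ∈ Icc 1 N, ∑ m ∈ Icc 1 (N / d), H d m := by
  rw [sum_sigma', sum_sigma']
  refine sum_bij' (fun a _ => ⟨a.2.1, a.2.2⟩) (fun b _ => ⟨b.1 * b.2, (b.1, b.2)⟩) ?_ ?_ ?_ ?_ ?_
  · rintro ⟨n, a, b⟩ h
    simp only [mem_sigma, mem_Icc, Nat.mem_divisorsAntidiagonal] at h ⊢
    obtain ⟨⟨h1, h2⟩, h3, h4⟩ := h
    have ha : 0 < a := Nat.pos_of_ne_zero (by rintro rfl; simp at h3; omega)
    have hb : 0 < b := Nat.pos_of_ne_zero (by rintro rfl; simp at h3; omega)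
    refine ⟨⟨ha, ?_⟩, hb, ?_⟩
    · nlinarith
    · rw [Nat.le_div_iff_mul_le ha]; nlinarith
  · rintro ⟨a, b⟩ h
    simp only [mem_sigma, mem_Icc, Nat.mem_divisorsAntidiagonal] at h ⊢
    obtain ⟨⟨h1, h2⟩, h3, h4⟩ := h
    rw [Nat.le_div_iff_mul_le h1] at h4
    have : 0 < a * b := Nat.mul_pos h1 h3
    refine ⟨⟨this, by nlinarith⟩, by simp, by omega⟩
  · rintro ⟨n, a, b⟩ h
    simp only [mem_sigma, mem_Icc, Nat.mem_divisorsAntidiagonal] at h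
    obtain ⟨-, rfl, -⟩ := h
    rfl
  · rintro ⟨a, b⟩ h
    rfl
  · rintro ⟨n, a, b⟩ h
    rfl

theorem sum_anti_fst {M : Type*} [AddCommMonoid M] (f : ℕ → M) (n : ℕ) :
    ∑ q ∈ n.divisorsAntidiagonal, f q.1 = ∑ d ∈ n.divisors, f d :=
  Nat.sum_divisorsAntidiagonal (fun d _ => f d)

theorem sum_anti_snd {M : Type*} [AddCommMonoid M] (f : ℕ → M) (n : ℕ) :
    ∑ q ∈ n.divisorsAntidiagonal, f q.2 = ∑ d ∈ n.divisors, f d :=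
  Nat.sum_divisorsAntidiagonal' (fun _ d => f d)

/-- Chebyshev’s function `ψ`, at integers. -/
noncomputable def Psi (N : ℕ) : ℝ := ∑ n ∈ Icc 1 N, vonMangoldt n

theorem Psi_nonneg (N : ℕ) : 0 ≤ Psi N := sum_nonneg fun _ _ => ArithmeticFunction.vonMangoldt_nonneg

theorem Psi_le (N : ℕ) : Psi N ≤ cheb * N := sum_vonMangoldt_le N

theorem sum_log_eq (N : ℕ) :
    ∑ n ∈ Icc 1 N, Real.log n = ∑ d ∈ Icc 1 N, vonMangoldt d * (N / d : ℕ) := by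
  have h := sum_dirichlet (fun d _ => vonMangoldt d) N
  simp only [sum_const, Nat.card_Icc, nsmul_eq_mul, Nat.add_sub_cancel] at h
  rw [show ∑ d ∈ Icc 1 N, vonMangoldt d * ((N / d : ℕ) : ℝ) = _ from
    sum_congr rfl fun d _ => mul_comm _ _, ← h]
  refine sum_congr rfl fun n _ => ?_
  rw [sum_anti_fst (fun d => vonMangoldt d), ArithmeticFunction.vonMangoldt_sum]

theorem sum_log_eq_Psi (N : ℕ) :
    ∑ n ∈ Icc 1 N, Real.log n = ∑ m ∈ Icc 1 N, Psi (N / m) := by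
  unfold Psi
  rw [← sum_dirichlet (fun _ d => vonMangoldt d) N]
  refine sum_congr rfl fun n _ => ?_
  rw [sum_anti_snd (fun d => vonMangoldt d), ArithmeticFunction.vonMangoldt_sum]

theorem log_succ_sub {n : ℕ} (hn : 1 ≤ n) : Real.log (n + 1) - Real.log n ≤ 1 / n ∧
    1 / (n + 1) ≤ Real.log (n + 1) - Real.log n := by
  have h0 : (0 : ℝ) < n := by exact_mod_cast hn
  rw [← Real.log_div (by positivity) (by positivity)]
  constructor
  · have := Real.log_le_sub_one_of_pos (show 0 < ((n : ℝ) + 1) / n by positivity)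
    refine this.trans (le_of_eq ?_)
    field_simp; ring
  · have := Real.one_sub_inv_le_log_of_pos (show 0 < ((n : ℝ) + 1) / n by positivity)
    refine le_trans (le_of_eq ?_) this
    field_simp; ring

theorem sum_log_bounds {N : ℕ} (hN : 1 ≤ N) :
    |∑ n ∈ Icc 1 N, Real.log n - (N * Real.log N - N)| ≤ 1 + Real.log N := by
  have key : N * Real.log N - N ≤ ∑ n ∈ Icc 1 N, Real.log n ∧
      ∑ n ∈ Icc 1 N, Real.log n ≤ N * Real.log N - N + 1 + Real.log N := by
    induction N, hN using Nat.le_induction with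
    | base => simp
    | succ n hn ih =>
      rw [sum_Icc_succ_top (by omega)]
      obtain ⟨a, b⟩ := log_succ_sub hn
      have h0 : (0 : ℝ) < n := by exact_mod_cast hn
      push_cast
      have a' : n * (Real.log (n + 1) - Real.log n) ≤ 1 := by
        have := mul_le_mul_of_nonneg_left a h0.le
        rwa [mul_one_div, div_self h0.ne'] at this
      have b' : 1 ≤ (n + 1) * (Real.log (n + 1) - Real.log n) := by
        have := mul_le_mul_of_nonneg_left b (by positivity : (0 : ℝ) ≤ n + 1)
        rwa [mul_one_div, div_self (by positivity)] at this
      constructor <;> nlinarith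
  have : 0 ≤ Real.log N := Real.log_natCast_nonneg N
  rw [abs_le]; constructor <;> linarith [key.1, key.2]

local notation "γ" => Real.eulerMascheroniConstant

theorem harmonic_approx {N : ℕ} (hN : 1 ≤ N) :
    |∑ n ∈ Icc 1 N, (1 : ℝ) / n - Real.log N - γ| ≤ 1 / N := by
  have h1 := Real.eulerMascheroniSeq_lt_eulerMascheroniConstant N
  have h2 := Real.eulerMascheroniConstant_lt_eulerMascheroniSeq' N
  rw [Real.eulerMascheroniSeq, harmonic_eq_sum_Icc] at h1
  rw [Real.eulerMascheroniSeq', if_neg (by omega), harmonic_eq_sum_Icc] at h2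
  push_cast at h1 h2
  simp only [one_div]
  have := (log_succ_sub hN).1
  rw [one_div] at this
  rw [abs_le]
  have h3 : 0 < (N : ℝ)⁻¹ := by positivity
  constructor <;> linarith

/-- Mertens’ first theorem, in the form `∑_{n ≤ N} Λ(n)/n = log N + O(1)`. -/
theorem mertens_first {N : ℕ} (hN : 1 ≤ N) :
    |∑ n ∈ Icc 1 N, vonMangoldt n / n - Real.log N| ≤ cheb + 3 := by
  have h0 : (0 : ℝ) < N := by exact_mod_cast hN
  have h1 := abs_le.1 (sum_log_bounds hN)
  have hl : Real.log N ≤ N - 1 := Real.log_le_sub_one_of_pos h0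
  have h2 : ∑ n ∈ Icc 1 N, Real.log n ≤ N * ∑ n ∈ Icc 1 N, vonMangoldt n / n := by
    rw [sum_log_eq, mul_sum]
    refine sum_le_sum fun d hd => ?_
    have : ((N / d : ℕ) : ℝ) ≤ N / d := Nat.cast_div_le
    calc _ ≤ vonMangoldt d * (N / d) :=
          mul_le_mul_of_nonneg_left this ArithmeticFunction.vonMangoldt_nonneg
      _ = _ := by ring
  have h3 : N * ∑ n ∈ Icc 1 N, vonMangoldt n / n ≤ ∑ n ∈ Icc 1 N, Real.log n + Psi N := by
    rw [sum_log_eq, mul_sum, Psi, ← sum_add_distrib]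
    refine sum_le_sum fun d hd => ?_
    have hd1 : 0 < d := (mem_Icc.1 hd).1
    have : (N : ℝ) / d ≤ (N / d : ℕ) + 1 := by
      rw [div_le_iff₀ (by exact_mod_cast hd1)]
      have := Nat.lt_div_mul_add hd1 (a := N)
      have : N ≤ (N / d + 1) * d := by nlinarith
      exact_mod_cast this
    calc _ = vonMangoldt d * (N / d) := by ring
      _ ≤ vonMangoldt d * ((N / d : ℕ) + 1) :=
        mul_le_mul_of_nonneg_left this ArithmeticFunction.vonMangoldt_nonneg
      _ = _ := by ring
  have h4 := Psi_le N
  have hc := cheb_pos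
  rw [abs_le]
  constructor
  · refine le_of_mul_le_mul_left ?_ h0
    nlinarith [h1.1]
  · refine le_of_mul_le_mul_left ?_ h0
    nlinarith [h1.2]

/-- The sums of `F(v) = ψ(v) - v + γ + 1` over `v = u/m` are of logarithmic size: the main terms of
`∑ ψ(u/m) = log ⌊u⌋!` and of `u ∑ 1/m` cancel, up to the constant `γ + 1`. -/
theorem inner_bound {u : ℝ} (hu : 1 ≤ u) :
    |∑ m ∈ Icc 1 ⌊u⌋₊, (Psi (⌊u⌋₊ / m) - u / m + (γ + 1))| ≤ 4 + 2 * Real.log u := by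
  set K := ⌊u⌋₊ with hK
  have hK1 : 1 ≤ K := Nat.le_floor (by simpa using hu)
  have hK1' : (1 : ℝ) ≤ K := by exact_mod_cast hK1
  have hKu : (K : ℝ) ≤ u := Nat.floor_le (by linarith)
  have hKu' : u < K + 1 := Nat.lt_floor_add_one u
  have hl : Real.log K ≤ Real.log u := Real.log_le_log (by linarith) hKu
  have hl0 : 0 ≤ Real.log K := Real.log_natCast_nonneg K
  have e : ∑ m ∈ Icc 1 K, (Psi (K / m) - u / m + (γ + 1)) =
      ∑ n ∈ Icc 1 K, Real.log n - u * ∑ n ∈ Icc 1 K, (1 : ℝ) / n + (γ + 1) * K := by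
    rw [sum_add_distrib, sum_sub_distrib, sum_log_eq_Psi, mul_sum]
    simp [div_eq_mul_inv, mul_comm]
    ring
  have h1 := sum_log_bounds hK1
  have h2 := harmonic_approx hK1
  have g1 := Real.one_half_lt_eulerMascheroniConstant
  have g2 := Real.eulerMascheroniConstant_lt_two_thirds
  rw [e]
  set A := ∑ n ∈ Icc 1 K, Real.log n
  set B := ∑ n ∈ Icc 1 K, (1 : ℝ) / n
  have e2 : A - u * B + (γ + 1) * K = (A - (K * Real.log K - K)) - u * (B - Real.log K - γ) +
      (K - u) * (Real.log K + γ) := by ring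
  rw [e2]
  have h3 : |u * (B - Real.log K - γ)| ≤ 2 := by
    rw [abs_mul, abs_of_pos (by linarith)]
    calc u * |B - Real.log K - γ| ≤ (2 * K) * (1 / K) := by gcongr; linarith
      _ = 2 := by field_simp
  have h4 : |(K - u) * (Real.log K + γ)| ≤ Real.log K + γ := by
    rw [abs_mul, abs_of_nonneg (by linarith : 0 ≤ Real.log K + γ)]
    have : |(K : ℝ) - u| ≤ 1 := by rw [abs_le]; constructor <;> linarith
    nlinarith
  rw [abs_le] at h1 h3 h4 ⊢
  constructor <;> linarith [h1.1, h1.2, h3.1, h3.2, h4.1, h4.2]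

theorem log_mul_le_sqrt {u : ℝ} (hu : 1 ≤ u) : Real.log u * (4 + 2 * Real.log u) ≤ 40 * √u := by
  have h1 := Real.log_le_rpow_div (by linarith : 0 ≤ u) (show (0 : ℝ) < 1 / 4 by norm_num)
  have h2 := Real.log_le_rpow_div (by linarith : 0 ≤ u) (show (0 : ℝ) < 1 / 2 by norm_num)
  have h3 : u ^ (1 / 4 : ℝ) * u ^ (1 / 4 : ℝ) = u ^ (1 / 2 : ℝ) := by
    rw [← Real.rpow_add (by linarith)]; norm_num
  rw [Real.sqrt_eq_rpow]
  have h0 := Real.log_nonneg hu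
  nlinarith [mul_le_mul h1 h1 h0 (by positivity)]

theorem sum_inv_sqrt_le (N : ℕ) : ∑ d ∈ Icc 1 N, 1 / √(d : ℝ) ≤ 2 * √(N : ℝ) := by
  induction N with
  | zero => simp
  | succ n ih =>
    rw [sum_Icc_succ_top (by omega)]
    push_cast
    have h1 : 0 < √((n : ℝ) + 1) := Real.sqrt_pos.2 (by positivity)
    have h2 : √((n : ℝ) + 1) ^ 2 = n + 1 := Real.sq_sqrt (by positivity)
    have h3 : √(n : ℝ) ^ 2 = n := Real.sq_sqrt (by positivity)
    have h4 := Real.sqrt_nonneg (n : ℝ)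
    have : 1 / √((n : ℝ) + 1) ≤ 2 * √((n : ℝ) + 1) - 2 * √(n : ℝ) := by
      rw [div_le_iff₀ h1]
      nlinarith [sq_nonneg (√((n : ℝ) + 1) - √(n : ℝ))]
    linarith

/-- The Tatuzawa–Iseki identity. -/
theorem tatuzawa {N : ℕ} (F : ℕ → ℝ) (hN : 1 ≤ N) :
    ∑ d ∈ Icc 1 N, (ArithmeticFunction.moebius d : ℝ) * (Real.log N - Real.log d) *
      ∑ m ∈ Icc 1 (N / d), F (d * m) =
    F 1 * Real.log N + ∑ n ∈ Icc 1 N, vonMangoldt n * F n := by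
  simp_rw [mul_sum]
  rw [← sum_dirichlet (fun d m => (ArithmeticFunction.moebius d : ℝ) *
    (Real.log N - Real.log d) * F (d * m)) N]
  have h1 : ∀ n ∈ Icc 1 N, ∑ q ∈ n.divisorsAntidiagonal,
      (ArithmeticFunction.moebius q.1 : ℝ) * (Real.log N - Real.log q.1) * F (q.1 * q.2) =
      (if n = 1 then F 1 * Real.log N else 0) + vonMangoldt n * F n := by
    intro n hn
    have hn1 : n ≠ 0 := by have := (mem_Icc.1 hn).1; omega
    have : ∀ q ∈ n.divisorsAntidiagonal, (ArithmeticFunction.moebius q.1 : ℝ) *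
        (Real.log N - Real.log q.1) * F (q.1 * q.2) =
        (ArithmeticFunction.moebius q.1 : ℝ) * (Real.log N * F n) -
        (ArithmeticFunction.moebius q.1 : ℝ) * Real.log q.1 * F n := by
      intro q hq
      rw [(Nat.mem_divisorsAntidiagonal.1 hq).1]; ring
    rw [sum_congr rfl this, sum_sub_distrib, ← sum_mul, ← sum_mul,
      sum_anti_fst (fun d => (ArithmeticFunction.moebius d : ℝ)),
      sum_anti_fst (fun d => (ArithmeticFunction.moebius d : ℝ) * Real.log d)]
    have h2 := ArithmeticFunction.sum_moebius_mul_log_eq (n := n)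
    simp only [ArithmeticFunction.log_apply] at h2
    rw [h2]
    have h3 : ∑ d ∈ n.divisors, (ArithmeticFunction.moebius d : ℝ) = if n = 1 then 1 else 0 := by
      have h4 := congrArg (fun f => f n) ArithmeticFunction.coe_zeta_mul_moebius
      simp only [ArithmeticFunction.coe_zeta_mul_apply, ArithmeticFunction.one_apply] at h4
      exact_mod_cast congrArg (Int.cast : ℤ → ℝ) h4
    rw [h3]
    split_ifs with h
    · subst h; ring
    · ring
  rw [sum_congr rfl h1, sum_add_distrib]
  simp [hN]

/-- Selberg's function `Λ₂ = Λ log + Λ * Λ`. -/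
noncomputable def lam2 (n : ℕ) : ℝ :=
  vonMangoldt n * Real.log n + ∑ q ∈ n.divisorsAntidiagonal, vonMangoldt q.1 * vonMangoldt q.2

theorem lam2_nonneg (n : ℕ) : 0 ≤ lam2 n :=
  add_nonneg (mul_nonneg ArithmeticFunction.vonMangoldt_nonneg (Real.log_natCast_nonneg n))
    (sum_nonneg fun _ _ => mul_nonneg ArithmeticFunction.vonMangoldt_nonneg
      ArithmeticFunction.vonMangoldt_nonneg)

theorem sum_vonMangoldt_mul_log_div (N : ℕ) :
    ∑ n ∈ Icc 1 N, vonMangoldt n * (Real.log N - Real.log n) ≤ cheb * N := by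
  induction N with
  | zero => simp
  | succ N ih =>
    rcases Nat.eq_zero_or_pos N with rfl | hN
    · simp; exact cheb_pos.le
    have h1 : ∑ n ∈ Icc 1 (N + 1), vonMangoldt n * (Real.log (N + 1 : ℕ) - Real.log n) =
        ∑ n ∈ Icc 1 N, vonMangoldt n * (Real.log N - Real.log n) +
          Psi N * (Real.log (N + 1) - Real.log N) := by
      rw [sum_Icc_succ_top (by omega), Psi, sum_mul, ← sum_add_distrib, sub_self, mul_zero, add_zero]
      refine sum_congr rfl fun n _ => ?_
      push_cast; ring
    have h0 : (0 : ℝ) < N := by exact_mod_cast hN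
    have h2 : Psi N * (Real.log (N + 1) - Real.log N) ≤ cheb := by
      calc _ ≤ (cheb * N) * (1 / N) := by
            refine mul_le_mul (Psi_le N) (log_succ_sub hN).1 ?_ (by have := cheb_pos; positivity)
            exact le_trans (by positivity) (log_succ_sub hN).2
        _ = cheb := by field_simp
    rw [h1]; push_cast; linarith

/-- Selberg’s formula, from the Tatuzawa–Iseki identity applied to `F(n) = ψ(N/n) - N/n + γ + 1`. -/
theorem selberg : ∃ C : ℝ, 0 < C ∧ ∀ N : ℕ, 1 ≤ N →
    |∑ n ∈ Icc 1 N, lam2 n - 2 * N * Real.log N| ≤ C * N := by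
  have hc := cheb_pos
  refine ⟨80 + 2 + (cheb + 3) + 2 * cheb + cheb, by linarith, ?_⟩
  intro N hN
  have h0 : (1 : ℝ) ≤ N := by exact_mod_cast hN
  have hT := tatuzawa (N := N) (fun n => Psi (N / n) - N / n + (γ + 1)) hN
  have hL : |∑ d ∈ Icc 1 N, (ArithmeticFunction.moebius d : ℝ) * (Real.log N - Real.log d) *
      ∑ m ∈ Icc 1 (N / d), (Psi (N / (d * m)) - N / (d * m : ℕ) + (γ + 1))| ≤ 80 * N := by
    refine (abs_sum_le_sum_abs _ _).trans ?_
    calc _ ≤ ∑ d ∈ Icc 1 N, 40 * √(N : ℝ) * (1 / √(d : ℝ)) := by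
          refine sum_le_sum fun d hd => ?_
          obtain ⟨hd1, hd2⟩ := mem_Icc.1 hd
          have hd0 : (0 : ℝ) < d := by exact_mod_cast hd1
          have hu : 1 ≤ (N : ℝ) / d := by rw [le_div_iff₀ hd0]; simpa using (by exact_mod_cast hd2)
          have hb := inner_bound hu
          rw [Nat.floor_div_natCast, Nat.floor_natCast] at hb
          have e : ∑ m ∈ Icc 1 (N / d), (Psi (N / (d * m)) - N / (d * m : ℕ) + (γ + 1)) =
              ∑ m ∈ Icc 1 (N / d), (Psi (N / d / m) - (N : ℝ) / d / m + (γ + 1)) := by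
            refine sum_congr rfl fun m _ => ?_
            rw [Nat.div_div_eq_div_mul, div_div]; push_cast; rfl
          rw [e, abs_mul, abs_mul]
          have hm : |(ArithmeticFunction.moebius d : ℝ)| ≤ 1 := by
            have := ArithmeticFunction.abs_moebius_le_one (n := d)
            exact_mod_cast this
          have hl : Real.log N - Real.log d = Real.log (N / d) := by
            rw [Real.log_div (by positivity) (by positivity)]
          rw [hl, abs_of_nonneg (Real.log_nonneg hu)]
          have hs := log_mul_le_sqrt hu
          have hlog := Real.log_nonneg hu
          rw [Real.sqrt_div (by positivity)] at hs
          calc _ ≤ 1 * Real.log (N / d) * (4 + 2 * Real.log (N / d)) := by gcongr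
            _ ≤ 40 * (√(N : ℝ) / √(d : ℝ)) := by linarith
            _ = _ := by ring
      _ = 40 * √(N : ℝ) * ∑ d ∈ Icc 1 N, (1 / √(d : ℝ)) := by rw [mul_sum]
      _ ≤ 40 * √(N : ℝ) * (2 * √(N : ℝ)) := by gcongr; exact sum_inv_sqrt_le N
      _ = 80 * (√(N : ℝ) * √(N : ℝ)) := by ring
      _ = 80 * N := by rw [Real.mul_self_sqrt (by positivity)]
  rw [hT] at hL
  have hM := mertens_first hN
  have hP := Psi_le N
  have hP0 := Psi_nonneg N
  have hlog : Real.log N ≤ N - 1 := Real.log_le_sub_one_of_pos (by linarith)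
  have hlog0 : 0 ≤ Real.log N := Real.log_natCast_nonneg N
  have hV := sum_vonMangoldt_mul_log_div N
  have hV0 : 0 ≤ ∑ n ∈ Icc 1 N, vonMangoldt n * (Real.log N - Real.log n) := by
    refine sum_nonneg fun n hn => mul_nonneg ArithmeticFunction.vonMangoldt_nonneg ?_
    obtain ⟨h1, h2⟩ := mem_Icc.1 hn
    exact sub_nonneg.2 (Real.log_le_log (by exact_mod_cast h1) (by exact_mod_cast h2))
  have eS : ∑ n ∈ Icc 1 N, lam2 n = Psi N * Real.log N -
      ∑ n ∈ Icc 1 N, vonMangoldt n * (Real.log N - Real.log n) +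
      ∑ n ∈ Icc 1 N, vonMangoldt n * Psi (N / n) := by
    unfold lam2
    rw [sum_add_distrib, sum_dirichlet (fun d m => vonMangoldt d * vonMangoldt m)]
    simp only [Psi, mul_sub, sum_sub_distrib, sum_mul, mul_sum]
    ring
  have eT : (fun n : ℕ => Psi (N / n) - (N : ℝ) / n + (γ + 1)) 1 * Real.log N +
      ∑ n ∈ Icc 1 N, vonMangoldt n * (fun n : ℕ => Psi (N / n) - (N : ℝ) / n + (γ + 1)) n =
      Psi N * Real.log N + ∑ n ∈ Icc 1 N, vonMangoldt n * Psi (N / n) - N * Real.log N -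
      N * ∑ n ∈ Icc 1 N, vonMangoldt n / n + (γ + 1) * (Real.log N + Psi N) := by
    have e1 : ∑ n ∈ Icc 1 N, vonMangoldt n * (fun n : ℕ => Psi (N / n) - (N : ℝ) / n + (γ + 1)) n =
      ∑ n ∈ Icc 1 N, vonMangoldt n * Psi (N / n) - N * ∑ n ∈ Icc 1 N, vonMangoldt n / n +
        (γ + 1) * Psi N := by
      rw [Psi, mul_sum, mul_sum, ← sum_sub_distrib, ← sum_add_distrib]
      refine sum_congr rfl fun n _ => ?_
      ring
    rw [e1]; simp; ring
  rw [eT] at hL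
  have g1 := Real.one_half_lt_eulerMascheroniConstant
  have g2 := Real.eulerMascheroniConstant_lt_two_thirds
  rw [eS]
  have hG : (γ + 1) * (Real.log N + Psi N) ≤ 2 * (N + cheb * N) := by
    refine mul_le_mul (by linarith) (by linarith) (by positivity) (by norm_num)
  have hG0 : 0 ≤ (γ + 1) * (Real.log N + Psi N) := mul_nonneg (by linarith) (by linarith)
  have hM2 : |N * ∑ n ∈ Icc 1 N, vonMangoldt n / n - N * Real.log N| ≤ N * (cheb + 3) := by
    rw [← mul_sub, abs_mul, abs_of_pos (by linarith)]
    gcongr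
  rw [abs_le] at hL hM2 ⊢
  constructor <;> nlinarith [hL.1, hL.2, hM2.1, hM2.2]

end LogHalasz

/-! ### `Λ₂` in short intervals -/

namespace LogHalasz
open ArithmeticFunction (vonMangoldt)

theorem exp_sub_one_le {t : ℝ} (h0 : 0 ≤ t) (h1 : t ≤ 1) : Real.exp t - 1 ≤ 2 * t := by
  have := Real.abs_exp_sub_one_le (x := t) (by rw [abs_of_nonneg h0]; exact h1)
  rw [abs_of_nonneg h0] at this
  exact (le_abs_self _).trans this

/-- Short intervals: `Λ₂(d)/d` has mass `O(1)` on `[D, D e^{1/L}]` as soon as `log D ≤ L`. -/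
theorem lam2_short : ∃ C : ℝ, 0 < C ∧ ∀ L D : ℝ, 1 ≤ L → 0 < D → Real.log D ≤ L →
    ∀ s : Finset ℕ, (∀ d ∈ s, 1 ≤ d ∧ D ≤ d ∧ (d : ℝ) ≤ D * Real.exp (1 / L)) →
    ∑ d ∈ s, lam2 d / d ≤ C := by
  obtain ⟨C, hC, hS⟩ := selberg
  have hK : 0 ≤ ∑ d ∈ Icc 1 2, lam2 d / d :=
    sum_nonneg fun d _ => div_nonneg (lam2_nonneg d) (by positivity)
  refine ⟨16 + 4 * C + ∑ d ∈ Icc 1 2, lam2 d / d, by linarith, ?_⟩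
  intro L D hL hD hDL s hs
  have ht0 : 0 ≤ 1 / L := by positivity
  have ht1 : 1 / L ≤ 1 := by rw [div_le_one (by linarith)]; exact hL
  have he3 : Real.exp (1 / L) ≤ 3 := by linarith [exp_sub_one_le ht0 ht1]
  rcases lt_or_ge D 1 with hD1 | hD1
  · have hsub : s ⊆ Icc 1 2 := by
      intro d hd
      obtain ⟨h1, -, h3⟩ := hs d hd
      rw [mem_Icc]
      refine ⟨h1, ?_⟩
      have : (d : ℝ) < 3 := by nlinarith [Real.exp_pos (1 / L)]
      have : d < 3 := by exact_mod_cast this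
      omega
    have := sum_le_sum_of_subset_of_nonneg hsub (f := fun d : ℕ => lam2 d / d)
      fun d _ _ => div_nonneg (lam2_nonneg d) (by positivity)
    linarith
  · set M1 := ⌈D⌉₊ - 1 with hM1
    set M2 := ⌊D * Real.exp (1 / L)⌋₊ with hM2
    have hc1 : 1 ≤ ⌈D⌉₊ := Nat.one_le_ceil_iff.2 hD
    have hM1D : (M1 : ℝ) < D := by
      have : M1 < ⌈D⌉₊ := by omega
      exact Nat.lt_ceil.1 this
    have hM1D' : D ≤ M1 + 1 := by
      have : D ≤ ⌈D⌉₊ := Nat.le_ceil D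
      have e : ((M1 + 1 : ℕ) : ℝ) = ⌈D⌉₊ := by rw [hM1]; congr 1; omega
      push_cast at e; linarith
    have hM2D : (M2 : ℝ) ≤ D * Real.exp (1 / L) := Nat.floor_le (by positivity)
    have hexp1 : 1 ≤ Real.exp (1 / L) := Real.one_le_exp ht0
    have hM2D' : D - 1 < M2 := by
      have := Nat.lt_floor_add_one (D * Real.exp (1 / L))
      nlinarith
    have hM21 : 1 ≤ M2 := Nat.le_floor (by push_cast; nlinarith)
    have hM21' : (1 : ℝ) ≤ M2 := by exact_mod_cast hM21
    have hM12 : M1 ≤ M2 := by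
      rw [hM2]; apply Nat.le_floor; nlinarith
    have hM12' : (M1 : ℝ) ≤ M2 := by exact_mod_cast hM12
    have hsub : s ⊆ Ioc M1 M2 := by
      intro d hd
      obtain ⟨h1, h2, h3⟩ := hs d hd
      rw [mem_Ioc]
      refine ⟨?_, Nat.le_floor h3⟩
      have : ⌈D⌉₊ ≤ d := Nat.ceil_le.2 h2
      omega
    have h1 : ∑ d ∈ s, lam2 d / d ≤ (∑ d ∈ Ioc M1 M2, lam2 d) / D := by
      rw [sum_div]
      calc _ ≤ ∑ d ∈ s, lam2 d / D := by
            refine sum_le_sum fun d hd => ?_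
            exact div_le_div_of_nonneg_left (lam2_nonneg d) hD (hs d hd).2.1
        _ ≤ _ := sum_le_sum_of_subset_of_nonneg hsub fun d _ _ => div_nonneg (lam2_nonneg d) hD.le
    have h2 : ∑ d ∈ Ioc M1 M2, lam2 d = ∑ d ∈ Icc 1 M2, lam2 d - ∑ d ∈ Icc 1 M1, lam2 d := by
      rw [eq_sub_iff_add_eq, add_comm]
      have : ∀ k, Icc 1 k = Ioc 0 k := fun k => by ext; simp [Nat.succ_le_iff]
      rw [this, this, sum_Ioc_consecutive _ (Nat.zero_le _) hM12]
    have hS1 : |∑ n ∈ Icc 1 M1, lam2 n - 2 * M1 * Real.log M1| ≤ C * M1 := by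
      rcases Nat.eq_zero_or_pos M1 with h | h
      · rw [h]; simp
      · exact hS M1 h
    have hS2 := hS M2 hM21
    have hdiff : (M2 : ℝ) - M1 ≤ 2 * D / L + 1 := by
      have := exp_sub_one_le ht0 ht1
      have e : 2 * D / L = D * (2 * (1 / L)) := by ring
      rw [e]; nlinarith
    have hlogM2 : Real.log M2 ≤ Real.log D + 1 / L := by
      have := Real.log_le_log (by linarith) hM2D
      rwa [Real.log_mul hD.ne' (Real.exp_pos _).ne', Real.log_exp] at this
    have hlogM20 : 0 ≤ Real.log M2 := Real.log_natCast_nonneg M2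
    have hlogD : Real.log D ≤ D - 1 := Real.log_le_sub_one_of_pos hD
    have hM1log : M1 * (Real.log M2 - Real.log M1) ≤ M2 - M1 := by
      rcases Nat.eq_zero_or_pos M1 with h | h
      · rw [h]; simp
      · have h0 : (0 : ℝ) < M1 := by exact_mod_cast h
        have := Real.log_le_sub_one_of_pos (show 0 < (M2 : ℝ) / M1 by positivity)
        rw [Real.log_div (by positivity) (by positivity)] at this
        have := mul_le_mul_of_nonneg_left this h0.le
        rwa [mul_sub (M1 : ℝ) (M2 / M1 : ℝ), mul_div_cancel₀ _ h0.ne', mul_one] at this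
    have h2DL : 2 * D / L ≤ 2 * D := div_le_self (by positivity) hL
    have hkey : (M2 - M1 : ℝ) * Real.log M2 ≤ 5 * D := by
      calc (M2 - M1 : ℝ) * Real.log M2 ≤ (2 * D / L + 1) * Real.log M2 := by gcongr
        _ = 2 * D / L * Real.log M2 + Real.log M2 := by ring
        _ ≤ 2 * D / L * (2 * L) + D := by gcongr <;> linarith
        _ = 5 * D := by field_simp; ring
    have hM2D3 : (M2 : ℝ) ≤ 3 * D := by nlinarith
    have hfin : ∑ d ∈ Ioc M1 M2, lam2 d ≤ (16 + 4 * C) * D := by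
      rw [h2]
      have a1 := (abs_le.1 hS1).1
      have a2 := (abs_le.1 hS2).2
      have a3 : C * M1 + C * M2 ≤ 4 * C * D := by nlinarith
      nlinarith
    calc _ ≤ _ := h1
      _ ≤ 16 + 4 * C := by rw [div_le_iff₀ hD]; exact hfin
      _ ≤ _ := by linarith

theorem sum_lam2_le : ∃ C : ℝ, 0 < C ∧ ∀ x : ℝ, 3 ≤ x →
    ∑ d ∈ Icc 1 ⌊x⌋₊, lam2 d ≤ C * x * Real.log x ∧
    ∑ d ∈ Icc 1 ⌊x⌋₊, lam2 d / d ≤ C * Real.log x ^ 2 := by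
  obtain ⟨C, hC, hS⟩ := selberg
  have hc := cheb_pos
  refine ⟨C + 2 + 2 * cheb + 4 * cheb ^ 2, by positivity, ?_⟩
  intro x hx
  have hL := log_ge_one hx
  set N := ⌊x⌋₊ with hN
  have hN1 : 1 ≤ N := Nat.le_floor (by push_cast; linarith)
  have hN1' : (1 : ℝ) ≤ N := by exact_mod_cast hN1
  have hNx : (N : ℝ) ≤ x := Nat.floor_le (by linarith)
  have hlog : Real.log N ≤ Real.log x := Real.log_le_log (by linarith) hNx
  have hlog0 : 0 ≤ Real.log N := Real.log_natCast_nonneg N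
  have hx0 : 0 < x := by linarith
  constructor
  · have h1 := (abs_le.1 (hS N hN1)).2
    calc ∑ d ∈ Icc 1 N, lam2 d ≤ 2 * N * Real.log N + C * N := by linarith
      _ ≤ 2 * x * Real.log x + C * x * Real.log x := by
        have : C * N ≤ C * x * Real.log x := by
          calc C * N ≤ C * x := by gcongr
            _ ≤ C * x * Real.log x := le_mul_of_one_le_right (by positivity) hL
        have : 2 * N * Real.log N ≤ 2 * x * Real.log x := by gcongr
        linarith
      _ ≤ _ := by
        have : 0 ≤ (2 * cheb + 4 * cheb ^ 2) * x * Real.log x := by positivity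
        linarith
  · have hV := sum_vonMangoldt_div_le (by linarith : 1 ≤ x)
    rw [← hN] at hV
    set V := ∑ i ∈ Icc 1 N, vonMangoldt i / i with hVd
    have hV0 : 0 ≤ V := sum_nonneg fun i _ =>
      div_nonneg ArithmeticFunction.vonMangoldt_nonneg (by positivity)
    have hV2 : V ≤ 2 * cheb * Real.log x := by nlinarith
    have h1 : ∑ d ∈ Icc 1 N, lam2 d / d ≤ V * Real.log x + V * V := by
      unfold lam2
      simp_rw [add_div]
      rw [sum_add_distrib]
      refine add_le_add ?_ ?_
      · rw [hVd, sum_mul]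
        refine sum_le_sum fun d hd => ?_
        obtain ⟨hd1, hd2⟩ := mem_Icc.1 hd
        have hd0 : (0 : ℝ) < d := by exact_mod_cast hd1
        have hd3 : (d : ℝ) ≤ N := by exact_mod_cast hd2
        have hl : Real.log d ≤ Real.log x := Real.log_le_log hd0 (by linarith)
        rw [mul_div_right_comm]
        exact mul_le_mul_of_nonneg_left hl
          (div_nonneg ArithmeticFunction.vonMangoldt_nonneg (by positivity))
      · have e : ∀ n ∈ Icc 1 N, (∑ q ∈ n.divisorsAntidiagonal, vonMangoldt q.1 * vonMangoldt q.2) / n =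
            ∑ q ∈ n.divisorsAntidiagonal, vonMangoldt q.1 / q.1 * (vonMangoldt q.2 / q.2) := by
          intro n hn
          rw [sum_div]
          refine sum_congr rfl fun q hq => ?_
          rw [← (Nat.mem_divisorsAntidiagonal.1 hq).1]
          push_cast
          rw [mul_div_mul_comm]
        rw [sum_congr rfl e, sum_dirichlet (fun a b => vonMangoldt a / a * (vonMangoldt b / b)), hVd,
          sum_mul]
        refine sum_le_sum fun d hd => ?_
        rw [← mul_sum]
        refine mul_le_mul_of_nonneg_left ?_
          (div_nonneg ArithmeticFunction.vonMangoldt_nonneg (by positivity))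
        refine sum_le_sum_of_subset_of_nonneg ?_ fun i _ _ =>
          div_nonneg ArithmeticFunction.vonMangoldt_nonneg (by positivity)
        exact Icc_subset_Icc_right (Nat.div_le_self _ _)
    have h2 : V * V ≤ (2 * cheb * Real.log x) * (2 * cheb * Real.log x) :=
      mul_le_mul hV2 hV2 hV0 (by positivity)
    have h3 : V * Real.log x ≤ 2 * cheb * Real.log x * Real.log x := by gcongr
    have h4 : 0 ≤ (C + 2) * Real.log x ^ 2 := by positivity
    nlinarith

end LogHalasz

/-! ### The kernel `k` and smoothed sums -/

namespace LogHalasz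
open ArithmeticFunction (vonMangoldt)

/-- The numerator `⌊v⌋ + {v}²` of the kernel `k`. -/
noncomputable def qf (v : ℝ) : ℝ := ⌊v⌋ + Int.fract v ^ 2

theorem qf_diff {v w : ℝ} (h : v ≤ w) : 0 ≤ qf w - qf v ∧ qf w - qf v ≤ 2 * (w - v) := by
  have hm : ⌊v⌋ ≤ ⌊w⌋ := Int.floor_le_floor h
  have ev : v = ⌊v⌋ + Int.fract v := (Int.floor_add_fract v).symm
  have ew : w = ⌊w⌋ + Int.fract w := (Int.floor_add_fract w).symm
  have a0 := Int.fract_nonneg v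
  have a1 := (Int.fract_lt_one v).le
  have b0 := Int.fract_nonneg w
  have b1 := (Int.fract_lt_one w).le
  unfold qf
  rcases hm.lt_or_eq with hlt | heq
  · have hlt' : (⌊v⌋ : ℝ) + 1 ≤ ⌊w⌋ := by exact_mod_cast hlt
    constructor <;> nlinarith
  · rw [heq] at ev ⊢
    have : Int.fract v ≤ Int.fract w := by linarith
    constructor <;> nlinarith

theorem qf_le (v : ℝ) : qf v ≤ v := by
  have ev : v = ⌊v⌋ + Int.fract v := (Int.floor_add_fract v).symm
  have a0 := Int.fract_nonneg v
  have a1 := (Int.fract_lt_one v).le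
  unfold qf
  nlinarith

theorem qf_nonneg {v : ℝ} (h : 0 ≤ v) : 0 ≤ qf v := by
  have : (0 : ℤ) ≤ ⌊v⌋ := Int.floor_nonneg.2 h
  have : (0 : ℝ) ≤ ⌊v⌋ := by exact_mod_cast this
  unfold qf; positivity

/-- The kernel `k(v) = 1 - (2/v²) ∑_{n ≤ v} (v - n)` for `v ≥ 1`, extended by zero. -/
noncomputable def kf (v : ℝ) : ℝ := if v < 1 then 0 else qf v / v ^ 2

theorem kf_of_lt {v : ℝ} (h : v < 1) : kf v = 0 := if_pos h

theorem kf_of_ge {v : ℝ} (h : 1 ≤ v) : kf v = qf v / v ^ 2 := if_neg (not_lt.2 h)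

theorem kf_nonneg (v : ℝ) : 0 ≤ kf v := by
  unfold kf
  split_ifs with h
  · rfl
  · exact div_nonneg (qf_nonneg (by linarith)) (by positivity)

theorem kf_le {v : ℝ} (h : 0 < v) : kf v ≤ 1 / v := by
  unfold kf
  split_ifs with h1
  · positivity
  · rw [div_le_div_iff₀ (by positivity) h]
    have := qf_le v
    nlinarith

theorem kf_lip {v w : ℝ} (h1 : 1 ≤ v) (h : v ≤ w) : |kf w - kf v| ≤ 4 * (w - v) / v ^ 2 := by
  rw [kf_of_ge h1, kf_of_ge (h1.trans h)]
  obtain ⟨d0, d1⟩ := qf_diff h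
  have q0 := qf_nonneg (by linarith : 0 ≤ v)
  have q1 := qf_le v
  have hv : 0 < v := by linarith
  have hw : 0 < w := by linarith
  have e : qf w / w ^ 2 - qf v / v ^ 2 = (qf w - qf v) / w ^ 2 - qf v * (1 / v ^ 2 - 1 / w ^ 2) := by
    field_simp; ring
  have hA0 : 0 ≤ (qf w - qf v) / w ^ 2 := by positivity
  have hA : (qf w - qf v) / w ^ 2 ≤ 2 * (w - v) / v ^ 2 := by
    have : 0 ≤ w - v := by linarith
    gcongr
  have hB0 : 0 ≤ 1 / v ^ 2 - 1 / w ^ 2 := by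
    rw [sub_nonneg]; gcongr
  have hB : qf v * (1 / v ^ 2 - 1 / w ^ 2) ≤ 2 * (w - v) / v ^ 2 := by
    calc qf v * (1 / v ^ 2 - 1 / w ^ 2) ≤ v * (1 / v ^ 2 - 1 / w ^ 2) := by gcongr
      _ = (w - v) * (v * (w + v) / w ^ 2) / v ^ 2 := by field_simp; ring
      _ ≤ (w - v) * 2 / v ^ 2 := by
        have : 0 ≤ w - v := by linarith
        gcongr
        rw [div_le_iff₀ (by positivity)]
        nlinarith
      _ = _ := by ring
  have hB1 : 0 ≤ qf v * (1 / v ^ 2 - 1 / w ^ 2) := mul_nonneg q0 hB0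
  have e2 : 4 * (w - v) / v ^ 2 = 2 * (2 * (w - v) / v ^ 2) := by ring
  rw [e, abs_le, e2]
  constructor <;> linarith

theorem measurable_kf : Measurable kf := by
  unfold kf qf
  refine Measurable.ite measurableSet_Iio measurable_const ?_
  refine Measurable.div ?_ (by fun_prop)
  refine Measurable.add ?_ (measurable_fract.pow_const 2)
  exact (measurable_from_top (f := fun n : ℤ => (n : ℝ))).comp Int.measurable_floor

/-- `∑_{n ≤ u} c(n) k(u/n)`. -/
noncomputable def KS (c : ℕ → ℝ) (u : ℝ) : ℝ := ∑ n ∈ Icc 1 ⌊u⌋₊, c n * kf (u / n)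

theorem KS_eq_of_le (c : ℕ → ℝ) {u : ℝ} {M : ℕ} (h : ⌊u⌋₊ ≤ M) :
    KS c u = ∑ n ∈ Icc 1 M, c n * kf (u / n) := by
  unfold KS
  refine sum_subset (Icc_subset_Icc_right h) ?_
  intro n hn hn'
  have h1 := (mem_Icc.1 hn).1
  have h2 : ⌊u⌋₊ < n := by
    by_contra hc
    exact hn' (mem_Icc.2 ⟨h1, by omega⟩)
  have h0 : (0 : ℝ) < n := by exact_mod_cast h1
  rw [kf_of_lt, mul_zero]
  rw [div_lt_one h0]
  exact (Nat.floor_lt' (by omega)).1 h2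

theorem measurable_KS (c : ℕ → ℝ) : Measurable (KS c) := by
  refine measurable_of_tendsto_metrizable (f := fun (M : ℕ) u => ∑ n ∈ Icc 1 M, c n * kf (u / n)) ?_ ?_
  · intro M
    refine Finset.measurable_fun_sum _ fun n _ => ?_
    exact (measurable_kf.comp (measurable_id.div_const _)).const_mul _
  · rw [tendsto_pi_nhds]
    intro u
    refine tendsto_const_nhds.congr' ?_
    filter_upwards [Filter.eventually_ge_atTop ⌊u⌋₊] with M hM
    exact KS_eq_of_le c hM

/-- Bounding a kernel sum termwise with `k(u/n) ≤ n/u`. -/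
theorem abs_KS_le {c : ℕ → ℝ} {w : ℕ → ℝ} {u : ℝ} (hu : 1 ≤ u)
    (hc : ∀ n ∈ Icc 1 ⌊u⌋₊, |c n| * n ≤ w n) : |KS c u| ≤ (∑ n ∈ Icc 1 ⌊u⌋₊, w n) / u := by
  unfold KS
  refine (abs_sum_le_sum_abs _ _).trans ?_
  rw [sum_div]
  refine sum_le_sum fun n hn => ?_
  have h1 := (mem_Icc.1 hn).1
  have h0 : (0 : ℝ) < n := by exact_mod_cast h1
  have hu0 : 0 < u := by linarith
  rw [abs_mul, abs_of_nonneg (kf_nonneg _)]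
  calc |c n| * kf (u / n) ≤ |c n| * (1 / (u / n)) := by
        gcongr; exact kf_le (by positivity)
    _ = |c n| * n / u := by field_simp
    _ ≤ _ := by gcongr; exact hc n hn

section T
variable {g : ℕ → ℝ} (hg : ∀ n, |g n| ≤ 1)

/-- `T(u) = ∑ g(n)/n · k(u/n)`, the smoothed logarithmic sum. -/
noncomputable def Tf (g : ℕ → ℝ) (u : ℝ) : ℝ := KS (fun n => g n / n) u

/-- `N(u) = ∑ g(n) log n / n · k(u/n)`. -/
noncomputable def Nf (g : ℕ → ℝ) (u : ℝ) : ℝ := KS (fun n => g n * Real.log n / n) u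

/-- `N₂(u) = ∑ g(n) log² n / n · k(u/n)`. -/
noncomputable def N2f (g : ℕ → ℝ) (u : ℝ) : ℝ := KS (fun n => g n * Real.log n ^ 2 / n) u

theorem abs_Tf_le (hg : ∀ n, |g n| ≤ 1) {u : ℝ} (hu : 1 ≤ u) : |Tf g u| ≤ 1 := by
  refine (abs_KS_le hu (w := fun _ => 1) ?_).trans ?_
  · intro n hn
    have h0 : (0 : ℝ) < n := by exact_mod_cast (mem_Icc.1 hn).1
    rw [abs_div, abs_of_pos h0, div_mul_cancel₀ _ h0.ne']
    exact hg n
  · rw [div_le_one (by linarith)]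
    simpa using Nat.floor_le (by linarith : 0 ≤ u)

theorem sum_log_div_le {u : ℝ} (hu : 1 ≤ u) :
    ∑ n ∈ Icc 1 ⌊u⌋₊, (Real.log u - Real.log n) ≤ 2 * u := by
  set K := ⌊u⌋₊ with hK
  have hK1 : 1 ≤ K := Nat.le_floor (by simpa using hu)
  have hK1' : (1 : ℝ) ≤ K := by exact_mod_cast hK1
  have hKu : (K : ℝ) ≤ u := Nat.floor_le (by linarith)
  have hKu' : u < K + 1 := Nat.lt_floor_add_one u
  have h1 : K * Real.log K - K ≤ ∑ n ∈ Icc 1 K, Real.log n := by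
    have : ∀ N : ℕ, N * Real.log N - N ≤ ∑ n ∈ Icc 1 N, Real.log n := by
      intro N
      induction N with
      | zero => simp
      | succ n ih =>
        rcases Nat.eq_zero_or_pos n with rfl | hn
        · simp
        rw [sum_Icc_succ_top (by omega)]
        obtain ⟨a, b⟩ := log_succ_sub hn
        have h0 : (0 : ℝ) < n := by exact_mod_cast hn
        push_cast
        have a' : n * (Real.log (n + 1) - Real.log n) ≤ 1 := by
          have := mul_le_mul_of_nonneg_left a h0.le
          rwa [mul_one_div, div_self h0.ne'] at this
        nlinarith
    exact this K
  have h2 : K * (Real.log u - Real.log K) ≤ u - K := by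
    rw [← Real.log_div (by positivity) (by positivity)]
    have := Real.log_le_sub_one_of_pos (show 0 < u / K by positivity)
    have := mul_le_mul_of_nonneg_left this (by linarith : (0 : ℝ) ≤ K)
    rwa [mul_sub (K : ℝ) (u / K), mul_div_cancel₀ _ (by positivity), mul_one] at this
  rw [sum_sub_distrib]
  simp only [sum_const, Nat.card_Icc, nsmul_eq_mul, Nat.add_sub_cancel]
  linarith

/-- Multiplying `T` by `log u` amounts to inserting `log n`, as `∑_{n ≤ u} log (u/n) = O(u)`. -/
theorem log_mul_Tf_sub_Nf (hg : ∀ n, |g n| ≤ 1) {u : ℝ} (hu : 1 ≤ u) :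
    |Real.log u * Tf g u - Nf g u| ≤ 2 := by
  have e : Real.log u * Tf g u - Nf g u =
      KS (fun n => g n * (Real.log u - Real.log n) / n) u := by
    unfold Tf Nf KS
    rw [mul_sum, ← sum_sub_distrib]
    exact sum_congr rfl fun n _ => by ring
  rw [e]
  refine (abs_KS_le hu (w := fun n => Real.log u - Real.log n) ?_).trans ?_
  · intro n hn
    have h0 : (0 : ℝ) < n := by exact_mod_cast (mem_Icc.1 hn).1
    have hnu : (n : ℝ) ≤ u := (Nat.le_floor_iff (by linarith)).1 (mem_Icc.1 hn).2
    have hl : 0 ≤ Real.log u - Real.log n := sub_nonneg.2 (Real.log_le_log h0 hnu)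
    rw [abs_div, abs_of_pos h0, div_mul_cancel₀ _ h0.ne', abs_mul, abs_of_nonneg hl]
    exact mul_le_of_le_one_left hl (hg n)
  · rw [div_le_iff₀ (by linarith)]
    exact sum_log_div_le hu

theorem log_sq_mul_Tf_sub_N2f (hg : ∀ n, |g n| ≤ 1) {u : ℝ} (hu : 1 ≤ u) :
    |Real.log u ^ 2 * Tf g u - N2f g u| ≤ 4 * Real.log u := by
  have e : Real.log u ^ 2 * Tf g u - N2f g u =
      KS (fun n => g n * (Real.log u ^ 2 - Real.log n ^ 2) / n) u := by
    unfold Tf N2f KS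
    rw [mul_sum, ← sum_sub_distrib]
    exact sum_congr rfl fun n _ => by ring
  have hlu := Real.log_nonneg hu
  rw [e]
  refine (abs_KS_le hu (w := fun n => 2 * Real.log u * (Real.log u - Real.log n)) ?_).trans ?_
  · intro n hn
    have h0 : (0 : ℝ) < n := by exact_mod_cast (mem_Icc.1 hn).1
    have hnu : (n : ℝ) ≤ u := (Nat.le_floor_iff (by linarith)).1 (mem_Icc.1 hn).2
    have hl : 0 ≤ Real.log u - Real.log n := sub_nonneg.2 (Real.log_le_log h0 hnu)
    have hn0 := Real.log_natCast_nonneg n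
    have hl2 : 0 ≤ Real.log u ^ 2 - Real.log n ^ 2 := by nlinarith
    rw [abs_div, abs_of_pos h0, div_mul_cancel₀ _ h0.ne', abs_mul, abs_of_nonneg hl2]
    refine (mul_le_of_le_one_left hl2 (hg n)).trans ?_
    nlinarith
  · rw [div_le_iff₀ (by linarith), ← mul_sum]
    have := sum_log_div_le hu
    nlinarith

/-- `T(e^ρ)` is Lipschitz in `ρ`, up to the jumps of size `1/u` from the discontinuity of `k` at
`1`. -/
theorem Tf_lip (hg : ∀ n, |g n| ≤ 1) {u r : ℝ} (hu : 1 ≤ u) (hr0 : 0 ≤ r) (hr1 : r ≤ 1) :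
    |Tf g (u * Real.exp r) - Tf g u| ≤ 9 * r + 1 / u := by
  set w := u * Real.exp r with hw
  have hu0 : 0 < u := by linarith
  have hexp : 1 ≤ Real.exp r := Real.one_le_exp hr0
  have huw : u ≤ w := by rw [hw]; nlinarith
  have hw0 : 0 < w := by linarith
  have hfl : ⌊u⌋₊ ≤ ⌊w⌋₊ := Nat.floor_le_floor huw
  have hIc : ∀ k, Icc 1 k = Ioc 0 k := fun k => by ext; simp [Nat.succ_le_iff]
  have e : Tf g w - Tf g u = ∑ n ∈ Icc 1 ⌊u⌋₊, g n / n * (kf (w / n) - kf (u / n)) +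
      ∑ n ∈ Ioc ⌊u⌋₊ ⌊w⌋₊, g n / n * kf (w / n) := by
    unfold Tf KS
    simp only [mul_sub, sum_sub_distrib, hIc]
    rw [← sum_Ioc_consecutive _ (Nat.zero_le _) hfl]
    ring
  have hA : |∑ n ∈ Icc 1 ⌊u⌋₊, g n / n * (kf (w / n) - kf (u / n))| ≤ 8 * r := by
    refine (abs_sum_le_sum_abs _ _).trans ?_
    calc _ ≤ ∑ n ∈ Icc 1 ⌊u⌋₊, 4 * (w - u) / u ^ 2 := by
          refine sum_le_sum fun n hn => ?_
          have h0 : (0 : ℝ) < n := by exact_mod_cast (mem_Icc.1 hn).1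
          have hnu : (n : ℝ) ≤ u := (Nat.le_floor_iff (by linarith)).1 (mem_Icc.1 hn).2
          have := kf_lip (v := u / n) (w := w / n) (by rwa [le_div_iff₀ h0, one_mul]) (by gcongr)
          rw [abs_mul, abs_div, abs_of_pos h0]
          calc |g n| / n * |kf (w / n) - kf (u / n)| ≤ 1 / n * (4 * (w / n - u / n) / (u / n) ^ 2) := by
                gcongr; exact hg n
            _ = _ := by field_simp
      _ = ⌊u⌋₊ * (4 * (w - u) / u ^ 2) := by simp
      _ ≤ u * (4 * (w - u) / u ^ 2) := by
          have : 0 ≤ w - u := by linarith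
          gcongr; exact Nat.floor_le hu0.le
      _ = 4 * (Real.exp r - 1) := by rw [hw]; field_simp
      _ ≤ _ := by linarith [exp_sub_one_le hr0 hr1]
  have hB : |∑ n ∈ Ioc ⌊u⌋₊ ⌊w⌋₊, g n / n * kf (w / n)| ≤ r + 1 / u := by
    refine (abs_sum_le_sum_abs _ _).trans ?_
    calc _ ≤ ∑ n ∈ Ioc ⌊u⌋₊ ⌊w⌋₊, 1 / w := by
          refine sum_le_sum fun n hn => ?_
          have h0 : (0 : ℝ) < n := by exact_mod_cast (by have := (mem_Ioc.1 hn).1; omega : 0 < n)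
          rw [abs_mul, abs_div, abs_of_pos h0, abs_of_nonneg (kf_nonneg _)]
          calc |g n| / n * kf (w / n) ≤ 1 / n * (1 / (w / n)) := by
                gcongr
                · exact kf_nonneg _
                · exact hg n
                · exact kf_le (by positivity)
            _ = _ := by field_simp
      _ = ((⌊w⌋₊ : ℝ) - ⌊u⌋₊) * (1 / w) := by
          rw [sum_const, Nat.card_Ioc, nsmul_eq_mul, Nat.cast_sub hfl]
      _ ≤ (w - u + 1) * (1 / w) := by
          gcongr
          have := Nat.floor_le hw0.le
          have := Nat.lt_floor_add_one u
          linarith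
      _ = (1 - Real.exp (-r)) + 1 / w := by
          rw [hw, Real.exp_neg]; field_simp
      _ ≤ r + 1 / u := by
          have := Real.add_one_le_exp (-r)
          have : 1 / w ≤ 1 / u := by gcongr
          linarith
  rw [e]
  refine (abs_add_le _ _).trans ?_
  linarith

end T

/-- `1 * Λ₂ = log²`. -/
theorem lam2_sum (n : ℕ) : ∑ d ∈ n.divisors, lam2 d = Real.log n ^ 2 := by
  set ΛL : ArithmeticFunction ℝ := vonMangoldt.pmul ArithmeticFunction.log with hΛL
  have e : ∀ d, lam2 d = (ΛL + vonMangoldt * vonMangoldt) d := by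
    intro d
    simp [hΛL, lam2, ArithmeticFunction.mul_apply]
  simp_rw [e]
  rw [← ArithmeticFunction.coe_mul_zeta_apply, add_mul, mul_assoc,
    ArithmeticFunction.vonMangoldt_mul_zeta, ArithmeticFunction.add_apply,
    ArithmeticFunction.coe_mul_zeta_apply, ArithmeticFunction.mul_apply,
    ← sum_anti_fst (fun d => ΛL d), ← sum_add_distrib]
  have : ∀ q ∈ n.divisorsAntidiagonal, ΛL q.1 + vonMangoldt q.1 * ArithmeticFunction.log q.2 =
      vonMangoldt q.1 * Real.log n := by
    intro q hq
    obtain ⟨h1, h2⟩ := Nat.mem_divisorsAntidiagonal.1 hq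
    have ha : q.1 ≠ 0 := by intro h; rw [h] at h1; simp at h1; exact h2 h1.symm
    have hb : q.2 ≠ 0 := by intro h; rw [h] at h1; simp at h1; exact h2 h1.symm
    rw [← h1]
    push_cast
    rw [Real.log_mul (by exact_mod_cast ha) (by exact_mod_cast hb)]
    simp [hΛL, ArithmeticFunction.log_apply]; ring
  rw [sum_congr rfl this, ← sum_mul, sum_anti_fst (fun d => vonMangoldt d),
    ArithmeticFunction.vonMangoldt_sum]
  ring

/-- Insert `log² = 1 * Λ₂` and use the complete multiplicativity of `g`. -/
theorem N2f_eq (g : ℕ →*₀ ℝ) {u : ℝ} :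
    N2f g u = ∑ d ∈ Icc 1 ⌊u⌋₊, lam2 d / d * (g d * Tf g (u / d)) := by
  unfold N2f Tf KS
  have h1 : ∀ d ∈ Icc 1 ⌊u⌋₊, lam2 d / d * (g d * ∑ n ∈ Icc 1 ⌊u / d⌋₊, g n / n * kf (u / d / n)) =
      ∑ n ∈ Icc 1 (⌊u⌋₊ / d), lam2 d * (g (d * n) / (d * n : ℕ) * kf (u / (d * n : ℕ))) := by
    intro d _
    rw [Nat.floor_div_natCast, mul_sum, mul_sum]
    refine sum_congr rfl fun n _ => ?_
    rw [map_mul, div_div u]; push_cast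
    simp only [div_eq_mul_inv, mul_inv]
    ring
  rw [sum_congr rfl h1, ← sum_dirichlet
    (fun d n => lam2 d * (g (d * n) / (d * n : ℕ) * kf (u / (d * n : ℕ))))]
  refine sum_congr rfl fun n hn => ?_
  have hn0 : n ≠ 0 := by have := (mem_Icc.1 hn).1; omega
  have : ∀ q ∈ n.divisorsAntidiagonal, lam2 q.1 * (g (q.1 * q.2) / (q.1 * q.2 : ℕ) *
      kf (u / (q.1 * q.2 : ℕ))) = lam2 q.1 * (g n / n * kf (u / n)) := by
    intro q hq
    rw [(Nat.mem_divisorsAntidiagonal.1 hq).1]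
  rw [sum_congr rfl this, ← sum_mul, sum_anti_fst (fun d => lam2 d), lam2_sum n]
  ring

end LogHalasz

/-! ### Bounding `T` at a point by an integral of `|T|` -/

namespace LogHalasz
open ArithmeticFunction (vonMangoldt)
open MeasureTheory

theorem measurable_absT (g : ℕ → ℝ) : Measurable fun ρ : ℝ => |Tf g (Real.exp ρ)| :=
  ((measurable_KS _).comp Real.measurable_exp).abs

theorem integrableOn_absT {g : ℕ → ℝ} (hg : ∀ n, |g n| ≤ 1) {s : Set ℝ} (hs : MeasurableSet s)
    (h0 : ∀ ρ ∈ s, 0 ≤ ρ) (hfin : volume s ≠ ⊤) :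
    IntegrableOn (fun ρ : ℝ => |Tf g (Real.exp ρ)|) s := by
  refine IntegrableOn.of_bound (C := 1) (lt_top_iff_ne_top.2 hfin)
    (measurable_absT g).aestronglyMeasurable ?_
  filter_upwards [ae_restrict_mem hs] with ρ hρ
  rw [Real.norm_eq_abs, abs_abs]
  exact abs_Tf_le hg (Real.one_le_exp (h0 ρ hρ))

/-- `log² x · T(x)` is `N₂(x) + O(log x)`, and `N₂(x) = ∑ Λ₂(d)/d g(d) T(x/d)`. Each `T(x/d)` is
replaced by its average over a window of logarithmic length `1/log x`, and by `lam2_short` each `ρ`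
is covered by windows of total mass `O(1)`. -/
theorem log_mul_Tf_le_integral : ∃ C : ℝ, 0 < C ∧ ∀ g : ℕ →*₀ ℝ, (∀ n, |g n| ≤ 1) → ∀ x : ℝ, 3 ≤ x →
    Real.log x * |Tf g x| ≤ C + C * ∫ ρ in Set.Icc 0 (Real.log x + 1), |Tf g (Real.exp ρ)| := by
  obtain ⟨C1, hC1, hshort⟩ := lam2_short
  obtain ⟨C2, hC2, hlam⟩ := sum_lam2_le
  refine ⟨4 + 10 * C2 + C1, by positivity, ?_⟩
  intro g hg x hx
  set L := Real.log x with hL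
  have hL1 : 1 ≤ L := log_ge_one hx
  have hL0 : 0 < L := by linarith
  have hx0 : 0 < x := by linarith
  obtain ⟨hlam1, hlam2⟩ := hlam x hx
  set J : ℝ := ∫ ρ in Set.Icc 0 (L + 1), |Tf g (Real.exp ρ)| with hJ
  have hJ0 : 0 ≤ J := integral_nonneg fun _ => abs_nonneg _
  set I : ℕ → Set ℝ := fun d => Set.Icc (L - Real.log d) (L - Real.log d + 1 / L) with hI
  have hd : ∀ d ∈ Icc 1 ⌊x⌋₊, (1 : ℝ) ≤ d ∧ (d : ℝ) ≤ x := by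
    intro d hd
    obtain ⟨h1, h2⟩ := mem_Icc.1 hd
    exact ⟨by exact_mod_cast h1, (Nat.le_floor_iff hx0.le).1 h2⟩
  have hlogd : ∀ d ∈ Icc 1 ⌊x⌋₊, 0 ≤ L - Real.log d := by
    intro d h
    exact sub_nonneg.2 (Real.log_le_log (by linarith [(hd d h).1]) (hd d h).2)
  have hinvL : 1 / L ≤ 1 := by rw [div_le_one hL0]; exact hL1
  have hinvL0 : 0 < 1 / L := by positivity
  have hIsub : ∀ d ∈ Icc 1 ⌊x⌋₊, I d ⊆ Set.Icc 0 (L + 1) := by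
    intro d h
    refine Set.Icc_subset_Icc (hlogd d h) ?_
    have : 0 ≤ Real.log d := Real.log_natCast_nonneg d
    linarith
  have hInt : IntegrableOn (fun ρ : ℝ => |Tf g (Real.exp ρ)|) (Set.Icc 0 (L + 1)) :=
    integrableOn_absT hg measurableSet_Icc (fun ρ h => h.1) (by simp)
  -- `I d` is the window of length `1/L` that starts at `log (x/d)`.
  have hstep : ∀ d ∈ Icc 1 ⌊x⌋₊, |Tf g (x / d)| ≤
      L * (∫ ρ in I d, |Tf g (Real.exp ρ)|) + (9 * (1 / L) + d / x) := by
    intro d h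
    have hd1 := (hd d h).1
    have hu : 1 ≤ x / d := by rw [le_div_iff₀ (by linarith), one_mul]; exact (hd d h).2
    have hpt : ∀ ρ ∈ I d, |Tf g (x / d)| - (9 * (1 / L) + d / x) ≤ |Tf g (Real.exp ρ)| := by
      intro ρ hρ
      obtain ⟨h1, h2⟩ := hρ
      have e : Real.exp ρ = x / d * Real.exp (ρ - (L - Real.log d)) := by
        have : x / d = Real.exp (L - Real.log d) := by
          rw [Real.exp_sub, hL, Real.exp_log hx0, Real.exp_log (by linarith)]
        rw [this, ← Real.exp_add]; ring_nf
      have := Tf_lip hg hu (r := ρ - (L - Real.log d)) (by linarith) (by linarith)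
      rw [← e, one_div_div] at this
      have h3 := abs_sub_abs_le_abs_sub (Tf g (x / d)) (Tf g (Real.exp ρ))
      rw [abs_sub_comm] at h3
      linarith
    have hvol : volume.real (I d) = 1 / L := by
      rw [hI]; simp only [Real.volume_real_Icc]
      rw [add_sub_cancel_left, max_eq_left hinvL0.le]
    have hm := setIntegral_mono_on (μ := volume) (s := I d)
      (f := fun _ => |Tf g (x / d)| - (9 * (1 / L) + d / x))
      (integrableOn_const (by simp [hI]))
      (hInt.mono_set (hIsub d h)) measurableSet_Icc hpt
    rw [setIntegral_const, hvol, smul_eq_mul] at hm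
    have := mul_le_mul_of_nonneg_left hm hL0.le
    rw [← mul_assoc, mul_one_div, div_self hL0.ne', one_mul] at this
    linarith
  have hsum : ∑ d ∈ Icc 1 ⌊x⌋₊, lam2 d / d * ∫ ρ in I d, |Tf g (Real.exp ρ)| ≤ C1 * J := by
    have e1 : ∀ d ∈ Icc 1 ⌊x⌋₊, lam2 d / d * ∫ ρ in I d, |Tf g (Real.exp ρ)| =
        ∫ ρ in Set.Icc 0 (L + 1), (I d).indicator (fun ρ => lam2 d / d * |Tf g (Real.exp ρ)|) ρ := by
      intro d h
      rw [setIntegral_indicator measurableSet_Icc, Set.inter_eq_right.2 (hIsub d h), integral_const_mul]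
    rw [sum_congr rfl e1, ← integral_finsetSum]
    · rw [hJ, ← integral_const_mul]
      refine setIntegral_mono_on ?_ (hInt.const_mul _) measurableSet_Icc ?_
      · refine integrable_finsetSum _ fun d h => ?_
        exact (hInt.const_mul _).indicator measurableSet_Icc
      · intro ρ hρ
        have e2 : ∑ d ∈ Icc 1 ⌊x⌋₊, (I d).indicator (fun ρ => lam2 d / d * |Tf g (Real.exp ρ)|) ρ =
            (∑ d ∈ (Icc 1 ⌊x⌋₊).filter (fun d => ρ ∈ I d), lam2 d / d) * |Tf g (Real.exp ρ)| := by
          rw [sum_filter, sum_mul]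
          refine sum_congr rfl fun d _ => ?_
          by_cases h : ρ ∈ I d
          · simp [h]
          · simp [h]
        rw [e2]
        refine mul_le_mul_of_nonneg_right ?_ (abs_nonneg _)
        refine hshort L (Real.exp (L - ρ)) hL1 (Real.exp_pos _) ?_ _ ?_
        · rw [Real.log_exp]; linarith [hρ.1]
        · intro d h
          obtain ⟨h1, h2, h3⟩ := mem_filter.1 h
          have hd1 := (hd d h1).1
          refine ⟨(mem_Icc.1 h1).1, ?_, ?_⟩
          · rw [← Real.le_log_iff_exp_le (by linarith)]; linarith
          · rw [← Real.exp_add, ← Real.log_le_iff_le_exp (by linarith)]; linarith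
    · intro d h
      exact (hInt.const_mul _).indicator measurableSet_Icc
  have hN2 : |N2f g x| ≤ L * (C1 * J) + 10 * C2 * L := by
    rw [N2f_eq]
    refine (abs_sum_le_sum_abs _ _).trans ?_
    calc _ ≤ ∑ d ∈ Icc 1 ⌊x⌋₊, lam2 d / d *
          (L * (∫ ρ in I d, |Tf g (Real.exp ρ)|) + (9 * (1 / L) + d / x)) := by
          refine sum_le_sum fun d h => ?_
          have hp : 0 ≤ lam2 d / d := div_nonneg (lam2_nonneg d) (by positivity)
          rw [abs_mul, abs_of_nonneg hp, abs_mul]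
          refine mul_le_mul_of_nonneg_left ?_ hp
          exact (mul_le_of_le_one_left (abs_nonneg _) (hg d)).trans (hstep d h)
      _ = L * (∑ d ∈ Icc 1 ⌊x⌋₊, lam2 d / d * ∫ ρ in I d, |Tf g (Real.exp ρ)|) +
          9 * (1 / L) * ∑ d ∈ Icc 1 ⌊x⌋₊, lam2 d / d + (∑ d ∈ Icc 1 ⌊x⌋₊, lam2 d) / x := by
          rw [mul_sum, mul_sum, sum_div, ← sum_add_distrib, ← sum_add_distrib]
          refine sum_congr rfl fun d h => ?_
          have : (d : ℝ) ≠ 0 := by linarith [(hd d h).1]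
          field_simp
          ring
      _ ≤ L * (C1 * J) + 9 * (1 / L) * (C2 * L ^ 2) + C2 * x * L / x := by gcongr
      _ = _ := by field_simp; ring
  have hfin := log_sq_mul_Tf_sub_N2f hg (by linarith : 1 ≤ x)
  rw [← hL] at hfin
  have h1 : L ^ 2 * |Tf g x| ≤ 4 * L + (L * (C1 * J) + 10 * C2 * L) := by
    have := abs_sub_abs_le_abs_sub (L ^ 2 * Tf g x) (N2f g x)
    rw [abs_mul, abs_of_nonneg (by positivity : 0 ≤ L ^ 2)] at this
    linarith
  have h2 : L * |Tf g x| ≤ 4 + (C1 * J + 10 * C2) := by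
    refine le_of_mul_le_mul_left ?_ hL0
    nlinarith
  have : 0 ≤ (4 + 10 * C2) * J := by positivity
  nlinarith

end LogHalasz

/-! ### Comparison of the sharp sum with `T` -/

namespace LogHalasz
open ArithmeticFunction (vonMangoldt)

theorem term_eq_tw (g : ℕ →*₀ ℝ) (s : ℂ) (n : ℕ) :
    LSeries.term (fun n => (g n : ℂ)) s n = tw g s n := by
  rcases Nat.eq_zero_or_pos n with rfl | hn
  · simp
  · rw [LSeries.term_of_ne_zero (by omega)]
    show _ = (g n : ℂ) * (n : ℂ) ^ (-s)
    rw [Complex.cpow_neg, div_eq_mul_inv]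

theorem LSeries_eq_DS (g : ℕ →*₀ ℝ) (s : ℂ) : LSeries (fun n => (g n : ℂ)) s = DS g s := by
  unfold LSeries DS
  exact tsum_congr (term_eq_tw g s)

theorem LSeriesSummable_g {g : ℕ →*₀ ℝ} (hg : ∀ n, |g n| ≤ 1) {α : ℝ} (hα : 0 < α) (t : ℝ) :
    LSeriesSummable (fun n => (g n : ℂ)) (pt α t) := by
  unfold LSeriesSummable
  refine (summable_norm_tw hg hα t).of_norm.congr fun n => ?_
  exact (term_eq_tw g _ n).symm

/-- `g` as an arithmetic function. -/
noncomputable def gA (g : ℕ →*₀ ℝ) : ArithmeticFunction ℝ := ⟨g, map_zero g⟩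

@[simp] theorem gA_apply (g : ℕ →*₀ ℝ) (n : ℕ) : gA g n = g n := rfl

/-- `h = 1 * g`. -/
noncomputable def hA (g : ℕ →*₀ ℝ) : ArithmeticFunction ℝ := gA g * ArithmeticFunction.zeta

theorem hA_apply (g : ℕ →*₀ ℝ) (n : ℕ) : hA g n = ∑ d ∈ n.divisors, g d := by
  rw [hA, ArithmeticFunction.coe_mul_zeta_apply]; rfl

theorem geom_nonneg {y : ℝ} (hy : |y| ≤ 1) (n : ℕ) : 0 ≤ ∑ i ∈ range n, y ^ i := by
  rcases le_or_gt 0 y with h | h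
  · exact sum_nonneg fun i _ => pow_nonneg h i
  · have h1 := geom_sum_mul_neg y n
    have h2 : y ^ n ≤ 1 := (le_abs_self _).trans (by rw [abs_pow]; exact pow_le_one₀ (abs_nonneg y) hy)
    have h3 : 0 < 1 - y := by linarith
    by_contra hc
    push Not at hc
    nlinarith

/-- `1 * g` is a product of partial geometric sums of the `g(p) ∈ [-1, 1]`, hence nonnegative. -/
theorem hA_nonneg {g : ℕ →*₀ ℝ} (hg : ∀ n, |g n| ≤ 1) (n : ℕ) : 0 ≤ hA g n := by
  rcases Nat.eq_zero_or_pos n with rfl | hn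
  · simp
  have hm : (hA g).IsMultiplicative := by
    refine ArithmeticFunction.IsMultiplicative.mul ?_ ?_
    · exact ⟨by simp, fun _ => by simp⟩
    · exact ArithmeticFunction.isMultiplicative_zeta.natCast
  rw [hm.multiplicative_factorization _ (by omega)]
  refine prod_nonneg fun p hp => ?_
  have hpp : p.Prime := Nat.prime_of_mem_primeFactors (by simpa using hp)
  show 0 ≤ hA g (p ^ n.factorization p)
  rw [hA_apply, Nat.sum_divisors_prime_pow hpp]
  simp only [map_pow]
  exact geom_nonneg (hg p) _

/-- `h log = h * (Λ + gΛ)`. -/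
theorem hA_log (g : ℕ →*₀ ℝ) (l : ℕ) : hA g l * Real.log l =
    ∑ q ∈ l.divisorsAntidiagonal, hA g q.1 * (vonMangoldt q.2 * (1 + g q.2)) := by
  set gΛ : ArithmeticFunction ℝ := (gA g).pmul vonMangoldt with hgΛ
  have hlog : ∀ n, (gΛ * gA g) n = g n * Real.log n := by
    intro n
    rw [ArithmeticFunction.mul_apply, ← ArithmeticFunction.vonMangoldt_sum,
      ← sum_anti_fst (fun d => vonMangoldt d), mul_sum]
    refine sum_congr rfl fun q hq => ?_
    rw [← (Nat.mem_divisorsAntidiagonal.1 hq).1, map_mul]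
    simp [hgΛ]; ring
  have e1 : hA g l * Real.log l = ((gΛ * gA g) * ArithmeticFunction.zeta +
      gA g * ArithmeticFunction.log) l := by
    rw [hA, ArithmeticFunction.add_apply, ArithmeticFunction.mul_apply, ArithmeticFunction.mul_apply,
      ArithmeticFunction.mul_apply, ← sum_add_distrib, sum_mul]
    refine sum_congr rfl fun q hq => ?_
    obtain ⟨h1, h2⟩ := Nat.mem_divisorsAntidiagonal.1 hq
    have ha : q.1 ≠ 0 := by intro h; rw [h] at h1; simp at h1; exact h2 h1.symm
    have hb : q.2 ≠ 0 := by intro h; rw [h] at h1; simp at h1; exact h2 h1.symm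
    rw [hlog, ← h1]
    push_cast
    rw [Real.log_mul (by exact_mod_cast ha) (by exact_mod_cast hb)]
    simp [hb, ArithmeticFunction.log_apply, ArithmeticFunction.natCoe_apply,
      ArithmeticFunction.zeta_apply]; ring
  have e2 : (gΛ * gA g) * ArithmeticFunction.zeta + gA g * ArithmeticFunction.log =
      hA g * (vonMangoldt + gΛ) := by
    rw [← ArithmeticFunction.vonMangoldt_mul_zeta, hA]; ring
  rw [e1, e2, ArithmeticFunction.mul_apply]
  refine sum_congr rfl fun q _ => ?_
  simp only [hgΛ, ArithmeticFunction.add_apply, ArithmeticFunction.pmul_apply, gA_apply]; ring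

/-- Rankin’s trick: `h(l)/l ≤ e h(l) l^{-1-1/log x}` for `l ≤ x`, and the full series is `ζ G`. -/
theorem sum_hA_div_le {g : ℕ →*₀ ℝ} (hg : ∀ n, |g n| ≤ 1) {x : ℝ} (hx : 3 ≤ x) :
    ∑ l ∈ Icc 1 ⌊x⌋₊, hA g l / l ≤
      Real.exp 1 * (‖DS g (pt (1 / Real.log x) 0)‖ * (1 + Real.log x)) := by
  set L := Real.log x with hL
  have hL1 : 1 ≤ L := log_ge_one hx
  have hL0 : 0 < L := by linarith
  have hα : 0 < 1 / L := by positivity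
  have hx0 : 0 < x := by linarith
  have s1 := LSeriesSummable_g hg hα 0
  have s2 := LSeriesSummable_g abs_oneHom_le hα 0
  have s3 := s1.convolution s2
  have h1 := LSeries_convolution' s1 s2
  rw [LSeries_eq_DS, LSeries_eq_DS] at h1
  have ht : ∀ n : ℕ, LSeries.term (LSeries.convolution (fun n => (g n : ℂ)) (fun n => (oneHom n : ℂ)))
      (pt (1 / L) 0) n = ((hA g n * (n : ℝ) ^ (-(1 + 1 / L)) : ℝ) : ℂ) := by
    intro n
    rcases Nat.eq_zero_or_pos n with rfl | hn
    · simp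
    · rw [LSeries.term_of_ne_zero (by omega), LSeries.convolution_def]
      have e : ∑ p ∈ n.divisorsAntidiagonal, (g p.1 : ℂ) * (oneHom p.2 : ℂ) = (hA g n : ℂ) := by
        rw [hA_apply, ← sum_anti_fst (fun d => g d)]
        push_cast
        refine sum_congr rfl fun q hq => ?_
        obtain ⟨h1, h2⟩ := Nat.mem_divisorsAntidiagonal.1 hq
        have hb : q.2 ≠ 0 := by intro h; rw [h] at h1; simp at h1; exact h2 h1.symm
        rw [oneHom_apply hb]; simp
      simp only [e]
      rw [div_eq_mul_inv, ← Complex.cpow_neg]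
      push_cast
      rw [Complex.ofReal_cpow (by positivity)]
      simp [pt]
  have hs : Summable fun n : ℕ => hA g n * (n : ℝ) ^ (-(1 + 1 / L)) := by
    have := s3
    unfold LSeriesSummable at this
    rw [summable_congr ht] at this
    exact Complex.summable_ofReal.1 this
  have h2 : ∑' n : ℕ, hA g n * (n : ℝ) ^ (-(1 + 1 / L)) ≤
      ‖DS g (pt (1 / L) 0)‖ * (1 + L) := by
    have e : LSeries (LSeries.convolution (fun n => (g n : ℂ)) (fun n => (oneHom n : ℂ)))
      (pt (1 / L) 0) = ((∑' n : ℕ, hA g n * (n : ℝ) ^ (-(1 + 1 / L)) : ℝ) : ℂ) := by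
      unfold LSeries
      rw [tsum_congr ht, Complex.ofReal_tsum]
    rw [e] at h1
    have h3 := congrArg norm h1
    rw [norm_mul, Complex.norm_real] at h3
    have h4 := norm_DS_le_one_add abs_oneHom_le hα 0
    rw [one_div_one_div] at h4
    calc _ ≤ ‖∑' n : ℕ, hA g n * (n : ℝ) ^ (-(1 + 1 / L))‖ := le_abs_self _
      _ = _ := h3
      _ ≤ _ := by gcongr
  calc ∑ l ∈ Icc 1 ⌊x⌋₊, hA g l / l ≤
      ∑ l ∈ Icc 1 ⌊x⌋₊, Real.exp 1 * (hA g l * (l : ℝ) ^ (-(1 + 1 / L))) := by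
        refine sum_le_sum fun l hl => ?_
        have h0 : (0 : ℝ) < l := by exact_mod_cast (mem_Icc.1 hl).1
        have hlx : (l : ℝ) ≤ x := (Nat.le_floor_iff (by linarith)).1 (mem_Icc.1 hl).2
        have hll : Real.log l ≤ L := Real.log_le_log h0 hlx
        have hh := hA_nonneg hg l
        have : (l : ℝ)⁻¹ ≤ Real.exp 1 * (l : ℝ) ^ (-(1 + 1 / L)) := by
          rw [Real.rpow_def_of_pos h0, ← Real.exp_add]
          have e : (l : ℝ)⁻¹ = Real.exp (-Real.log l) := by rw [Real.exp_neg, Real.exp_log h0]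
          rw [e]
          apply Real.exp_le_exp.2
          have : Real.log l * (1 / L) ≤ 1 := by
            rw [mul_one_div, div_le_one hL0]; exact hll
          nlinarith
        calc hA g l / l = hA g l * (l : ℝ)⁻¹ := rfl
          _ ≤ hA g l * (Real.exp 1 * (l : ℝ) ^ (-(1 + 1 / L))) := by gcongr
          _ = _ := by ring
    _ = Real.exp 1 * ∑ l ∈ Icc 1 ⌊x⌋₊, (hA g l * (l : ℝ) ^ (-(1 + 1 / L))) := by rw [mul_sum]
    _ ≤ _ := by
      gcongr
      refine le_trans (hs.sum_le_tsum _ fun n _ => ?_) h2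
      exact mul_nonneg (hA_nonneg hg n) (by positivity)

/-- `h log = h * (Λ + gΛ)` and the Chebyshev bound save a logarithm on the mean value of `h ≥ 0`. -/
theorem sum_hA_le {g : ℕ →*₀ ℝ} (hg : ∀ n, |g n| ≤ 1) {x : ℝ} (hx : 3 ≤ x) :
    Real.log x * ∑ l ∈ Icc 1 ⌊x⌋₊, hA g l ≤ (2 * cheb + 1) * x * ∑ l ∈ Icc 1 ⌊x⌋₊, hA g l / l := by
  have hx0 : 0 < x := by linarith
  have h1 : ∑ l ∈ Icc 1 ⌊x⌋₊, hA g l * Real.log l ≤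
      2 * cheb * x * ∑ l ∈ Icc 1 ⌊x⌋₊, hA g l / l := by
    rw [sum_congr rfl fun l _ => hA_log g l,
      sum_dirichlet (fun a b => hA g a * (vonMangoldt b * (1 + g b))), mul_sum]
    refine sum_le_sum fun m hm => ?_
    have h0 : (0 : ℝ) < m := by exact_mod_cast (mem_Icc.1 hm).1
    rw [← mul_sum]
    have hh := hA_nonneg hg m
    have : ∑ b ∈ Icc 1 (⌊x⌋₊ / m), vonMangoldt b * (1 + g b) ≤ 2 * cheb * (x / m) := by
      calc _ ≤ ∑ b ∈ Icc 1 (⌊x⌋₊ / m), vonMangoldt b * 2 := by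
            refine sum_le_sum fun b _ => ?_
            refine mul_le_mul_of_nonneg_left ?_ ArithmeticFunction.vonMangoldt_nonneg
            linarith [(abs_le.1 (hg b)).2]
        _ = Psi (⌊x⌋₊ / m) * 2 := by rw [Psi, sum_mul]
        _ ≤ cheb * (⌊x⌋₊ / m : ℕ) * 2 := by gcongr; exact Psi_le _
        _ ≤ cheb * (x / m) * 2 := by
          have := cheb_pos
          gcongr
          rw [← Nat.floor_div_natCast]
          exact Nat.floor_le (by positivity)
        _ = _ := by ring
    calc _ ≤ hA g m * (2 * cheb * (x / m)) := by gcongr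
      _ = _ := by ring
  have h2 : ∑ l ∈ Icc 1 ⌊x⌋₊, hA g l * (Real.log x - Real.log l) ≤
      x * ∑ l ∈ Icc 1 ⌊x⌋₊, hA g l / l := by
    rw [mul_sum]
    refine sum_le_sum fun l hl => ?_
    have h0 : (0 : ℝ) < l := by exact_mod_cast (mem_Icc.1 hl).1
    rw [← Real.log_div (by positivity) (by positivity)]
    have := Real.log_le_sub_one_of_pos (show 0 < x / l by positivity)
    calc _ ≤ hA g l * (x / l) := mul_le_mul_of_nonneg_left (by linarith) (hA_nonneg hg l)
      _ = _ := by ring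
  have e : Real.log x * ∑ l ∈ Icc 1 ⌊x⌋₊, hA g l = ∑ l ∈ Icc 1 ⌊x⌋₊, hA g l * Real.log l +
      ∑ l ∈ Icc 1 ⌊x⌋₊, hA g l * (Real.log x - Real.log l) := by
    rw [mul_sum, ← sum_add_distrib]
    exact sum_congr rfl fun l _ => by ring
  rw [e]; linarith

theorem one_sub_kf {v : ℝ} (hv : 1 ≤ v) : 1 - kf v = 2 / v ^ 2 * ∑ m ∈ Icc 1 ⌊v⌋₊, (v - m) := by
  rw [kf_of_ge hv, sum_sub_distrib]
  have h1 : ∀ N : ℕ, ∑ m ∈ Icc 1 N, (m : ℝ) = N * (N + 1) / 2 := by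
    intro N
    induction N with
    | zero => simp
    | succ n ih => rw [sum_Icc_succ_top (by omega), ih]; push_cast; ring
  rw [h1]
  have h2 : (⌊v⌋ : ℝ) = (⌊v⌋₊ : ℝ) := (natCast_floor_eq_intCast_floor (by linarith)).symm
  have h3 : Int.fract v = v - (⌊v⌋₊ : ℝ) := by rw [← h2]; rfl
  unfold qf
  rw [h3, h2]
  have : v ≠ 0 := by linarith
  simp only [sum_const, Nat.card_Icc, nsmul_eq_mul, Nat.add_sub_cancel]
  field_simp
  ring

/-- The difference of the two sums is `(2/x²) ∑_{l ≤ x} h(l) (x - l)` with `h = 1 * g ≥ 0`, so it is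
bounded by the mean value of `h`. -/
theorem abs_sum_sub_Tf_le : ∃ C : ℝ, 0 < C ∧ ∀ g : ℕ →*₀ ℝ, (∀ n, |g n| ≤ 1) → ∀ x : ℝ, 3 ≤ x →
    |∑ n ∈ Icc 1 ⌊x⌋₊, g n / n - Tf g x| ≤ C * Real.exp (pSum g x) := by
  obtain ⟨C, hC, hD⟩ := DS_real_bound
  have hc := cheb_pos
  refine ⟨2 * ((2 * cheb + 1) * (Real.exp 1 * (C * 2))), by positivity, ?_⟩
  intro g hg x hx
  have hx0 : 0 < x := by linarith
  have hL1 := log_ge_one hx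
  have hL0 : 0 < Real.log x := by linarith
  have e : ∑ n ∈ Icc 1 ⌊x⌋₊, g n / n - Tf g x =
      2 / x ^ 2 * ∑ l ∈ Icc 1 ⌊x⌋₊, hA g l * (x - l) := by
    unfold Tf KS
    have e1 : ∀ l ∈ Icc 1 ⌊x⌋₊, hA g l * (x - l) =
        ∑ q ∈ l.divisorsAntidiagonal, g q.1 * (x - (q.1 * q.2 : ℕ)) := by
      intro l _
      rw [hA_apply, ← sum_anti_fst (fun d => g d), sum_mul]
      refine sum_congr rfl fun q hq => ?_
      rw [(Nat.mem_divisorsAntidiagonal.1 hq).1]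
    rw [sum_congr rfl e1, sum_dirichlet (fun a b => g a * (x - (a * b : ℕ))), ← sum_sub_distrib,
      mul_sum]
    refine sum_congr rfl fun n hn => ?_
    have h0 : (0 : ℝ) < n := by exact_mod_cast (mem_Icc.1 hn).1
    have hnx : (n : ℝ) ≤ x := (Nat.le_floor_iff (by linarith)).1 (mem_Icc.1 hn).2
    have h1 := one_sub_kf (v := x / n) (by rwa [le_div_iff₀ h0, one_mul])
    rw [show g n / n - g n / n * kf (x / n) = g n / n * (1 - kf (x / n)) by ring, h1,
      Nat.floor_div_natCast, mul_sum, mul_sum, mul_sum]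
    refine sum_congr rfl fun m _ => ?_
    push_cast
    field_simp
  rw [e]
  have hnn : 0 ≤ ∑ l ∈ Icc 1 ⌊x⌋₊, hA g l * (x - l) := by
    refine sum_nonneg fun l hl => mul_nonneg (hA_nonneg hg l) (sub_nonneg.2 ?_)
    exact (Nat.le_floor_iff (by linarith)).1 (mem_Icc.1 hl).2
  rw [abs_of_nonneg (by positivity)]
  have h1 : ∑ l ∈ Icc 1 ⌊x⌋₊, hA g l * (x - l) ≤ x * ∑ l ∈ Icc 1 ⌊x⌋₊, hA g l := by
    rw [mul_sum]
    refine sum_le_sum fun l _ => ?_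
    have := hA_nonneg hg l
    have h0 : (0 : ℝ) ≤ l := by positivity
    nlinarith
  have h2 := sum_hA_le hg hx
  have h3 := sum_hA_div_le hg hx
  have h4 := hD g hg x hx
  have h5 : ∑ l ∈ Icc 1 ⌊x⌋₊, hA g l ≤
      (2 * cheb + 1) * x * (Real.exp 1 * (C * Real.exp (pSum g x) * 2)) := by
    refine le_of_mul_le_mul_left ?_ hL0
    calc _ ≤ _ := h2
      _ ≤ (2 * cheb + 1) * x * (Real.exp 1 * (C * Real.exp (pSum g x) * (Real.log x + Real.log x))) := by
        refine mul_le_mul_of_nonneg_left (h3.trans ?_) (by positivity)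
        gcongr
      _ = _ := by ring
  calc _ ≤ 2 / x ^ 2 * (x * ((2 * cheb + 1) * x * (Real.exp 1 * (C * Real.exp (pSum g x) * 2)))) := by
        refine mul_le_mul_of_nonneg_left (h1.trans ?_) (by positivity)
        gcongr
    _ = _ := by field_simp

end LogHalasz

/-! ### Plancherel’s identity and the Fourier transform of the kernel -/

namespace LogHalasz
open MeasureTheory FourierTransform
open scoped SchwartzMap

/-- Plancherel's identity for the concrete Fourier integral of `φ ∈ L¹ ∩ L²` with `𝓕 φ ∈ L²`. -/
theorem plancherel {φ : ℝ → ℂ} (h1 : Integrable φ) (h2 : MemLp φ 2) (h3 : MemLp (𝓕 φ) 2) :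
    ∫ r, ‖φ r‖ ^ 2 = ∫ ξ, ‖𝓕 φ ξ‖ ^ 2 := by
  have key : 𝓕 (h2.toLp φ) = h3.toLp (𝓕 φ) := by
    have hinj := Lp.ker_toTemperedDistributionCLM_eq_bot (E := ℝ) (F := ℂ) (μ := volume) (p := 2)
    have hinj' := LinearMap.ker_eq_bot.1 hinj
    apply hinj'
    show ((𝓕 (h2.toLp φ) : Lp ℂ 2 (volume : Measure ℝ)) : 𝓢'(ℝ, ℂ)) = ((h3.toLp (𝓕 φ) : Lp ℂ 2 (volume : Measure ℝ)) : 𝓢'(ℝ, ℂ))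
    rw [← Lp.fourier_toTemperedDistribution_eq]
    ext w
    rw [TemperedDistribution.fourier_apply, Lp.toTemperedDistribution_apply,
      Lp.toTemperedDistribution_apply]
    have e1 : ∫ x, (𝓕 w) x • (h2.toLp φ) x = ∫ x, (𝓕 w) x • φ x := by
      refine integral_congr_ae ?_
      filter_upwards [h2.coeFn_toLp] with x hx
      rw [hx]
    have e2 : ∫ x, w x • (h3.toLp (𝓕 φ)) x = ∫ x, w x • 𝓕 φ x := by
      refine integral_congr_ae ?_
      filter_upwards [h3.coeFn_toLp] with x hx
      rw [hx]
    rw [e1, e2]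
    have := VectorFourier.integral_fourierIntegral_smul_eq_flip (μ := volume) (ν := volume)
      (L := innerₗ ℝ) (f := w) (g := φ) Real.continuous_fourierChar
      (by exact continuous_inner) w.integrable h1
    rw [flip_innerₗ] at this
    exact this
  have hn := Lp.norm_fourier_eq (h2.toLp φ)
  rw [key] at hn
  have hs : ∀ {ψ : ℝ → ℂ} (h : MemLp ψ 2), ∫ r, ‖ψ r‖ ^ 2 = ‖h.toLp ψ‖ ^ 2 := by
    intro ψ h
    have := inner_self_eq_norm_sq_to_K (𝕜 := ℂ) (h.toLp ψ)
    rw [L2.inner_def] at this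
    have e : ∫ a, inner ℂ ((h.toLp ψ : ℝ → ℂ) a) ((h.toLp ψ : ℝ → ℂ) a) = ((∫ r, ‖ψ r‖ ^ 2 : ℝ) : ℂ) := by
      rw [← integral_complex_ofReal]
      refine integral_congr_ae ?_
      filter_upwards [h.coeFn_toLp] with x hx
      rw [hx, inner_self_eq_norm_sq_to_K]
      simp
    rw [e] at this
    have h5 : ((∫ r, ‖ψ r‖ ^ 2 : ℝ) : ℂ) = ((‖h.toLp ψ‖ ^ 2 : ℝ) : ℂ) := by
      rw [this]; simp
    exact Complex.ofReal_injective h5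
  rw [hs h2, hs h3, hn]

/-- `κ_α(r) = k(e^r) e^{-αr}`. -/
noncomputable def kap (α r : ℝ) : ℝ := kf (Real.exp r) * Real.exp (-α * r)

theorem kap_neg {α r : ℝ} (h : r < 0) : kap α r = 0 := by
  rw [kap, kf_of_lt (by rw [Real.exp_lt_one_iff]; exact h), zero_mul]

theorem kap_nonneg (α r : ℝ) : 0 ≤ kap α r := mul_nonneg (kf_nonneg _) (Real.exp_pos _).le

theorem measurable_kap (α : ℝ) : Measurable (kap α) :=
  (measurable_kf.comp Real.measurable_exp).mul (by fun_prop)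

theorem kap_le {α r : ℝ} (hα : 0 ≤ α) (hr : 0 ≤ r) : kap α r ≤ Real.exp (-r) := by
  have h1 : kf (Real.exp r) ≤ Real.exp (-r) := by
    have := kf_le (Real.exp_pos r)
    rwa [one_div, ← Real.exp_neg] at this
  have h2 : Real.exp (-α * r) ≤ 1 := Real.exp_le_one_iff.2 (by nlinarith)
  calc kap α r ≤ Real.exp (-r) * 1 := by
        unfold kap
        exact mul_le_mul h1 h2 (Real.exp_pos _).le (Real.exp_pos _).le
    _ = _ := mul_one _

theorem kap_le_indicator {α : ℝ} (hα : 0 ≤ α) (r : ℝ) :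
    |kap α r| ≤ (Set.Ici 0).indicator (fun r => Real.exp (-r)) r := by
  rw [abs_of_nonneg (kap_nonneg _ _)]
  by_cases h : 0 ≤ r
  · rw [Set.indicator_of_mem (by exact h)]; exact kap_le hα h
  · rw [Set.indicator_of_notMem (by exact h), kap_neg (by linarith)]

theorem integrable_expInd : Integrable ((Set.Ici (0:ℝ)).indicator (fun r => Real.exp (-r))) := by
  rw [integrable_indicator_iff measurableSet_Ici, integrableOn_Ici_iff_integrableOn_Ioi]
  exact integrableOn_exp_neg_Ioi 0

theorem integral_expInd : ∫ r, (Set.Ici (0:ℝ)).indicator (fun r => Real.exp (-r)) r = 1 := by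
  rw [integral_indicator measurableSet_Ici, integral_Ici_eq_integral_Ioi]
  exact integral_exp_neg_Ioi_zero

theorem integrable_kap {α : ℝ} (hα : 0 ≤ α) : Integrable (kap α) :=
  integrable_expInd.mono' (measurable_kap α).aestronglyMeasurable
    (Filter.Eventually.of_forall fun r => kap_le_indicator hα r)

theorem integral_abs_kap_le {α : ℝ} (hα : 0 ≤ α) : ∫ r, |kap α r| ≤ 1 := by
  rw [← integral_expInd]
  exact integral_mono (integrable_kap hα).abs integrable_expInd (kap_le_indicator hα)

/-- The `L¹` modulus of continuity of `κ_α` is Lipschitz. -/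
theorem integral_kap_shift {α h : ℝ} (hα : 0 ≤ α) (hα1 : α ≤ 1) (hh : 0 ≤ h) (hh1 : h ≤ 1) :
    ∫ r, |kap α r - kap α (r + h)| ≤ 10 * h := by
  have hb : ∀ r, |kap α r - kap α (r + h)| ≤ (Set.Icc (-h) 0).indicator (fun _ => (1:ℝ)) r +
      9 * h * (Set.Ici (0:ℝ)).indicator (fun r => Real.exp (-r)) r := by
    intro r
    rcases lt_or_ge r 0 with hr | hr
    · rw [Set.indicator_of_notMem (s := Set.Ici (0:ℝ)) (by simpa using hr), kap_neg hr]
      rcases lt_or_ge (r + h) 0 with h2 | h2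
      · rw [kap_neg h2, Set.indicator_of_notMem]
        · simp
        · intro hc; have := hc.1; linarith
      · rw [Set.indicator_of_mem (s := Set.Icc (-h) 0) (Set.mem_Icc.2 ⟨by linarith, hr.le⟩), zero_sub, abs_neg, abs_of_nonneg (kap_nonneg _ _)]
        have := kap_le hα h2
        have h3 : Real.exp (-(r + h)) ≤ 1 := Real.exp_le_one_iff.2 (by linarith)
        linarith
    · have hind : 0 ≤ (Set.Icc (-h) 0).indicator (fun _ => (1:ℝ)) r :=
        Set.indicator_nonneg (fun _ _ => zero_le_one) _
      rw [Set.indicator_of_mem (s := Set.Ici (0:ℝ)) (by exact hr)]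
      refine le_trans ?_ (le_add_of_nonneg_left hind)
      have e : kap α r - kap α (r + h) = (kf (Real.exp r) - kf (Real.exp (r + h))) * Real.exp (-α * (r + h))
          + kf (Real.exp r) * (Real.exp (-α * r) - Real.exp (-α * (r + h))) := by
        unfold kap; ring
      have h1 : |kf (Real.exp r) - kf (Real.exp (r + h))| ≤ 8 * h * Real.exp (-r) := by
        rw [abs_sub_comm]
        refine (kf_lip (Real.one_le_exp hr) (Real.exp_le_exp.2 (by linarith))).trans ?_
        have := exp_sub_one_le hh hh1
        have he := Real.exp_pos r
        rw [Real.exp_add, div_le_iff₀ (by positivity), Real.exp_neg]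
        have e2 : 8 * h * (Real.exp r)⁻¹ * Real.exp r ^ 2 = 8 * h * Real.exp r := by field_simp
        rw [e2]; nlinarith
      have h2 : Real.exp (-α * (r + h)) ≤ 1 := Real.exp_le_one_iff.2 (by nlinarith [mul_nonneg hα (add_nonneg hr hh)])
      have h3 : |Real.exp (-α * r) - Real.exp (-α * (r + h))| ≤ h := by
        have a1 : Real.exp (-α * (r + h)) = Real.exp (-α * r) * Real.exp (-α * h) := by
          rw [← Real.exp_add]; ring_nf
        have a2 : Real.exp (-α * r) ≤ 1 := Real.exp_le_one_iff.2 (by nlinarith)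
        have a3 : Real.exp (-α * h) ≤ 1 := Real.exp_le_one_iff.2 (by nlinarith)
        have a4 : -α * h + 1 ≤ Real.exp (-α * h) := Real.add_one_le_exp _
        have a5 := Real.exp_pos (-α * r)
        rw [a1, abs_of_nonneg (by nlinarith)]
        nlinarith
      have h4 : kf (Real.exp r) ≤ Real.exp (-r) := by
        have := kf_le (Real.exp_pos r)
        rwa [one_div, ← Real.exp_neg] at this
      rw [e]
      refine (abs_add_le _ _).trans ?_
      rw [abs_mul, abs_mul, abs_of_pos (Real.exp_pos (-α * (r + h))), abs_of_nonneg (kf_nonneg _)]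
      have m1 := mul_le_mul h1 h2 (Real.exp_pos _).le (by positivity)
      have m2 := mul_le_mul h4 h3 (abs_nonneg _) (Real.exp_pos _).le
      linarith
  have hI : Integrable fun r => (Set.Icc (-h) 0).indicator (fun _ => (1:ℝ)) r :=
    (integrable_indicator_iff measurableSet_Icc).2 (by simp)
  refine (integral_mono ?_ (hI.add (integrable_expInd.const_mul (9 * h))) hb).trans ?_
  · exact ((integrable_kap hα).sub ((integrable_kap hα).comp_add_right h)).abs
  · have := integral_add hI (integrable_expInd.const_mul (9 * h))
    simp only [Pi.add_apply] at this ⊢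
    rw [this, integral_const_mul, integral_expInd, integral_indicator measurableSet_Icc]
    simp [hh]
    linarith

/-- `κ_α` as a complex-valued function. -/
noncomputable def kapC (α r : ℝ) : ℂ := (kap α r : ℂ)

theorem integrable_kapC {α : ℝ} (hα : 0 ≤ α) : Integrable (kapC α) := (integrable_kap hα).ofReal

/-- Decay of the transform of `κ_α`: translating by half a period replaces `κ_α` by half a
difference, whose `L¹` norm is controlled by `integral_kap_shift`. -/
theorem norm_fourier_kap_le {α : ℝ} (hα : 0 ≤ α) (hα1 : α ≤ 1) (ξ : ℝ) :
    ‖𝓕 (kapC α) ξ‖ ≤ 21 / (1 + |2 * Real.pi * ξ|) := by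
  have hpi := Real.pi_lt_d2
  have hpi0 := Real.pi_pos
  have e : 1 + |2 * Real.pi * ξ| ≤ 1 + 6.3 * |ξ| := by
    rw [abs_mul, abs_of_pos (by positivity)]
    have := abs_nonneg ξ
    nlinarith
  have hn : ∀ r, ‖kapC α r‖ = |kap α r| := fun r => by simp [kapC]
  rcases le_total |ξ| (1/2) with h | h
  · have h1 : ‖𝓕 (kapC α) ξ‖ ≤ 1 := by
      refine (VectorFourier.norm_fourierIntegral_le_integral_norm _ _ _ _ _).trans ?_
      simp_rw [hn]
      exact integral_abs_kap_le hα
    refine h1.trans ?_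
    rw [le_div_iff₀ (by positivity)]
    linarith
  · have hξ : ξ ≠ 0 := by rintro rfl; simp at h; linarith
    have hs := fourierIntegral_eq_half_sub_half_period_translate (w := ξ) hξ (integrable_kapC hα)
    set η := (1 / (2 * ‖ξ‖ ^ 2)) • ξ with hη
    have hξa : 0 < |ξ| := by positivity
    have hηabs : |η| = 1 / (2 * |ξ|) := by
      rw [hη, smul_eq_mul, abs_mul, Real.norm_eq_abs, abs_of_pos (by positivity)]
      field_simp
    have hη1 : |η| ≤ 1 := by
      rw [hηabs, div_le_one (by positivity)]; linarith
    have hI : ∫ r, |kap α r - kap α (r + η)| ≤ 10 * |η| := by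
      rcases le_total 0 η with h0 | h0
      · rw [abs_of_nonneg h0] at hη1 ⊢
        exact integral_kap_shift hα hα1 h0 hη1
      · rw [abs_of_nonpos h0] at hη1 ⊢
        rw [← integral_add_right_eq_self (fun r => |kap α r - kap α (r + η)|) (-η)]
        have := integral_kap_shift hα hα1 (by linarith) hη1
        refine le_trans (le_of_eq ?_) this
        refine integral_congr_ae (Filter.Eventually.of_forall fun r => ?_)
        simp only [neg_add_cancel_right]
        rw [abs_sub_comm]
    have h2 : ‖𝓕 (kapC α) ξ‖ ≤ 1 / 2 * (10 * |η|) := by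
      rw [Real.fourier_eq, hs, norm_smul]
      refine mul_le_mul (by simp) ?_ (norm_nonneg _) (by norm_num)
      refine (norm_integral_le_integral_norm _).trans ?_
      refine le_trans (le_of_eq ?_) hI
      refine integral_congr_ae (Filter.Eventually.of_forall fun r => ?_)
      simp only [Circle.norm_smul]
      simp only [kapC]
      rw [← Complex.ofReal_sub, Complex.norm_real, Real.norm_eq_abs]
    refine h2.trans ?_
    rw [hηabs]
    rw [le_div_iff₀ (by positivity)]
    have : 1 / 2 * (10 * (1 / (2 * |ξ|))) * (1 + |2 * Real.pi * ξ|) ≤ 1 / 2 * (10 * (1 / (2 * |ξ|))) * (1 + 6.3 * |ξ|) := by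
      gcongr
    refine this.trans ?_
    have e3 : 1 / 2 * (10 * (1 / (2 * |ξ|))) * (1 + 6.3 * |ξ|) = 5 / (2 * |ξ|) + 15.75 := by
      field_simp; ring
    rw [e3]
    have : 5 / (2 * |ξ|) ≤ 4.25 + 0.75 := by rw [div_le_iff₀ (by positivity)]; linarith
    linarith

end LogHalasz

/-! ### Second moment of a Dirichlet series supported on prime powers -/

namespace LogHalasz
open ArithmeticFunction (vonMangoldt)
open MeasureTheory

/-- The weights `Λ(n) n^{-1-α}`. -/
noncomputable def vm (α : ℝ) (n : ℕ) : ℝ := vonMangoldt n * (n : ℝ) ^ (-(1 + α))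

theorem vm_nonneg (α : ℝ) (n : ℕ) : 0 ≤ vm α n :=
  mul_nonneg ArithmeticFunction.vonMangoldt_nonneg (by positivity)

theorem vm_zero (α : ℝ) : vm α 0 = 0 := by simp [vm]

/-- For fixed `n`, the weights `vm m` with `m ≤ n` against `m / n` have bounded sum. -/
theorem sum_vm_mul_le {α : ℝ} (hα : 0 < α) (n : ℕ) :
    ∑ m ∈ Icc 1 n, vm α m * ((m : ℝ) / n) ≤ cheb := by
  rcases Nat.eq_zero_or_pos n with rfl | hn
  · simpa using cheb_pos.le
  have hn0 : (0 : ℝ) < n := by exact_mod_cast hn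
  calc ∑ m ∈ Icc 1 n, vm α m * ((m : ℝ) / n) ≤ ∑ m ∈ Icc 1 n, vonMangoldt m / n := by
        refine sum_le_sum fun m hm => ?_
        have hm1 : (1 : ℝ) ≤ m := by exact_mod_cast (mem_Icc.1 hm).1
        have hm0 : (0 : ℝ) < m := by linarith
        have e : (m : ℝ) ^ (-(1 + α)) * m ≤ 1 := by
          have : (m : ℝ) ^ (-(1 + α)) * m = (m : ℝ) ^ (-α) := by
            conv_lhs => rw [← Real.rpow_one (m : ℝ), ← Real.rpow_mul hm0.le, ← Real.rpow_add hm0]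
            congr 1; ring
          rw [this]
          exact Real.rpow_le_one_of_one_le_of_nonpos hm1 (by linarith)
        unfold vm
        rw [← mul_div_assoc, mul_assoc]
        gcongr
        exact mul_le_of_le_one_right ArithmeticFunction.vonMangoldt_nonneg e
    _ = (∑ m ∈ Icc 1 n, vonMangoldt m) / n := by rw [sum_div]
    _ ≤ cheb := by rw [div_le_iff₀ hn0]; exact sum_vonMangoldt_le n

/-- Off-diagonal Gaussian decay, in the form used for the double sum. -/
theorem gauss_decay {n m : ℕ} (hm : 1 ≤ m) (h : m ≤ n) :
    Real.exp (-(Real.log n - Real.log m) ^ 2 / 4) ≤ Real.exp 1 * ((m : ℝ) / n) := by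
  have hm0 : (0 : ℝ) < m := by exact_mod_cast hm
  have hn0 : (0 : ℝ) < n := by exact_mod_cast (by omega : 0 < n)
  have e : Real.exp 1 * ((m : ℝ) / n) = Real.exp (1 - (Real.log n - Real.log m)) := by
    rw [Real.exp_sub, Real.exp_sub, Real.exp_log hm0, Real.exp_log hn0]; field_simp
  rw [e]
  apply Real.exp_le_exp.2
  nlinarith [sq_nonneg (Real.log n - Real.log m - 2)]

/-- The double sum governing the second moment; near-diagonal terms are bounded by Chebyshev, with
no information on primes in short intervals. -/
theorem double_sum_le {α : ℝ} (hα : 0 < α) (N : ℕ) :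
    ∑ n ∈ Icc 1 N, ∑ m ∈ Icc 1 N, vm α n * vm α m * Real.exp (-(Real.log n - Real.log m) ^ 2 / 4) ≤
      2 * Real.exp 1 * cheb * (cheb * (1 + 1 / α)) := by
  set d : ℕ → ℕ → ℝ := fun n m => if m ≤ n then vm α n * (vm α m * (Real.exp 1 * ((m : ℝ) / n))) else 0 with hd
  have hd0 : ∀ n m, 0 ≤ d n m := by
    intro n m
    simp only [hd]
    have := vm_nonneg α n
    have := vm_nonneg α m
    split_ifs <;> positivity
  have h1 : ∑ n ∈ Icc 1 N, ∑ m ∈ Icc 1 N, d n m ≤ Real.exp 1 * cheb * (cheb * (1 + 1 / α)) := by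
    have : ∀ n ∈ Icc 1 N, ∑ m ∈ Icc 1 N, d n m ≤ Real.exp 1 * cheb * vm α n := by
      intro n hn
      have hnN := (mem_Icc.1 hn).2
      have e : ∑ m ∈ Icc 1 N, d n m = ∑ m ∈ Icc 1 n, vm α n * (vm α m * (Real.exp 1 * ((m : ℝ) / n))) := by
        simp only [hd]
        rw [← sum_filter]
        refine sum_congr ?_ fun _ _ => rfl
        ext m; simp only [mem_filter, mem_Icc]; omega
      rw [e, ← mul_sum]
      have e2 : ∑ m ∈ Icc 1 n, vm α m * (Real.exp 1 * ((m : ℝ) / n)) =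
          Real.exp 1 * ∑ m ∈ Icc 1 n, vm α m * ((m : ℝ) / n) := by
        rw [mul_sum]; exact sum_congr rfl fun _ _ => by ring
      rw [e2, mul_comm]
      have := sum_vm_mul_le hα n
      have := vm_nonneg α n
      gcongr
    refine (sum_le_sum this).trans ?_
    rw [← mul_sum]
    have hs := sum_vonMangoldt_rpow_le hα
    have := (hs.1.sum_le_tsum (Icc 1 N) (fun n _ => vm_nonneg α n)).trans hs.2
    have hc := cheb_pos
    exact mul_le_mul_of_nonneg_left this (by positivity)
  have h2 : ∑ n ∈ Icc 1 N, ∑ m ∈ Icc 1 N, d m n ≤ Real.exp 1 * cheb * (cheb * (1 + 1 / α)) := by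
    rw [sum_comm]; exact h1
  calc _ ≤ ∑ n ∈ Icc 1 N, ∑ m ∈ Icc 1 N, (d n m + d m n) := by
        refine sum_le_sum fun n hn => sum_le_sum fun m hm => ?_
        have hn1 := (mem_Icc.1 hn).1
        have hm1 := (mem_Icc.1 hm).1
        have b1 := vm_nonneg α n
        have b2 := vm_nonneg α m
        rcases le_total m n with h | h
        · refine le_trans ?_ (le_add_of_nonneg_right (hd0 _ _))
          simp only [hd, if_pos h]
          rw [mul_assoc]
          have := gauss_decay hm1 h
          gcongr
        · refine le_trans ?_ (le_add_of_nonneg_left (hd0 _ _))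
          simp only [hd, if_pos h]
          have := gauss_decay hn1 h
          rw [mul_comm (vm α n), mul_assoc, ← neg_sub (Real.log m), neg_sq]
          gcongr
    _ ≤ _ := by
        simp_rw [sum_add_distrib]
        linarith

/-- Gaussian-weighted second moment over a unit window for a Dirichlet polynomial with
coefficients dominated by `Λ(n) n^{-1-α}`. -/
theorem second_moment {α : ℝ} (hα : 0 < α) (b : ℕ → ℝ) (hb : ∀ n, |b n| ≤ vm α n) (T : ℝ) :
    ∫ t : ℝ, ‖∑' n : ℕ, (b n : ℂ) * Complex.exp (-(t * Real.log n) * Complex.I)‖ ^ 2 *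
      Real.exp (-(t - T) ^ 2) ≤
      Real.sqrt Real.pi * (2 * Real.exp 1 * cheb * (cheb * (1 + 1 / α))) := by
  have hsv := (sum_vonMangoldt_rpow_le hα).1
  have hsb : Summable fun n => |b n| := Summable.of_nonneg_of_le (fun _ => abs_nonneg _) hb hsv
  set F : ℕ × ℕ → ℝ → ℂ := fun q t => (b q.1 : ℂ) * b q.2 *
    (Complex.exp (Complex.I * ((Real.log q.2 - Real.log q.1 : ℝ) : ℂ) * t) * Complex.exp (-1 * ((t - T : ℝ) : ℂ) ^ 2)) with hF
  have hFn : ∀ q t, ‖F q t‖ = |b q.1| * |b q.2| * Real.exp (-1 * (t - T) ^ 2) := by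
    intro q t
    simp only [hF, norm_mul, Complex.norm_real, Real.norm_eq_abs, Complex.norm_exp]
    have h1 : (Complex.I * ((Real.log q.2 - Real.log q.1 : ℝ) : ℂ) * t).re = 0 := by
      generalize Real.log q.2 - Real.log q.1 = θ
      simp
    have h2 : (-1 * ((t - T : ℝ) : ℂ) ^ 2).re = -1 * (t - T) ^ 2 := by
      generalize t - T = θ
      have : -1 * (θ : ℂ) ^ 2 = ((-1 * θ ^ 2 : ℝ) : ℂ) := by push_cast; ring
      rw [this, Complex.ofReal_re]
    rw [h1, h2]; simp
  have hgi : Integrable fun t : ℝ => Real.exp (-1 * (t - T) ^ 2) :=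
    (integrable_exp_neg_mul_sq zero_lt_one).comp_sub_right T
  have hFi : ∀ q, Integrable (F q) := by
    intro q
    refine (hgi.const_mul (|b q.1| * |b q.2|)).mono' ?_ (Filter.Eventually.of_forall fun t => (hFn q t).le)
    refine Continuous.aestronglyMeasurable ?_
    simp only [hF]; fun_prop
  have hFs : Summable fun q => ∫ t, ‖F q t‖ := by
    simp_rw [hFn, integral_const_mul]
    exact ((hsb.mul_of_nonneg hsb (fun _ => abs_nonneg _) (fun _ => abs_nonneg _))).mul_right _
  have hsum := hasSum_integral_of_summable_integral_norm hFi hFs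
  have hpt : ∀ t : ℝ, ∑' q, F q t = ((‖∑' n : ℕ, (b n : ℂ) * Complex.exp (-(t * Real.log n) * Complex.I)‖ ^ 2 *
      Real.exp (-(t - T) ^ 2) : ℝ) : ℂ) := by
    intro t
    set u : ℕ → ℂ := fun n => (b n : ℂ) * Complex.exp (-(t * Real.log n) * Complex.I) with hu
    have hun : ∀ n, ‖u n‖ = |b n| := by
      intro n
      simp only [hu, norm_mul, Complex.norm_real, Real.norm_eq_abs]
      rw [← Complex.ofReal_mul, ← Complex.ofReal_neg, Complex.norm_exp_ofReal_mul_I, mul_one]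
    have hus : Summable fun n => ‖u n‖ := by simpa only [hun] using hsb
    have hus' : Summable fun n => ‖(starRingEnd ℂ) (u n)‖ := by simpa using hus
    have e1 : ((‖∑' n, u n‖ ^ 2 : ℝ) : ℂ) = ∑' q : ℕ × ℕ, u q.1 * (starRingEnd ℂ) (u q.2) := by
      rw [← tsum_mul_tsum_of_summable_norm hus hus', ← Complex.conj_tsum, Complex.mul_conj, Complex.normSq_eq_norm_sq]
    rw [Complex.ofReal_mul, e1, ← tsum_mul_right]
    refine tsum_congr fun q => ?_
    simp only [hF, hu, map_mul, Complex.conj_ofReal, ← Complex.exp_conj]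
    have e2 : ((Real.exp (-(t - T) ^ 2) : ℝ) : ℂ) = Complex.exp (-1 * ((t - T : ℝ) : ℂ) ^ 2) := by
      rw [Complex.ofReal_exp]; congr 1; push_cast; ring
    rw [e2]
    have e3 : Complex.exp (Complex.I * ((Real.log q.2 - Real.log q.1 : ℝ) : ℂ) * t) =
        Complex.exp (-(t * Real.log q.1) * Complex.I) * Complex.exp (-(t * Real.log q.2) * (starRingEnd ℂ) Complex.I) := by
      rw [← Complex.exp_add]; congr 1; push_cast; rw [Complex.conj_I]; ring
    simp only [map_neg, map_mul, Complex.conj_ofReal]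
    rw [e3]; ring
  simp_rw [hpt] at hsum
  rw [integral_complex_ofReal] at hsum
  have hintg : ∀ q, ‖∫ t, F q t‖ ≤ Real.sqrt Real.pi * (vm α q.1 * vm α q.2 *
      Real.exp (-(Real.log q.1 - Real.log q.2) ^ 2 / 4)) := by
    intro q
    rw [← integral_add_right_eq_self (F q) T]
    set θ : ℝ := Real.log q.2 - Real.log q.1 with hθ
    have e : ∀ t, F q (t + T) = ((b q.1 : ℂ) * b q.2 * Complex.exp (Complex.I * θ * T)) *
        (Complex.exp (Complex.I * θ * t) * Complex.exp (-1 * (t : ℂ) ^ 2)) := by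
      intro t
      simp only [hF]
      have e3 : Complex.exp (Complex.I * (θ : ℂ) * ((t + T : ℝ) : ℂ)) =
        Complex.exp (Complex.I * θ * T) * Complex.exp (Complex.I * θ * t) := by
        rw [← Complex.exp_add]; congr 1; push_cast; ring
      rw [← hθ, e3, add_sub_cancel_right]; ring
    simp_rw [e]
    rw [integral_const_mul, fourierIntegral_gaussian (by simp) (θ : ℂ)]
    have n1 : ‖Complex.exp (Complex.I * θ * T)‖ = 1 := by
      rw [Complex.norm_exp]; simp
    have n2 : ‖((Real.pi : ℂ) / 1) ^ (1 / 2 : ℂ)‖ = Real.sqrt Real.pi := by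
      rw [div_one, Complex.norm_cpow_eq_rpow_re_of_pos Real.pi_pos, Real.sqrt_eq_rpow]; simp
    have n3 : ‖Complex.exp (-(θ : ℂ) ^ 2 / (4 * 1))‖ = Real.exp (-(Real.log q.1 - Real.log q.2) ^ 2 / 4) := by
      rw [Complex.norm_exp]
      congr 1
      have : (-(θ : ℂ) ^ 2 / (4 * 1)) = ((-θ ^ 2 / 4 : ℝ) : ℂ) := by push_cast; ring
      rw [this, Complex.ofReal_re, hθ]; ring
    rw [norm_mul, norm_mul, norm_mul, norm_mul, n1, n2, n3]
    simp only [Complex.norm_real, Real.norm_eq_abs, mul_one]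
    have b1 := vm_nonneg α q.1
    have b2 := vm_nonneg α q.2
    have := hb q.1
    have := hb q.2
    calc |b q.1| * |b q.2| * (Real.sqrt Real.pi * Real.exp (-(Real.log q.1 - Real.log q.2) ^ 2 / 4))
        ≤ vm α q.1 * vm α q.2 * (Real.sqrt Real.pi * Real.exp (-(Real.log q.1 - Real.log q.2) ^ 2 / 4)) := by
          gcongr
      _ = _ := by ring
  set I : ℝ := ∫ t : ℝ, ‖∑' n : ℕ, (b n : ℂ) * Complex.exp (-(t * Real.log n) * Complex.I)‖ ^ 2 *
      Real.exp (-(t - T) ^ 2) with hI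
  set M := Real.sqrt Real.pi * (2 * Real.exp 1 * cheb * (cheb * (1 + 1 / α))) with hM
  have hfin : ∀ s : Finset (ℕ × ℕ), (∑ q ∈ s, ∫ t, F q t).re ≤ M := by
    intro s
    refine (Complex.re_le_norm _).trans ((norm_sum_le _ _).trans ?_)
    refine (sum_le_sum fun q _ => hintg q).trans ?_
    rw [← mul_sum]
    obtain ⟨N, hN⟩ : ∃ N : ℕ, ∀ q ∈ s, q.1 ≤ N ∧ q.2 ≤ N := by
      refine ⟨s.sup (fun q => max q.1 q.2), fun q hq => ?_⟩
      have := le_sup (f := fun q : ℕ × ℕ => max q.1 q.2) hq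
      omega
    have hle : ∑ q ∈ s, vm α q.1 * vm α q.2 * Real.exp (-(Real.log q.1 - Real.log q.2) ^ 2 / 4) ≤
        ∑ q ∈ Icc 1 N ×ˢ Icc 1 N, vm α q.1 * vm α q.2 * Real.exp (-(Real.log q.1 - Real.log q.2) ^ 2 / 4) := by
      have hnn : ∀ q : ℕ × ℕ, 0 ≤ vm α q.1 * vm α q.2 * Real.exp (-(Real.log q.1 - Real.log q.2) ^ 2 / 4) :=
        fun q => mul_nonneg (mul_nonneg (vm_nonneg _ _) (vm_nonneg _ _)) (Real.exp_pos _).le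
      rw [← sum_filter_add_sum_filter_not s (fun q => q.1 = 0 ∨ q.2 = 0)]
      have z : ∑ q ∈ s with (q.1 = 0 ∨ q.2 = 0), vm α q.1 * vm α q.2 *
          Real.exp (-(Real.log q.1 - Real.log q.2) ^ 2 / 4) = 0 := by
        refine sum_eq_zero fun q hq => ?_
        rcases (mem_filter.1 hq).2 with h | h <;> simp [h, vm_zero]
      rw [z, zero_add]
      refine sum_le_sum_of_subset_of_nonneg ?_ (fun q _ _ => hnn q)
      intro q hq
      obtain ⟨h1, h2⟩ := mem_filter.1 hq
      have := hN q h1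
      rw [mem_product, mem_Icc, mem_Icc]
      omega
    rw [hM]
    refine mul_le_mul_of_nonneg_left (hle.trans ?_) (Real.sqrt_nonneg _)
    rw [sum_product]
    exact double_sum_le hα N
  have hre := Complex.hasSum_re hsum
  rw [Complex.ofReal_re] at hre
  refine hasSum_le_of_sum_le hre fun s => ?_
  rw [← Complex.re_sum]
  exact hfin s

end LogHalasz

/-! ### A weighted second moment over the whole line -/

namespace LogHalasz
open ArithmeticFunction (vonMangoldt)
open MeasureTheory

theorem two_div_pi_lt_one : 2 / Real.pi < 1 := by
  rw [div_lt_one Real.pi_pos]; linarith [Real.pi_gt_three]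

/-- `∑ b_n n^{-it}`. -/
noncomputable def dirP (b : ℕ → ℝ) (t : ℝ) : ℂ :=
  ∑' n : ℕ, (b n : ℂ) * Complex.exp (-(t * Real.log n) * Complex.I)

theorem norm_dirP_term (b : ℕ → ℝ) (t : ℝ) (n : ℕ) :
    ‖(b n : ℂ) * Complex.exp (-(t * Real.log n) * Complex.I)‖ = |b n| := by
  rw [norm_mul, Complex.norm_real, Real.norm_eq_abs, ← Complex.ofReal_mul, ← Complex.ofReal_neg,
    Complex.norm_exp_ofReal_mul_I, mul_one]

theorem continuous_dirP {b : ℕ → ℝ} (hb : Summable fun n => |b n|) : Continuous (dirP b) := by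
  unfold dirP
  refine continuous_tsum (fun n => by fun_prop) hb (fun n t => (norm_dirP_term b t n).le)

theorem norm_dirP_le {b : ℕ → ℝ} (hb : Summable fun n => |b n|) (t : ℝ) :
    ‖dirP b t‖ ≤ ∑' n, |b n| := by
  unfold dirP
  have : Summable fun n : ℕ => ‖(b n : ℂ) * Complex.exp (-(t * Real.log n) * Complex.I)‖ := by
    simpa only [norm_dirP_term] using hb
  refine (norm_tsum_le_tsum_norm this).trans (le_of_eq ?_)
  exact tsum_congr fun n => norm_dirP_term b t n

theorem summable_int_weight :
    Summable fun k : ℤ => (1 + |(k : ℝ)|) ^ (-(2 - 2 / Real.pi)) := by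
  have h1 : Summable fun n : ℕ => (1 + |(n : ℝ)|) ^ (-(2 - 2 / Real.pi)) := by
    have h := (Real.summable_nat_rpow (p := -(2 - 2 / Real.pi))).2 (by linarith [two_div_pi_lt_one])
    refine ((summable_nat_add_iff 1).2 h).congr fun n => ?_
    rw [abs_of_nonneg (by positivity)]; push_cast; rw [add_comm]
  refine Summable.of_nat_of_neg ?_ ?_
  · simpa using h1
  · simpa using h1

/-- `second_moment` summed over unit windows; the weight is summable because `2 - 2/π > 1`. -/
theorem weighted_moment : ∃ C : ℝ, 0 < C ∧ ∀ α : ℝ, 0 < α → α ≤ 1 → ∀ b : ℕ → ℝ,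
    (∀ n, |b n| ≤ vm α n) →
    Integrable (fun t : ℝ => (1 + |t|) ^ (-(2 - 2 / Real.pi)) * ‖dirP b t‖ ^ 2) ∧
    ∫ t : ℝ, (1 + |t|) ^ (-(2 - 2 / Real.pi)) * ‖dirP b t‖ ^ 2 ≤ C / α := by
  set s := 2 - 2 / Real.pi with hs
  have hs1 : 1 < s := by have := two_div_pi_lt_one; rw [hs]; linarith
  set A := ∑' k : ℤ, (1 + |(k : ℝ)|) ^ (-s) with hA
  have hA0 : 0 ≤ A := tsum_nonneg fun k => by positivity
  set K := Real.sqrt Real.pi * (2 * Real.exp 1 * cheb * (cheb * 2)) with hK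
  have hK0 : 0 ≤ K := by have := cheb_pos; positivity
  refine ⟨Real.exp 1 * 2 ^ s * A * K + 1, by positivity, fun α hα hα1 b hb => ?_⟩
  have hsb : Summable fun n => |b n| :=
    Summable.of_nonneg_of_le (fun _ => abs_nonneg _) hb (sum_vonMangoldt_rpow_le hα).1
  have hcont := continuous_dirP hsb
  have hbd := norm_dirP_le hsb
  set B := ∑' n, |b n| with hB
  have hcw : Continuous fun t : ℝ => (1 + |t|) ^ (-s) := by
    refine Continuous.rpow_const (by fun_prop) fun t => Or.inl (by positivity)
  have hintg : Integrable (fun t : ℝ => (1 + |t|) ^ (-s) * ‖dirP b t‖ ^ 2) := by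
    have h1 : Integrable fun t : ℝ => (1 + ‖t‖) ^ (-s) :=
      integrable_one_add_norm (by simpa using hs1)
    refine (h1.mul_const (B ^ 2)).mono' ?_ (Filter.Eventually.of_forall fun t => ?_)
    · exact (hcw.mul (by fun_prop)).aestronglyMeasurable
    · rw [Real.norm_of_nonneg (by positivity), Real.norm_eq_abs]
      have := hbd t
      gcongr
  refine ⟨hintg, ?_⟩
  have hgi : ∀ T : ℝ, Integrable fun t : ℝ => ‖dirP b t‖ ^ 2 * Real.exp (-(t - T) ^ 2) := by
    intro T
    have h1 : Integrable fun t : ℝ => Real.exp (-1 * (t - T) ^ 2) :=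
      (integrable_exp_neg_mul_sq zero_lt_one).comp_sub_right T
    refine (h1.const_mul (B ^ 2)).mono' ?_ (Filter.Eventually.of_forall fun t => ?_)
    · exact Continuous.aestronglyMeasurable (by fun_prop)
    · rw [Real.norm_of_nonneg (by positivity), neg_one_mul]
      have := hbd t
      gcongr
  have hm : ∀ T : ℝ, ∫ t : ℝ, ‖dirP b t‖ ^ 2 * Real.exp (-(t - T) ^ 2) ≤ K / α := by
    intro T
    refine (second_moment hα b hb T).trans ?_
    have : 1 + 1 / α ≤ 2 / α := by
      have h1 : 1 ≤ 1 / α := by rw [le_div_iff₀ hα]; linarith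
      have h2 : 2 / α = 1 / α + 1 / α := by ring
      linarith
    have hc := cheb_pos
    calc _ ≤ Real.sqrt Real.pi * (2 * Real.exp 1 * cheb * (cheb * (2 / α))) := by gcongr
      _ = K / α := by rw [hK]; ring
  set c : ℤ → ℝ := fun k => Real.exp 1 * 2 ^ s * (1 + |(k : ℝ)|) ^ (-s) with hc
  have hc0 : ∀ k, 0 ≤ c k := fun k => by simp only [hc]; positivity
  have hcs : Summable c := summable_int_weight.mul_left _
  have hpt : ∀ t : ℝ, (1 + |t|) ^ (-s) * ‖dirP b t‖ ^ 2 ≤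
      c ⌊t⌋ * (‖dirP b t‖ ^ 2 * Real.exp (-(t - ⌊t⌋) ^ 2)) := by
    intro t
    have f0 := Int.floor_le t
    have f1 := Int.lt_floor_add_one t
    have h1 : 1 ≤ Real.exp 1 * Real.exp (-(t - ⌊t⌋) ^ 2) := by
      rw [← Real.exp_add]; apply Real.one_le_exp; nlinarith
    have h2 : (1 + |t|) ^ (-s) ≤ 2 ^ s * (1 + |((⌊t⌋ : ℤ) : ℝ)|) ^ (-s) := by
      have h3 : (1 + |((⌊t⌋ : ℤ) : ℝ)|) / 2 ≤ 1 + |t| := by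
        have : |((⌊t⌋ : ℤ) : ℝ)| ≤ |t| + 1 := by
          have : |((⌊t⌋ : ℤ) : ℝ) - t| ≤ 1 := by rw [abs_le]; constructor <;> linarith
          have := abs_sub_abs_le_abs_sub ((⌊t⌋ : ℤ) : ℝ) t
          linarith
        linarith [abs_nonneg t]
      calc (1 + |t|) ^ (-s) ≤ ((1 + |((⌊t⌋ : ℤ) : ℝ)|) / 2) ^ (-s) :=
            Real.rpow_le_rpow_of_nonpos (by positivity) h3 (by linarith)
        _ = _ := by
            rw [Real.div_rpow (by positivity) (by norm_num), Real.rpow_neg (by norm_num : (0:ℝ) ≤ 2)]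
            field_simp
    have hd : 0 ≤ ‖dirP b t‖ ^ 2 := by positivity
    simp only [hc]
    calc (1 + |t|) ^ (-s) * ‖dirP b t‖ ^ 2 ≤ (2 ^ s * (1 + |((⌊t⌋ : ℤ) : ℝ)|) ^ (-s)) * ‖dirP b t‖ ^ 2 * 1 := by
          rw [mul_one]; gcongr
      _ ≤ (2 ^ s * (1 + |((⌊t⌋ : ℤ) : ℝ)|) ^ (-s)) * ‖dirP b t‖ ^ 2 * (Real.exp 1 * Real.exp (-(t - ⌊t⌋) ^ 2)) := by
          gcongr
      _ = _ := by ring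
  rw [integral_eq_lintegral_of_nonneg_ae (Filter.Eventually.of_forall fun t => by positivity)
    hintg.aestronglyMeasurable]
  refine ENNReal.toReal_le_of_le_ofReal (by positivity) ?_
  calc ∫⁻ t : ℝ, ENNReal.ofReal ((1 + |t|) ^ (-s) * ‖dirP b t‖ ^ 2)
      ≤ ∫⁻ t : ℝ, ∑' k : ℤ, ENNReal.ofReal (c k * (‖dirP b t‖ ^ 2 * Real.exp (-(t - k) ^ 2))) := by
        refine lintegral_mono fun t => ?_
        refine (ENNReal.ofReal_le_ofReal (hpt t)).trans ?_
        exact ENNReal.le_tsum (f := fun k : ℤ => ENNReal.ofReal (c k * (‖dirP b t‖ ^ 2 * Real.exp (-(t - k) ^ 2)))) ⌊t⌋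
    _ = ∑' k : ℤ, ∫⁻ t : ℝ, ENNReal.ofReal (c k * (‖dirP b t‖ ^ 2 * Real.exp (-(t - k) ^ 2))) := by
        refine lintegral_tsum fun k => ?_
        exact (ENNReal.continuous_ofReal.comp (by fun_prop)).measurable.aemeasurable
    _ ≤ ∑' k : ℤ, ENNReal.ofReal (c k * (K / α)) := by
        refine ENNReal.tsum_le_tsum fun k => ?_
        rw [← ofReal_integral_eq_lintegral_ofReal ((hgi k).const_mul (c k))
          (Filter.Eventually.of_forall fun t => mul_nonneg (hc0 k) (by positivity))]
        apply ENNReal.ofReal_le_ofReal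
        rw [integral_const_mul]
        exact mul_le_mul_of_nonneg_left (hm k) (hc0 k)
    _ = ENNReal.ofReal (∑' k : ℤ, c k * (K / α)) := by
        rw [ENNReal.ofReal_tsum_of_nonneg (fun k => mul_nonneg (hc0 k) (by positivity)) (hcs.mul_right _)]
    _ ≤ _ := by
        apply ENNReal.ofReal_le_ofReal
        rw [tsum_mul_right]
        have : ∑' k, c k = Real.exp 1 * 2 ^ s * A := tsum_mul_left
        rw [this, ← mul_div_assoc]
        gcongr
        linarith

end LogHalasz

/-! ### Mean square of `N` -/

namespace LogHalasz
open ArithmeticFunction (vonMangoldt)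
open MeasureTheory FourierTransform

theorem term_pt (c : ℕ → ℝ) {α : ℝ} (hα : 0 < α) (t : ℝ) (n : ℕ) :
    LSeries.term (fun n => (c n : ℂ)) (pt α t) n =
      ((c n * (n : ℝ) ^ (-(1 + α)) : ℝ) : ℂ) * Complex.exp (-(t * Real.log n) * Complex.I) := by
  rcases Nat.eq_zero_or_pos n with rfl | hn
  · simp [Real.zero_rpow (show -α + -1 ≠ 0 by linarith)]
  · have hn0 : (n : ℂ) ≠ 0 := by exact_mod_cast hn.ne'
    rw [LSeries.term_of_ne_zero hn.ne', div_eq_mul_inv, ← Complex.cpow_neg]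
    push_cast
    rw [mul_assoc, Complex.ofReal_cpow (by positivity)]
    congr 1
    rw [Complex.ofReal_natCast, Complex.cpow_def_of_ne_zero hn0, Complex.cpow_def_of_ne_zero hn0,
      ← Complex.exp_add]
    congr 1
    simp only [pt]; push_cast; ring

theorem LSeries_eq_dirP (c : ℕ → ℝ) {α : ℝ} (hα : 0 < α) (t : ℝ) :
    LSeries (fun n => (c n : ℂ)) (pt α t) = dirP (fun n => c n * (n : ℝ) ^ (-(1 + α))) t := by
  unfold LSeries dirP
  exact tsum_congr fun n => term_pt c hα t n

theorem LSeriesSummable_of_abs {c : ℕ → ℝ} {α : ℝ} (hα : 0 < α) (t : ℝ)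
    (h : Summable fun n : ℕ => |c n * (n : ℝ) ^ (-(1 + α))|) :
    LSeriesSummable (fun n => (c n : ℂ)) (pt α t) := by
  unfold LSeriesSummable
  refine Summable.of_norm ?_
  refine h.congr fun n => ?_
  rw [term_pt c hα, norm_dirP_term (fun n => c n * (n : ℝ) ^ (-(1 + α)))]

theorem gvm_le {g : ℕ → ℝ} (hg : ∀ n, |g n| ≤ 1) (α : ℝ) (n : ℕ) :
    |g n * vonMangoldt n * (n : ℝ) ^ (-(1 + α))| ≤ vm α n := by
  unfold vm
  rw [abs_mul, abs_mul, abs_of_nonneg (ArithmeticFunction.vonMangoldt_nonneg (n := n)),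
    abs_of_nonneg (by positivity : (0:ℝ) ≤ (n : ℝ) ^ (-(1 + α)))]
  refine mul_le_mul_of_nonneg_right ?_ (by positivity)
  exact mul_le_of_le_one_left ArithmeticFunction.vonMangoldt_nonneg (hg n)

/-- The identity `-G' = G · P` of Dirichlet series, on the line of real part `1 + α`. -/
theorem dirP_log {g : ℕ →*₀ ℝ} (hg : ∀ n, |g n| ≤ 1) {α : ℝ} (hα : 0 < α) (t : ℝ) :
    dirP (fun n => g n * Real.log n * (n : ℝ) ^ (-(1 + α))) t =
      dirP (fun n => g n * vonMangoldt n * (n : ℝ) ^ (-(1 + α))) t * DS g (pt α t) := by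
  have s1 : LSeriesSummable (fun n => ((g n * vonMangoldt n : ℝ) : ℂ)) (pt α t) := by
    apply LSeriesSummable_of_abs hα
    exact Summable.of_nonneg_of_le (fun _ => abs_nonneg _) (gvm_le hg α) (sum_vonMangoldt_rpow_le hα).1
  have s2 := LSeriesSummable_g hg hα t
  have h1 := LSeries_convolution' s1 s2
  rw [LSeries_eq_DS, LSeries_eq_dirP (fun n => g n * vonMangoldt n) hα] at h1
  rw [← h1, ← LSeries_eq_dirP (fun n => g n * Real.log n) hα]
  apply LSeries_congr
  intro n hn
  rw [LSeries.convolution_def]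
  rw [← ArithmeticFunction.vonMangoldt_sum, ← sum_anti_fst (fun d => vonMangoldt d)]
  push_cast
  rw [mul_sum]
  refine sum_congr rfl fun q hq => ?_
  rw [← (Nat.mem_divisorsAntidiagonal.1 hq).1, map_mul]
  push_cast; ring

/-- `φ(r) = N(e^r) e^{-αr}`. -/
noncomputable def phi (g : ℕ → ℝ) (α r : ℝ) : ℝ := Nf g (Real.exp r) * Real.exp (-α * r)

theorem measurable_phi (g : ℕ → ℝ) (α : ℝ) : Measurable (phi g α) :=
  ((measurable_KS _).comp Real.measurable_exp).mul (by fun_prop)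

theorem phi_neg (g : ℕ → ℝ) (α : ℝ) {r : ℝ} (h : r < 0) : phi g α r = 0 := by
  have : ⌊Real.exp r⌋₊ = 0 := Nat.floor_eq_zero.2 (Real.exp_lt_one_iff.2 h)
  simp [phi, Nf, KS, this]

theorem abs_phi_le {g : ℕ → ℝ} (hg : ∀ n, |g n| ≤ 1) {α : ℝ} (hα : 0 < α) (r : ℝ) :
    |phi g α r| ≤ (Set.Ici 0).indicator (fun r => (2 + 2 / α) * Real.exp (-(α / 2) * r)) r := by
  rcases lt_or_ge r 0 with h | h
  · rw [phi_neg g α h, Set.indicator_of_notMem (by simpa using h), abs_zero]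
  · rw [Set.indicator_of_mem (by exact h)]
    have h1 := abs_Tf_le hg (Real.one_le_exp h)
    have h2 := log_mul_Tf_sub_Nf hg (Real.one_le_exp h)
    rw [Real.log_exp] at h2
    have h3 : |Nf g (Real.exp r)| ≤ 2 + r := by
      rw [abs_le] at h1 h2 ⊢
      constructor <;> nlinarith
    have h4 : 2 + r ≤ (2 + 2 / α) * Real.exp (α / 2 * r) := by
      have a1 : α / 2 * r + 1 ≤ Real.exp (α / 2 * r) := Real.add_one_le_exp _
      have a2 : 1 ≤ Real.exp (α / 2 * r) := Real.one_le_exp (by positivity)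
      have a3 : r ≤ 2 / α * Real.exp (α / 2 * r) := by
        rw [div_mul_eq_mul_div, le_div_iff₀ hα]; linarith
      linarith
    unfold phi
    rw [abs_mul, abs_of_pos (Real.exp_pos (-α * r))]
    calc |Nf g (Real.exp r)| * Real.exp (-α * r) ≤ ((2 + 2 / α) * Real.exp (α / 2 * r)) * Real.exp (-α * r) := by
          gcongr; linarith
      _ = _ := by rw [mul_assoc, ← Real.exp_add]; ring_nf

theorem integrable_phi {g : ℕ → ℝ} (hg : ∀ n, |g n| ≤ 1) {α : ℝ} (hα : 0 < α) :
    Integrable (phi g α) := by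
  refine Integrable.mono' ?_ (measurable_phi g α).aestronglyMeasurable
    (Filter.Eventually.of_forall fun r => abs_phi_le hg hα r)
  rw [integrable_indicator_iff measurableSet_Ici, integrableOn_Ici_iff_integrableOn_Ioi]
  exact (exp_neg_integrableOn_Ioi 0 (half_pos hα)).const_mul _

theorem integrable_phi_sq {g : ℕ → ℝ} (hg : ∀ n, |g n| ≤ 1) {α : ℝ} (hα : 0 < α) :
    Integrable fun r => phi g α r ^ 2 := by
  have hbd : ∀ r, |phi g α r| ≤ 2 + 2 / α := by
    intro r
    refine (abs_phi_le hg hα r).trans ?_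
    by_cases hr : r ∈ Set.Ici (0:ℝ)
    swap
    · rw [Set.indicator_of_notMem hr]; positivity
    rw [Set.indicator_of_mem hr]
    have : Real.exp (-(α / 2) * r) ≤ 1 := Real.exp_le_one_iff.2 (by
      have : (0:ℝ) ≤ r := hr
      nlinarith)
    exact mul_le_of_le_one_right (by positivity) this
  refine ((integrable_phi hg hα).abs.const_mul (2 + 2 / α)).mono'
    ((measurable_phi g α).pow_const 2).aestronglyMeasurable (Filter.Eventually.of_forall fun r => ?_)
  rw [Real.norm_eq_abs, abs_pow, sq]
  exact mul_le_mul_of_nonneg_right (hbd r) (abs_nonneg _)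

/-- `φ` is a superposition of translates of `κ_α`, which makes its Fourier transform a product. -/
theorem phi_eq_tsum (g : ℕ → ℝ) (α r : ℝ) : phi g α r =
    ∑' n : ℕ, (g n * Real.log n * (n : ℝ) ^ (-(1 + α))) * kap α (r - Real.log n) := by
  have hz : ∀ n ∉ Icc 1 ⌊Real.exp r⌋₊,
      (g n * Real.log n * (n : ℝ) ^ (-(1 + α))) * kap α (r - Real.log n) = 0 := by
    intro n hn
    rcases Nat.eq_zero_or_pos n with rfl | hn1
    · simp
    · have h2 : ⌊Real.exp r⌋₊ < n := by
        by_contra hc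
        exact hn (mem_Icc.2 ⟨hn1, by omega⟩)
      have h3 := (Nat.floor_lt' (by omega)).1 h2
      have h4 : r < Real.log n := by
        rw [Real.lt_log_iff_exp_lt (by exact_mod_cast hn1)]; exact h3
      rw [kap_neg (by linarith), mul_zero]
  rw [tsum_eq_sum hz]
  unfold phi Nf KS
  rw [sum_mul]
  refine sum_congr rfl fun n hn => ?_
  have hn0 : (0 : ℝ) < n := by exact_mod_cast (mem_Icc.1 hn).1
  unfold kap
  have e1 : Real.exp (-α * (r - Real.log n)) = Real.exp (-α * r) * (n : ℝ) ^ α := by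
    rw [Real.rpow_def_of_pos hn0, ← Real.exp_add]; ring_nf
  have e2 : (n : ℝ) ^ (-(1 + α)) * (n : ℝ) ^ α = 1 / n := by
    rw [← Real.rpow_add hn0, one_div, ← Real.rpow_neg_one]; ring_nf
  rw [Real.exp_sub, Real.exp_log hn0, e1]
  calc _ = g n * Real.log n * (1 / n) * kf (Real.exp r / n) * Real.exp (-α * r) := by ring
    _ = _ := by rw [← e2]; ring

theorem summable_log_rpow {α : ℝ} (hα : 0 < α) :
    Summable fun n : ℕ => Real.log n * (n : ℝ) ^ (-(1 + α)) := by
  refine Summable.of_nonneg_of_le (fun n => ?_) (fun n => ?_)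
    (((summable_rpow (half_pos hα)).1).mul_left (2 / α))
  · have := Real.log_natCast_nonneg n
    positivity
  · rcases Nat.eq_zero_or_pos n with rfl | hn
    · simp; positivity
    have hn0 : (0 : ℝ) < n := by exact_mod_cast hn
    have := Real.log_le_rpow_div hn0.le (half_pos hα)
    calc _ ≤ (n : ℝ) ^ (α / 2) / (α / 2) * (n : ℝ) ^ (-(1 + α)) := by gcongr
      _ = 2 / α * ((n : ℝ) ^ (α / 2) * (n : ℝ) ^ (-(1 + α))) := by field_simp
      _ = _ := by rw [← Real.rpow_add hn0]; ring_nf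

/-- The Fourier transform of `φ` is `-G'` on the line `Re s = 1 + α`, times the transform of `κ_α`.
-/
theorem fourier_phi {g : ℕ →*₀ ℝ} (hg : ∀ n, |g n| ≤ 1) {α : ℝ} (hα : 0 < α) (ξ : ℝ) :
    𝓕 (fun r => (phi g α r : ℂ)) ξ =
      dirP (fun n => g n * Real.log n * (n : ℝ) ^ (-(1 + α))) (2 * Real.pi * ξ) * 𝓕 (kapC α) ξ := by
  set A : ℕ → ℝ := fun n => g n * Real.log n * (n : ℝ) ^ (-(1 + α)) with hA
  have hAs : Summable fun n => |A n| := by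
    refine Summable.of_nonneg_of_le (fun _ => abs_nonneg _) (fun n => ?_) (summable_log_rpow hα)
    have hl := Real.log_natCast_nonneg n
    simp only [hA]
    rw [abs_mul, abs_mul, abs_of_nonneg hl, abs_of_nonneg (by positivity : (0:ℝ) ≤ (n : ℝ) ^ (-(1 + α)))]
    gcongr
    exact mul_le_of_le_one_left hl (hg n)
  set F : ℕ → ℝ → ℂ := fun n v => Complex.exp (((-2 * Real.pi * v * ξ : ℝ) : ℂ) * Complex.I) •
    ((A n : ℂ) * kapC α (v - Real.log n)) with hF
  have hFn : ∀ n v, ‖F n v‖ = |A n| * |kap α (v - Real.log n)| := by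
    intro n v
    simp only [hF]
    rw [norm_smul, Complex.norm_exp_ofReal_mul_I, one_mul, norm_mul, kapC]
    simp
  have hki : ∀ n : ℕ, Integrable fun v => kapC α (v - Real.log n) := fun n =>
    (integrable_kapC hα.le).comp_sub_right _
  have hFi : ∀ n, Integrable (F n) := by
    intro n
    refine (((hki n).norm).const_mul |A n|).mono' ?_ (Filter.Eventually.of_forall fun v => ?_)
    · have hc : Continuous fun v : ℝ => Complex.exp (((-2 * Real.pi * v * ξ : ℝ) : ℂ) * Complex.I) := by
        fun_prop
      exact hc.aestronglyMeasurable.smul ((hki n).aestronglyMeasurable.const_mul _)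
    · rw [hFn]; simp [kapC]
  have hFs : Summable fun n => ∫ v, ‖F n v‖ := by
    refine Summable.of_nonneg_of_le (fun n => integral_nonneg fun v => norm_nonneg _) (fun n => ?_) hAs
    simp_rw [hFn]
    rw [integral_const_mul, integral_sub_right_eq_self (fun v => |kap α v|)]
    exact mul_le_of_le_one_right (abs_nonneg _) (integral_abs_kap_le hα.le)
  have hsum := hasSum_integral_of_summable_integral_norm hFi hFs
  have e0 : 𝓕 (fun r => (phi g α r : ℂ)) ξ = ∫ v, ∑' n, F n v := by
    rw [Real.fourier_real_eq_integral_exp_smul]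
    refine integral_congr_ae (Filter.Eventually.of_forall fun v => ?_)
    simp only [hF]
    rw [phi_eq_tsum, tsum_const_smul'']
    congr 1
    push_cast [kapC, hA]
    rfl
  have e1 : ∀ n, ∫ v, F n v = ((A n : ℂ) * Complex.exp (-((2 * Real.pi * ξ : ℝ) * Real.log n) * Complex.I)) * 𝓕 (kapC α) ξ := by
    intro n
    rw [← integral_add_right_eq_self (F n) (Real.log n), Real.fourier_real_eq_integral_exp_smul, ← integral_const_mul]
    refine integral_congr_ae (Filter.Eventually.of_forall fun v => ?_)
    simp only [hF, add_sub_cancel_right, smul_eq_mul]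
    have : Complex.exp (((-2 * Real.pi * (v + Real.log n) * ξ : ℝ) : ℂ) * Complex.I) =
        Complex.exp (-((2 * Real.pi * ξ : ℝ) * Real.log n) * Complex.I) * Complex.exp (((-2 * Real.pi * v * ξ : ℝ) : ℂ) * Complex.I) := by
      rw [← Complex.exp_add]; congr 1; push_cast; ring
    rw [this]; ring
  rw [e0, ← hsum.tsum_eq, tsum_congr e1, tsum_mul_right]
  rfl

/-- By Plancherel, `∫ φ²` is the mean square of `P · G · κ̂_α`, where `-G' = P G`. The factor `|G|²`
is bounded pointwise by `DS_sq_bound`, and `P` in weighted mean square by `weighted_moment`. -/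
theorem integral_phi_sq_le : ∃ C : ℝ, 0 < C ∧ ∀ g : ℕ →*₀ ℝ, (∀ n, |g n| ≤ 1) → ∀ x α : ℝ, 3 ≤ x →
    1 / (2 * Real.log x) ≤ α → α ≤ 1 →
    ∫ r, phi g α r ^ 2 ≤ C / α * (Real.log x * Real.exp (pSum g x) * α ^ (-(2 / Real.pi)) +
      α ^ (-(4 / Real.pi))) := by
  obtain ⟨C1, hC1, h1⟩ := DS_sq_bound
  obtain ⟨C2, hC2, h2⟩ := weighted_moment
  refine ⟨441 * C1 * C2, by positivity, fun g hg x α hx hα hα1 => ?_⟩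
  have hL1 := log_ge_one hx
  have hα0 : 0 < α := lt_of_lt_of_le (by positivity) hα
  set Q := Real.log x * Real.exp (pSum g x) * α ^ (-(2 / Real.pi)) + α ^ (-(4 / Real.pi)) with hQ
  have hQ0 : 0 ≤ Q := by positivity
  set b : ℕ → ℝ := fun n => g n * vonMangoldt n * (n : ℝ) ^ (-(1 + α)) with hb
  obtain ⟨w1, w2⟩ := h2 α hα0 hα1 b (gvm_le hg α)
  set W : ℝ → ℝ := fun t => (1 + |t|) ^ (-(2 - 2 / Real.pi)) * ‖dirP b t‖ ^ 2 with hW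
  set φ : ℝ → ℂ := fun r => (phi g α r : ℂ) with hφ
  have hpt : ∀ ξ, ‖𝓕 φ ξ‖ ^ 2 ≤ 441 * C1 * Q * W (2 * Real.pi * ξ) := by
    intro ξ
    rw [hφ, fourier_phi hg hα0, dirP_log hg hα0, norm_mul, norm_mul, mul_pow, mul_pow]
    set t := 2 * Real.pi * ξ with ht
    have k1 : ‖𝓕 (kapC α) ξ‖ ^ 2 ≤ 441 * (1 + |t|) ^ (-2 : ℝ) := by
      have := norm_fourier_kap_le hα0.le hα1 ξ
      calc _ ≤ (21 / (1 + |t|)) ^ 2 := by gcongr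
        _ = _ := by
          rw [Real.rpow_neg (by positivity), Real.rpow_two, div_pow]; norm_num; rfl
    have k2 := h1 g hg x α t hx hα hα1
    have k3 : (1 + |t|) ^ (2 / Real.pi) * (1 + |t|) ^ (-2 : ℝ) = (1 + |t|) ^ (-(2 - 2 / Real.pi)) := by
      rw [← Real.rpow_add (by positivity)]; ring_nf
    calc ‖dirP b t‖ ^ 2 * ‖DS g (pt α t)‖ ^ 2 * ‖𝓕 (kapC α) ξ‖ ^ 2
        ≤ ‖dirP b t‖ ^ 2 * (C1 * Q * (1 + |t|) ^ (2 / Real.pi)) * (441 * (1 + |t|) ^ (-2 : ℝ)) := by gcongr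
      _ = 441 * C1 * Q * ((1 + |t|) ^ (2 / Real.pi) * (1 + |t|) ^ (-2 : ℝ) * ‖dirP b t‖ ^ 2) := by ring
      _ = _ := by rw [k3]
  have hφi : Integrable φ := (integrable_phi hg hα0).ofReal
  have hφ2 : MemLp φ 2 := by
    rw [memLp_two_iff_integrable_sq_norm hφi.aestronglyMeasurable]
    refine (integrable_phi_sq hg hα0).congr (Filter.Eventually.of_forall fun r => ?_)
    simp [hφ]
  have hWi : Integrable fun ξ => W (2 * Real.pi * ξ) := w1.comp_mul_left' (by have := Real.pi_pos; positivity)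
  have hcont : Continuous (𝓕 φ) :=
    VectorFourier.fourierIntegral_continuous Real.continuous_fourierChar (by exact continuous_inner) hφi
  have hF2i : Integrable fun ξ => ‖𝓕 φ ξ‖ ^ 2 := by
    refine (hWi.const_mul (441 * C1 * Q)).mono' (Continuous.aestronglyMeasurable (by fun_prop))
      (Filter.Eventually.of_forall fun ξ => ?_)
    rw [Real.norm_of_nonneg (by positivity)]
    exact hpt ξ
  have hF2 : MemLp (𝓕 φ) 2 := by
    rw [memLp_two_iff_integrable_sq_norm hcont.aestronglyMeasurable]
    exact hF2i
  have hP := plancherel hφi hφ2 hF2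
  have e0 : ∫ r, phi g α r ^ 2 = ∫ r, ‖φ r‖ ^ 2 := by
    refine integral_congr_ae (Filter.Eventually.of_forall fun r => ?_)
    simp [hφ]
  rw [e0, hP]
  refine (integral_mono hF2i (hWi.const_mul _) hpt).trans ?_
  rw [integral_const_mul, Measure.integral_comp_mul_left]
  have hpi : |(2 * Real.pi)⁻¹| ≤ 1 := by
    rw [abs_of_nonneg (by have := Real.pi_pos; positivity)]
    apply inv_le_one_of_one_le₀
    linarith [Real.pi_gt_three]
  have hW0 : 0 ≤ ∫ t, W t := integral_nonneg fun t => by positivity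
  calc 441 * C1 * Q * (|(2 * Real.pi)⁻¹| • ∫ t, W t) ≤ 441 * C1 * Q * (1 * (C2 / α)) := by
        rw [smul_eq_mul]; gcongr
    _ = _ := by ring

end LogHalasz

/-! ### The bound for completely multiplicative functions -/

namespace LogHalasz
open MeasureTheory

/-- `q = 2^{1/π}`. -/
noncomputable def qpi : ℝ := 2 ^ (1 / Real.pi)

theorem one_lt_qpi : 1 < qpi := Real.one_lt_rpow (by norm_num) (by have := Real.pi_pos; positivity)

theorem qpi_pow (j : ℕ) : qpi ^ j = ((2 : ℝ) ^ j) ^ (1 / Real.pi) := by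
  unfold qpi
  rw [← Real.rpow_natCast, ← Real.rpow_natCast, ← Real.rpow_mul (by norm_num), ← Real.rpow_mul (by norm_num), mul_comm]

theorem intervalIntegrable_absT {g : ℕ → ℝ} (hg : ∀ n, |g n| ≤ 1) {a b : ℝ} (ha : 0 ≤ a) (hab : a ≤ b) :
    IntervalIntegrable (fun ρ => |Tf g (Real.exp ρ)|) volume a b := by
  rw [intervalIntegrable_iff_integrableOn_Ioc_of_le hab]
  refine Measure.integrableOn_of_bounded (M := 1) (by simp) (measurable_absT g).aestronglyMeasurable ?_
  refine (ae_restrict_iff' measurableSet_Ioc).2 (Filter.Eventually.of_forall fun ρ hρ => ?_)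
  rw [Real.norm_eq_abs, abs_abs]
  exact abs_Tf_le hg (Real.one_le_exp (by linarith [hρ.1]))

/-- The dyadic block estimate. On `[B, 2B]`, with `B = 2^j`, one has `B |T| ≤ 2 + |N|`, and the mean
square of `N` is given by `integral_phi_sq_le` with `α = 1/B`. -/
theorem block : ∃ K : ℝ, 0 < K ∧ ∀ g : ℕ →*₀ ℝ, (∀ n, |g n| ≤ 1) → ∀ (x : ℝ) (j : ℕ), 3 ≤ x →
    (2 : ℝ) ^ j ≤ 2 * Real.log x →
    ∫ ρ in ((2 : ℝ) ^ j)..((2 : ℝ) ^ (j + 1)), |Tf g (Real.exp ρ)| ≤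
      K * (Real.sqrt (Real.log x * Real.exp (pSum g x)) * qpi ^ j + (qpi ^ j) ^ 2) := by
  obtain ⟨C, hC, hE⟩ := integral_phi_sq_le
  refine ⟨3 + Real.exp 4 * C, by positivity, fun g hg x j hx hj => ?_⟩
  have hL1 := log_ge_one hx
  set S := Real.sqrt (Real.log x * Real.exp (pSum g x)) with hS
  have hS0 : 0 ≤ S := Real.sqrt_nonneg _
  have hS2 : S ^ 2 = Real.log x * Real.exp (pSum g x) := Real.sq_sqrt (by positivity)
  set B : ℝ := 2 ^ j with hB
  have hB1 : 1 ≤ B := one_le_pow₀ (by norm_num)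
  have hB0 : 0 < B := by linarith
  set Q := qpi ^ j with hQ
  have hQ1 : 1 ≤ Q := one_le_pow₀ one_lt_qpi.le
  have hQB : Q = B ^ (1 / Real.pi) := qpi_pow j
  -- The root mean square of `N(e^ρ)` on the block is `O(lam)`; it serves as the parameter in
  -- `|N| ≤ lam + N² / lam`, which replaces Cauchy–Schwarz.
  set lam := S * Q + Q ^ 2 with hlam
  have hlam1 : 1 ≤ lam := by nlinarith [mul_nonneg hS0 (by linarith : 0 ≤ Q)]
  have hlam0 : 0 < lam := by linarith
  have hstep := hE g hg x (1 / B) hx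
    (by rw [one_div_le_one_div (by positivity) hB0]; exact hj)
    (by rw [div_le_one hB0]; exact hB1)
  have e1 : (1 / B) ^ (-(2 / Real.pi)) = Q ^ 2 := by
    rw [one_div, Real.inv_rpow hB0.le, Real.rpow_neg hB0.le, inv_inv, hQB, ← Real.rpow_natCast,
      ← Real.rpow_mul hB0.le]; congr 1; push_cast; ring
  have e2 : (1 / B) ^ (-(4 / Real.pi)) = Q ^ 4 := by
    rw [one_div, Real.inv_rpow hB0.le, Real.rpow_neg hB0.le, inv_inv, hQB, ← Real.rpow_natCast,
      ← Real.rpow_mul hB0.le]; congr 1; push_cast; ring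
  rw [e1, e2, ← hS2] at hstep
  have hI : ∫ r, phi g (1 / B) r ^ 2 ≤ C * B * lam ^ 2 := by
    refine hstep.trans ?_
    rw [one_div, div_inv_eq_mul]
    have : S ^ 2 * Q ^ 2 + Q ^ 4 ≤ lam ^ 2 := by
      rw [hlam]
      have : 0 ≤ S * Q * Q ^ 2 := by positivity
      nlinarith
    gcongr
  have hpt : ∀ ρ ∈ Set.Icc B (B * 2), |Tf g (Real.exp ρ)| ≤
      (2 + lam) / B + Real.exp 4 / (lam * B) * phi g (1 / B) ρ ^ 2 := by
    intro ρ hρ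
    have hρ0 : 0 < ρ := by linarith [hρ.1]
    have h2 := log_mul_Tf_sub_Nf hg (Real.one_le_exp hρ0.le)
    rw [Real.log_exp] at h2
    have h3 : ρ * |Tf g (Real.exp ρ)| ≤ 2 + |Nf g (Real.exp ρ)| := by
      have := abs_sub_abs_le_abs_sub (ρ * Tf g (Real.exp ρ)) (Nf g (Real.exp ρ))
      rw [abs_mul, abs_of_pos hρ0] at this
      linarith
    have h4 : B * |Tf g (Real.exp ρ)| ≤ 2 + |Nf g (Real.exp ρ)| := by
      refine le_trans ?_ h3
      exact mul_le_mul_of_nonneg_right hρ.1 (abs_nonneg _)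
    have h5 : Nf g (Real.exp ρ) ^ 2 ≤ Real.exp 4 * phi g (1 / B) ρ ^ 2 := by
      unfold phi
      have : 1 ≤ Real.exp 4 * Real.exp (-(1 / B) * ρ) ^ 2 := by
        rw [← Real.exp_nat_mul, ← Real.exp_add]
        apply Real.one_le_exp
        have : ρ / B ≤ 2 := by rw [div_le_iff₀ hB0]; linarith [hρ.2]
        have e : ((2 : ℕ) : ℝ) * (-(1 / B) * ρ) = -2 * (ρ / B) := by push_cast; ring
        rw [e]; linarith
      nlinarith [sq_nonneg (Nf g (Real.exp ρ))]
    have h6 : |Nf g (Real.exp ρ)| ≤ lam + Nf g (Real.exp ρ) ^ 2 / lam := by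
      rw [← sq_abs (Nf g (Real.exp ρ)), ← sub_le_iff_le_add', le_div_iff₀ hlam0]
      nlinarith [sq_nonneg (|Nf g (Real.exp ρ)| - lam), abs_nonneg (Nf g (Real.exp ρ))]
    have h7 : Nf g (Real.exp ρ) ^ 2 / lam ≤ Real.exp 4 * phi g (1 / B) ρ ^ 2 / lam := by gcongr
    calc |Tf g (Real.exp ρ)| ≤ (2 + (lam + Real.exp 4 * phi g (1 / B) ρ ^ 2 / lam)) / B := by
          rw [le_div_iff₀ hB0]; linarith
      _ = _ := by field_simp; ring
  have hφi := integrable_phi_sq hg (show 0 < 1 / B by positivity)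
  rw [pow_succ, ← hB, intervalIntegral.integral_of_le (by linarith)]
  have hfin : IntegrableOn (fun _ : ℝ => (2 + lam) / B) (Set.Ioc B (B * 2)) := by simp
  have hφi2 : Integrable fun ρ => Real.exp 4 / (lam * B) * phi g (1 / B) ρ ^ 2 := hφi.const_mul _
  calc ∫ ρ in Set.Ioc B (B * 2), |Tf g (Real.exp ρ)|
      ≤ ∫ ρ in Set.Ioc B (B * 2), ((2 + lam) / B + Real.exp 4 / (lam * B) * phi g (1 / B) ρ ^ 2) := by
        refine setIntegral_mono_on ?_ (hfin.add hφi2.integrableOn) measurableSet_Ioc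
          fun ρ hρ => hpt ρ (Set.Ioc_subset_Icc_self hρ)
        exact (intervalIntegrable_iff_integrableOn_Ioc_of_le (by linarith)).1
          (intervalIntegrable_absT hg hB0.le (by linarith))
    _ = (2 + lam) + ∫ ρ in Set.Ioc B (B * 2), Real.exp 4 / (lam * B) * phi g (1 / B) ρ ^ 2 := by
        rw [integral_add hfin hφi2.integrableOn]
        congr 1
        rw [setIntegral_const, Real.volume_real_Ioc_of_le (by linarith)]
        rw [smul_eq_mul]; field_simp; ring
    _ ≤ (2 + lam) + ∫ ρ, Real.exp 4 / (lam * B) * phi g (1 / B) ρ ^ 2 := by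
        refine add_le_add le_rfl ?_
        exact setIntegral_le_integral hφi2 (Filter.Eventually.of_forall fun ρ => by positivity)
    _ ≤ (2 + lam) + Real.exp 4 / (lam * B) * (C * B * lam ^ 2) := by
        rw [integral_const_mul]; gcongr
    _ = 2 + lam + Real.exp 4 * C * lam := by field_simp
    _ ≤ _ := by linarith

/-- The dyadic blocks add up to a geometric series. -/
theorem dyadic : ∃ K : ℝ, 0 < K ∧ ∀ g : ℕ →*₀ ℝ, (∀ n, |g n| ≤ 1) → ∀ (x : ℝ) (J : ℕ), 3 ≤ x →
    (2 : ℝ) ^ J ≤ 4 * Real.log x →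
    ∫ ρ in (0 : ℝ)..((2 : ℝ) ^ J), |Tf g (Real.exp ρ)| ≤
      1 + K * (Real.sqrt (Real.log x * Real.exp (pSum g x)) * qpi ^ J + (qpi ^ J) ^ 2) := by
  obtain ⟨K, hK, hb⟩ := block
  have hq := one_lt_qpi
  have hq1 : 0 < qpi - 1 := by linarith
  refine ⟨K / (qpi - 1), by positivity, fun g hg x J hx => ?_⟩
  set S := Real.sqrt (Real.log x * Real.exp (pSum g x)) with hS
  have hS0 : 0 ≤ S := Real.sqrt_nonneg _
  induction J with
  | zero =>
    intro _
    have h1 : ∫ ρ in (0 : ℝ)..((2 : ℝ) ^ 0), |Tf g (Real.exp ρ)| ≤ ∫ ρ in (0 : ℝ)..((2 : ℝ) ^ 0), (1 : ℝ) := by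
      refine intervalIntegral.integral_mono_on (by norm_num) ?_ (by simp) fun ρ hρ => ?_
      · exact intervalIntegrable_absT hg le_rfl (by norm_num)
      · exact abs_Tf_le hg (Real.one_le_exp hρ.1)
    refine h1.trans ?_
    simp
    positivity
  | succ J ih =>
    intro hJ
    have hp : (0 : ℝ) < 2 ^ J := by positivity
    have hJ' : (2 : ℝ) ^ J ≤ 2 * Real.log x := by rw [pow_succ] at hJ; linarith
    have i1 := ih (by linarith)
    have i2 := hb g hg x J hx hJ'
    rw [← intervalIntegral.integral_add_adjacent_intervals (b := (2 : ℝ) ^ J)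
      (intervalIntegrable_absT hg le_rfl hp.le)
      (intervalIntegrable_absT hg hp.le (by rw [pow_succ]; linarith))]
    refine (add_le_add i1 i2).trans ?_
    rw [← hS]
    set Q := qpi ^ J with hQ
    have hQ0 : 0 < Q := pow_pos (by linarith) _
    rw [pow_succ qpi J, ← hQ]
    have e : K = K / (qpi - 1) * (qpi - 1) := by field_simp
    set M := K / (qpi - 1) with hM
    have hM0 : 0 < M := by rw [hM]; positivity
    have h3 : 0 ≤ M * Q ^ 2 * ((qpi - 1) * qpi) := by positivity
    have h4 : K * (S * Q + Q ^ 2) = M * (qpi - 1) * (S * Q + Q ^ 2) := by rw [← e]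
    nlinarith

/-- The logarithmic mean of a completely multiplicative function: combine the comparison with `T`,
the bound for `T(x)` by an integral of `|T|`, and the dyadic estimate for that integral. -/
theorem core : ∃ C : ℝ, 0 < C ∧ ∀ g : ℕ →*₀ ℝ, (∀ n, |g n| ≤ 1) → ∀ x : ℝ, 3 ≤ x →
    |∑ n ∈ Icc 1 ⌊x⌋₊, g n / n| ≤
      C * (Real.exp (pSum g x) + Real.log x ^ (-(1 - 2 / Real.pi))) := by
  obtain ⟨CA, hCA, hA⟩ := abs_sum_sub_Tf_le
  obtain ⟨CC, hCC, hCst⟩ := log_mul_Tf_le_integral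
  obtain ⟨K, hK, hD⟩ := dyadic
  refine ⟨CA + CC * (2 + 5 * K), by positivity, fun g hg x hx => ?_⟩
  have hL1 := log_ge_one hx
  set L := Real.log x with hL
  have hL0 : 0 < L := by linarith
  set E := Real.exp (pSum g x) with hE
  have hE0 : 0 < E := Real.exp_pos _
  obtain ⟨n, hn1, hn2⟩ := exists_nat_pow_near (x := L + 1) (y := (2 : ℝ)) (by linarith) (by norm_num)
  have hJ : (2 : ℝ) ^ (n + 1) ≤ 4 * L := by rw [pow_succ]; linarith
  have hd := hD g hg x (n + 1) hx hJ
  rw [← hL, ← hE] at hd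
  set S := Real.sqrt (L * E) with hS
  have hS0 : 0 ≤ S := Real.sqrt_nonneg _
  have hS2 : S ^ 2 = L * E := Real.sq_sqrt (by positivity)
  set l := L ^ (1 / Real.pi) with hl
  have hpi3 := Real.pi_gt_three
  have hl1 : 1 ≤ l := Real.one_le_rpow hL1 (by positivity)
  have hl2 : l ^ 2 = L * L ^ (-(1 - 2 / Real.pi)) := by
    rw [hl, ← Real.rpow_natCast, ← Real.rpow_mul hL0.le]
    nth_rewrite 2 [← Real.rpow_one L]
    rw [← Real.rpow_add hL0]; congr 1; push_cast; ring
  have hQ : qpi ^ (n + 1) ≤ 2 * l := by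
    rw [qpi_pow]
    calc ((2 : ℝ) ^ (n + 1)) ^ (1 / Real.pi) ≤ (4 * L) ^ (1 / Real.pi) := by gcongr
      _ = 4 ^ (1 / Real.pi) * l := Real.mul_rpow (by norm_num) hL0.le
      _ ≤ 4 ^ (1 / 2 : ℝ) * l := by
          gcongr
          · norm_num
          · linarith
      _ = 2 * l := by
          rw [← Real.sqrt_eq_rpow, show (4 : ℝ) = 2 ^ 2 by norm_num, Real.sqrt_sq (by norm_num)]
  have hQ0 : 0 < qpi ^ (n + 1) := pow_pos (by linarith [one_lt_qpi]) _
  have hd2 : ∫ ρ in (0 : ℝ)..((2 : ℝ) ^ (n + 1)), |Tf g (Real.exp ρ)| ≤ 1 + K * (S ^ 2 + 5 * l ^ 2) := by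
    refine hd.trans ?_
    have : S * qpi ^ (n + 1) + (qpi ^ (n + 1)) ^ 2 ≤ S ^ 2 + 5 * l ^ 2 := by
      have a1 : S * qpi ^ (n + 1) ≤ S * (2 * l) := by gcongr
      have a2 : (qpi ^ (n + 1)) ^ 2 ≤ (2 * l) ^ 2 := by gcongr
      nlinarith [sq_nonneg (S - l)]
    gcongr
  have hc := hCst g hg x hx
  have hintg : ∫ ρ in Set.Icc 0 (L + 1), |Tf g (Real.exp ρ)| ≤ 1 + K * (S ^ 2 + 5 * l ^ 2) := by
    refine le_trans ?_ hd2
    rw [intervalIntegral.integral_of_le (by positivity), integral_Icc_eq_integral_Ioc]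
    refine setIntegral_mono_set ?_ (Filter.Eventually.of_forall fun ρ => abs_nonneg _) ?_
    · exact (intervalIntegrable_iff_integrableOn_Ioc_of_le (by positivity)).1
          (intervalIntegrable_absT hg le_rfl (by positivity))
    · exact (Set.Ioc_subset_Ioc_right hn2.le).eventuallyLE
  set R := L ^ (-(1 - 2 / Real.pi)) with hR
  have hR0 : 0 < R := by positivity
  have hT : L * |Tf g x| ≤ L * (CC * (2 + 5 * K) * (E + R)) := by
    refine hc.trans ?_
    have h1 : 1 ≤ l ^ 2 := one_le_pow₀ hl1
    have h2 : CC * ∫ ρ in Set.Icc 0 (L + 1), |Tf g (Real.exp ρ)| ≤ CC * (1 + K * (S ^ 2 + 5 * l ^ 2)) := by gcongr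
    refine (add_le_add le_rfl h2).trans ?_
    have h3 : CC + CC * (1 + K * (S ^ 2 + 5 * l ^ 2)) ≤ CC * (2 + 5 * K) * (S ^ 2 + l ^ 2) := by
      have : CC * (2 + 5 * K) * (S ^ 2 + l ^ 2) - (CC + CC * (1 + K * (S ^ 2 + 5 * l ^ 2))) =
        CC * (2 * (l ^ 2 - 1) + 2 * S ^ 2 + 4 * K * S ^ 2) := by ring
      have h4 : 0 ≤ CC * (2 * (l ^ 2 - 1) + 2 * S ^ 2 + 4 * K * S ^ 2) := by
        have : 0 ≤ l ^ 2 - 1 := by linarith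
        positivity
      linarith
    refine h3.trans (le_of_eq ?_)
    rw [hS2, hl2]; ring
  have hT' : |Tf g x| ≤ CC * (2 + 5 * K) * (E + R) := le_of_mul_le_mul_left hT hL0
  have hA' := hA g hg x hx
  have := abs_sub_abs_le_abs_sub (∑ n ∈ Icc 1 ⌊x⌋₊, g n / n) (Tf g x)
  have h9 : CA * E ≤ CA * (E + R) := by gcongr; linarith
  linarith

end LogHalasz

/-! ### From completely multiplicative to multiplicative functions -/

namespace LogHalasz
open ArithmeticFunction (vonMangoldt moebius)

/-- The completely multiplicative function that agrees with `f` at the primes. -/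
noncomputable def cmul (f : ℕ → ℝ) : ℕ →*₀ ℝ where
  toFun n := if n = 0 then 0 else n.factorization.prod fun p k => f p ^ k
  map_zero' := by simp
  map_one' := by simp
  map_mul' a b := by
    by_cases ha : a = 0
    · simp [ha]
    by_cases hb : b = 0
    · simp [hb]
    simp only [ha, hb, mul_eq_zero, or_self, if_false]
    rw [Nat.factorization_mul ha hb, Finsupp.prod_add_index']
    · intro p; simp
    · intro p i j; exact pow_add _ _ _

theorem cmul_prime (f : ℕ → ℝ) {p : ℕ} (hp : p.Prime) : cmul f p = f p := by
  change (if p = 0 then 0 else p.factorization.prod fun p k => f p ^ k) = f p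
  rw [if_neg hp.ne_zero, hp.factorization, Finsupp.prod_single_index] <;> simp

theorem abs_cmul_le {f : ℕ → ℝ} (hf : ∀ n, |f n| ≤ 1) (n : ℕ) : |cmul f n| ≤ 1 := by
  change |if n = 0 then 0 else n.factorization.prod fun p k => f p ^ k| ≤ 1
  split_ifs
  · simp
  · rw [Finsupp.prod, Finset.abs_prod]
    refine Finset.prod_le_one (fun _ _ => abs_nonneg _) fun p _ => ?_
    rw [abs_pow]
    exact pow_le_one₀ (abs_nonneg _) (hf p)

/-- `cmul F` as an arithmetic function. -/
noncomputable def cmulA (F : ℕ → ℝ) : ArithmeticFunction ℝ := ⟨fun n => cmul F n, by simp⟩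

theorem cmulA_apply (F : ℕ → ℝ) (n : ℕ) : cmulA F n = cmul F n := rfl

theorem cmulA_mult (F : ℕ → ℝ) : (cmulA F).IsMultiplicative := by
  refine ⟨by simp [cmulA_apply], fun {m n} _ => by simp [cmulA_apply]⟩

/-- The Dirichlet inverse `μ · g` of the completely multiplicative function `g = cmul F`. -/
noncomputable def cinv (F : ℕ → ℝ) : ArithmeticFunction ℝ :=
  ((moebius : ArithmeticFunction ℤ) : ArithmeticFunction ℝ).pmul (cmulA F)

theorem cinv_apply (F : ℕ → ℝ) (n : ℕ) : cinv F n = (moebius n : ℝ) * cmul F n := by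
  simp [cinv, cmulA_apply]

theorem cinv_mult (F : ℕ → ℝ) : (cinv F).IsMultiplicative :=
  (ArithmeticFunction.isMultiplicative_moebius.intCast).pmul (cmulA_mult F)

theorem cinv_mul (F : ℕ → ℝ) : cinv F * cmulA F = 1 := by
  ext n
  rcases Nat.eq_zero_or_pos n with rfl | hn
  · simp
  rw [ArithmeticFunction.mul_apply]
  have : ∀ q ∈ n.divisorsAntidiagonal, cinv F q.1 * cmulA F q.2 = (moebius q.1 : ℝ) * cmul F n := by
    intro q hq
    rw [cinv_apply, cmulA_apply, ← (Nat.mem_divisorsAntidiagonal.1 hq).1, map_mul, mul_assoc]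
  rw [sum_congr rfl this, ← sum_mul]
  have h := congrArg (fun f : ArithmeticFunction ℤ => ((f n : ℤ) : ℝ))
    ArithmeticFunction.moebius_mul_coe_zeta
  have h2 : ∑ q ∈ n.divisorsAntidiagonal, (moebius q.1 : ℝ) = ((1 : ArithmeticFunction ℤ) n : ℤ) := by
    rw [← h]
    simp only [ArithmeticFunction.mul_apply]
    push_cast
    refine sum_congr rfl fun q hq => ?_
    have : q.2 ≠ 0 := by
      have := Nat.mem_divisorsAntidiagonal.1 hq
      rintro h0; simp [h0] at this; omega
    simp [ArithmeticFunction.natCoe_apply, ArithmeticFunction.zeta_apply, this]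
  rw [h2]
  by_cases h1 : n = 1
  · simp [h1]
  · simp [h1]

/-- The multiplicative factor `b` with `F = b * g`, where `g = cmul F`; it vanishes at the primes.
-/
noncomputable def corr (F : ArithmeticFunction ℝ) : ArithmeticFunction ℝ := F * cinv F

theorem corr_mul (F : ArithmeticFunction ℝ) : corr F * cmulA F = F := by
  rw [corr, mul_assoc, cinv_mul, mul_one]

theorem corr_mult {F : ArithmeticFunction ℝ} (hF : F.IsMultiplicative) :
    (corr F).IsMultiplicative := hF.mul (cinv_mult F)

theorem corr_prime_pow (F : ArithmeticFunction ℝ) {p : ℕ} (hp : p.Prime) (k : ℕ) :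
    corr F (p ^ (k + 1)) = F (p ^ (k + 1)) - F p * F (p ^ k) := by
  rw [corr, mul_comm, ArithmeticFunction.mul_apply,
    Nat.sum_divisorsAntidiagonal (fun a b => cinv F a * F b), Nat.sum_divisors_prime_pow hp,
    sum_range_succ', sum_range_succ']
  have h0 : ∀ i ∈ range k, cinv F (p ^ (i + 1 + 1)) * F (p ^ (k + 1) / p ^ (i + 1 + 1)) = 0 := by
    intro i _
    rw [cinv_apply, ArithmeticFunction.moebius_apply_prime_pow hp (by omega)]
    simp
  rw [sum_eq_zero h0]
  have h1 : p ^ (k + 1) / p = p ^ k := by rw [pow_succ, Nat.mul_div_cancel _ hp.pos]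
  simp [cinv_apply, ArithmeticFunction.moebius_apply_prime hp, cmul_prime _ hp, h1]
  ring

theorem corr_prime {F : ArithmeticFunction ℝ} (hF : F.IsMultiplicative) {p : ℕ} (hp : p.Prime) :
    corr F p = 0 := by
  have := corr_prime_pow F hp 0
  simpa [hF.1] using this

theorem abs_corr_prime_pow_le {F : ArithmeticFunction ℝ} (hb : ∀ n, |F n| ≤ 1) {p : ℕ}
    (hp : p.Prime) (k : ℕ) : |corr F (p ^ (k + 1))| ≤ 2 := by
  rw [corr_prime_pow F hp]
  refine (abs_sub _ _).trans ?_
  rw [abs_mul]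
  have := mul_le_one₀ (hb p) (abs_nonneg _) (hb (p ^ k))
  linarith [hb (p ^ (k + 1))]

/-- The Euler product for `∑ |b(m)| m^{-2/3}` converges absolutely, uniformly in `F`, since `b`
vanishes at the primes. -/
theorem corr_sum_le : ∃ B : ℝ, 0 < B ∧ ∀ F : ArithmeticFunction ℝ, F.IsMultiplicative →
    (∀ n, |F n| ≤ 1) → ∀ N : ℕ,
    ∑ m ∈ Icc 1 N, |corr F m| * (m : ℝ) ^ (-(2 / 3) : ℝ) ≤ B := by
  set c : ℝ := (1 - (2 : ℝ) ^ (-(2 / 3) : ℝ))⁻¹ with hc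
  have h2 : (2 : ℝ) ^ (-(2 / 3) : ℝ) < 1 := Real.rpow_lt_one_of_one_lt_of_neg (by norm_num) (by norm_num)
  have hc0 : 0 < c := inv_pos.2 (by linarith)
  have hs : Summable fun n : ℕ => (n : ℝ) ^ (-(4 / 3) : ℝ) := Real.summable_nat_rpow.2 (by norm_num)
  refine ⟨Real.exp (2 * c * ∑' n : ℕ, (n : ℝ) ^ (-(4 / 3) : ℝ)), Real.exp_pos _, fun F hF hb N => ?_⟩
  set a : ℕ → ℝ := fun m => |corr F m| * (m : ℝ) ^ (-(2 / 3) : ℝ) with ha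
  have ha0 : ∀ m, 0 ≤ a m := fun m => by positivity
  have hm := corr_mult hF
  have ha1 : a 1 = 1 := by simp [ha, hm.1]
  have hmul : ∀ {m n : ℕ}, m.Coprime n → a (m * n) = a m * a n := by
    intro m n h
    simp only [ha, hm.2 h, abs_mul, Nat.cast_mul]
    rw [Real.mul_rpow (by positivity) (by positivity)]; ring
  have hpk : ∀ {p : ℕ}, p.Prime → ∀ k, a (p ^ (k + 2)) ≤
      2 * (p : ℝ) ^ (-(4 / 3) : ℝ) * ((2 : ℝ) ^ (-(2 / 3) : ℝ)) ^ k := by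
    intro p hp k
    have hp0 : (0 : ℝ) < p := by exact_mod_cast hp.pos
    have hp2 : (2 : ℝ) ≤ p := by exact_mod_cast hp.two_le
    have e : ((p ^ (k + 2) : ℕ) : ℝ) ^ (-(2 / 3) : ℝ) =
        (p : ℝ) ^ (-(4 / 3) : ℝ) * ((p : ℝ) ^ (-(2 / 3) : ℝ)) ^ k := by
      push_cast
      rw [← Real.rpow_natCast, ← Real.rpow_natCast, ← Real.rpow_mul hp0.le, ← Real.rpow_mul hp0.le,
        ← Real.rpow_add hp0]
      congr 1; push_cast; ring
    simp only [ha]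
    rw [e]
    have h3 : (p : ℝ) ^ (-(2 / 3) : ℝ) ≤ (2 : ℝ) ^ (-(2 / 3) : ℝ) :=
      Real.rpow_le_rpow_of_nonpos (by norm_num) hp2 (by norm_num)
    have h4 := abs_corr_prime_pow_le hb hp (k + 1)
    calc _ ≤ 2 * ((p : ℝ) ^ (-(4 / 3) : ℝ) * ((2 : ℝ) ^ (-(2 / 3) : ℝ)) ^ k) := by
          gcongr
      _ = _ := by ring
  have hg := hasSum_geometric_of_lt_one (r := (2 : ℝ) ^ (-(2 / 3) : ℝ)) (by positivity) h2
  have hsum2 : ∀ {p : ℕ}, p.Prime → Summable fun k => a (p ^ (k + 2)) := fun {p} hp =>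
    Summable.of_nonneg_of_le (fun _ => ha0 _) (hpk hp) (hg.summable.mul_left _)
  have hsum1 : ∀ {p : ℕ}, p.Prime → Summable fun k => a (p ^ k) := fun {p} hp =>
    (summable_nat_add_iff 2).1 (hsum2 hp)
  have hfac : ∀ p ∈ (N + 1).primesBelow, ∑' k, a (p ^ k) ≤
      Real.exp (2 * c * (p : ℝ) ^ (-(4 / 3) : ℝ)) := by
    intro p hp
    have hp' := Nat.prime_of_mem_primesBelow hp
    rw [← (hsum1 hp').sum_add_tsum_nat_add 2]
    have h5 : ∑ i ∈ range 2, a (p ^ i) = 1 := by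
      rw [sum_range_succ, sum_range_one, pow_zero, pow_one, ha1]
      simp [ha, corr_prime hF hp']
    have h6 : ∑' k, a (p ^ (k + 2)) ≤ 2 * (p : ℝ) ^ (-(4 / 3) : ℝ) * c :=
      hasSum_le (hpk hp') (hsum2 hp').hasSum (hg.mul_left _)
    have := Real.add_one_le_exp (2 * c * (p : ℝ) ^ (-(4 / 3) : ℝ))
    rw [h5]; linarith
  obtain ⟨_, h8⟩ := EulerProduct.summable_and_hasSum_smoothNumbers_prod_primesBelow_tsum ha1 hmul
    (fun {p} hp => (hsum1 hp).norm) (N + 1)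
  have h9 : ∑ m ∈ Icc 1 N, a m ≤ ∏ p ∈ (N + 1).primesBelow, ∑' k, a (p ^ k) := by
    rw [← h8.tsum_eq, tsum_subtype ((N + 1).smoothNumbers) a]
    have hind : Summable (Set.indicator (Nat.smoothNumbers (N + 1)) a) :=
      summable_subtype_iff_indicator.1 h8.summable
    calc ∑ m ∈ Icc 1 N, a m = ∑ m ∈ Icc 1 N, Set.indicator (Nat.smoothNumbers (N + 1)) a m := by
          refine sum_congr rfl fun m hm => ?_
          rw [mem_Icc] at hm
          rw [Set.indicator_of_mem (Nat.mem_smoothNumbers_of_lt (by omega) (by omega))]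
      _ ≤ _ := hind.sum_le_tsum _ fun m _ => Set.indicator_nonneg (fun _ _ => ha0 _) _
  refine h9.trans ?_
  calc _ ≤ ∏ p ∈ (N + 1).primesBelow, Real.exp (2 * c * (p : ℝ) ^ (-(4 / 3) : ℝ)) :=
        prod_le_prod (fun p _ => tsum_nonneg fun _ => ha0 _) hfac
    _ = Real.exp (2 * c * ∑ p ∈ (N + 1).primesBelow, (p : ℝ) ^ (-(4 / 3) : ℝ)) := by
        rw [← Real.exp_sum, mul_sum]
    _ ≤ _ := by
        gcongr
        exact hs.sum_le_tsum _ fun _ _ => by positivity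

/-- By Chebyshev, `∑_{z < p ≤ x} 1/p = O(1)` when `z ≥ √x`. -/
theorem pSum_le_of_sqrt {g : ℕ → ℝ} (hg : ∀ n, |g n| ≤ 1) {x z : ℝ} (hx : 3 ≤ x)
    (hz : Real.log x / 2 ≤ Real.log z) (hz1 : 1 ≤ z) (hzx : z ≤ x) :
    pSum g z ≤ pSum g x + 4 * cheb := by
  have hL := log_ge_one hx
  unfold pSum
  have hsub : primesUpTo z ⊆ primesUpTo x := by
    intro p hp
    simp only [primesUpTo, mem_filter, mem_Iic] at hp ⊢
    exact ⟨hp.1.trans (Nat.floor_le_floor hzx), hp.2⟩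
  rw [← sum_sdiff hsub]
  have h1 : -∑ p ∈ primesUpTo x \ primesUpTo z, g p / p ≤
      ∑ p ∈ primesUpTo x \ primesUpTo z, 2 / Real.log x * (Real.log p / p) := by
    rw [← sum_neg_distrib]
    refine sum_le_sum fun p hp => ?_
    simp only [primesUpTo, mem_sdiff, mem_filter, mem_Iic, not_and] at hp
    obtain ⟨⟨h1, h2⟩, h3⟩ := hp
    have hp0 : (0 : ℝ) < p := by exact_mod_cast h2.pos
    have hzp : z < p := by
      by_contra h; exact h3 (Nat.le_floor (not_lt.1 h)) h2
    have hlog : Real.log x / 2 ≤ Real.log p := hz.trans (Real.log_le_log (by linarith) hzp.le)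
    have h5 : 1 ≤ 2 / Real.log x * Real.log p := by
      rw [div_mul_eq_mul_div, le_div_iff₀ (by linarith)]; linarith
    have h6 : -g p ≤ 1 := (neg_le_abs _).trans (hg p)
    rw [← neg_div, ← mul_div_assoc]
    gcongr
    linarith
  have h2 : ∑ p ∈ primesUpTo x \ primesUpTo z, 2 / Real.log x * (Real.log p / p) ≤
      2 / Real.log x * (cheb * (1 + Real.log x)) := by
    rw [← mul_sum]
    gcongr
    refine le_trans ?_ (sum_primes_le_vonMangoldt.trans (sum_vonMangoldt_div_le (by linarith)))
    exact sum_le_sum_of_subset_of_nonneg sdiff_subset fun p _ _ => by positivity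
  have h3 : 2 / Real.log x * (cheb * (1 + Real.log x)) ≤ 4 * cheb := by
    have := cheb_pos
    rw [div_mul_eq_mul_div, div_le_iff₀ (by linarith)]
    nlinarith
  linarith

/-- The bound for the inner sum `S_g(x/d)`, including the range `d > √x`, where the trivial bound
is compensated by the factor `d^{-1/3}`. -/
theorem inner_sum_bound : ∃ C : ℝ, 0 < C ∧ ∀ g : ℕ →*₀ ℝ, (∀ n, |g n| ≤ 1) → ∀ x : ℝ, 9 ≤ x →
    ∀ d : ℕ, 1 ≤ d → (d : ℝ) ≤ x →
    |∑ m ∈ Icc 1 (⌊x⌋₊ / d), g m / m| * (d : ℝ) ^ (-(1 / 3) : ℝ) ≤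
      C * (Real.exp (pSum g x) + Real.log x ^ (-(1 - 2 / Real.pi))) := by
  obtain ⟨C, hC, hcore⟩ := core
  have hcheb := cheb_pos
  refine ⟨C * (Real.exp (4 * cheb) + 2) + 144, by positivity, fun g hg x hx d hd hdx => ?_⟩
  have hL1 := log_ge_one (x := x) (by linarith)
  have hd0 : (0 : ℝ) < d := by exact_mod_cast hd
  have hd1 : (1 : ℝ) ≤ d := by exact_mod_cast hd
  have hx0 : 0 < x := by linarith
  set L := Real.log x with hL
  have hL0 : 0 < L := by linarith
  set E := Real.exp (pSum g x) with hE
  have hE0 : 0 < E := Real.exp_pos _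
  have hα0 : 0 < 1 - 2 / Real.pi := by linarith [two_div_pi_lt_one]
  have hα1 : 1 - 2 / Real.pi < 1 := by have := Real.pi_pos; have : 0 < 2 / Real.pi := by positivity
                                       linarith
  set α := 1 - 2 / Real.pi with hα
  have hW0 : 0 < L ^ (-α) := by positivity
  rw [← Nat.floor_div_natCast]
  have hz1 : 1 ≤ x / d := by rw [le_div_iff₀ hd0]; linarith
  have hzx : x / d ≤ x := div_le_self hx0.le hd1
  have hlogz : Real.log (x / d) = L - Real.log d := Real.log_div hx0.ne' hd0.ne'
  by_cases hsm : Real.log d ≤ L / 2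
  · have hz3 : 3 ≤ x / d := by
      rw [← Real.log_le_log_iff (by norm_num) (by positivity), hlogz]
      have : 2 * Real.log 3 ≤ L := by
        have : Real.log 9 = 2 * Real.log 3 := by
          rw [show (9 : ℝ) = 3 ^ 2 by norm_num, Real.log_pow]; norm_num
        rw [← this]; exact Real.log_le_log (by norm_num) hx
      linarith
    have h1 := hcore g hg (x / d) hz3
    have h2 := pSum_le_of_sqrt hg (x := x) (z := x / d) (by linarith) (by rw [hlogz]; linarith) hz1 hzx
    have h3 : Real.exp (pSum g (x / d)) ≤ Real.exp (4 * cheb) * E := by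
      rw [hE, ← Real.exp_add]; apply Real.exp_le_exp.2; linarith
    have h4 : Real.log (x / d) ^ (-α) ≤ 2 * L ^ (-α) := by
      calc Real.log (x / d) ^ (-α) ≤ (L / 2) ^ (-α) :=
            Real.rpow_le_rpow_of_nonpos (by linarith) (by rw [hlogz]; linarith) (by linarith)
        _ = L ^ (-α) * 2 ^ α := by
            rw [Real.div_rpow hL0.le (by norm_num), Real.rpow_neg (x := 2) (by norm_num), div_inv_eq_mul]
        _ ≤ L ^ (-α) * 2 ^ (1 : ℝ) := by gcongr; norm_num
        _ = _ := by rw [Real.rpow_one]; ring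
    have h5 : (d : ℝ) ^ (-(1 / 3) : ℝ) ≤ 1 := Real.rpow_le_one_of_one_le_of_nonpos hd1 (by norm_num)
    calc _ ≤ |∑ m ∈ Icc 1 ⌊x / d⌋₊, g m / m| := mul_le_of_le_one_right (abs_nonneg _) h5
      _ ≤ C * (Real.exp (4 * cheb) * E + 2 * L ^ (-α)) := h1.trans (by gcongr)
      _ ≤ _ := by
          have a1 : 0 ≤ C * 2 * E := by positivity
          have a2 : 0 ≤ C * Real.exp (4 * cheb) * L ^ (-α) := by positivity
          nlinarith
  · rw [not_le] at hsm
    have h1 : |∑ m ∈ Icc 1 ⌊x / d⌋₊, g m / m| ≤ 1 + L := by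
      calc _ ≤ ∑ m ∈ Icc 1 ⌊x / d⌋₊, |g m / m| := abs_sum_le_sum_abs _ _
        _ ≤ ∑ m ∈ Icc 1 ⌊x / d⌋₊, 1 / (m : ℝ) := by
            refine sum_le_sum fun m _ => ?_
            rw [abs_div, Nat.abs_cast]
            gcongr
            exact hg m
        _ ≤ 1 + Real.log ⌊x / d⌋₊ := harmonic_sum_le _
        _ ≤ _ := by
            have : Real.log ⌊x / d⌋₊ ≤ L := by
              apply Real.log_le_log
              · exact_mod_cast Nat.floor_pos.2 hz1
              · exact (Nat.floor_le (by positivity)).trans hzx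
            linarith
    have h2 : (d : ℝ) ^ (-(1 / 3) : ℝ) ≤ 72 / L ^ 2 := by
      rw [Real.rpow_def_of_pos hd0]
      have h3 : L ^ 2 / 72 ≤ Real.exp (L / 6) := by
        have := Real.quadratic_le_exp_of_nonneg (x := L / 6) (by positivity)
        nlinarith
      calc Real.exp (Real.log d * -(1 / 3)) ≤ Real.exp (-(L / 6)) := by
            apply Real.exp_le_exp.2; linarith
        _ = (Real.exp (L / 6))⁻¹ := Real.exp_neg _
        _ ≤ (L ^ 2 / 72)⁻¹ := by gcongr
        _ = _ := by rw [inv_div]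
    have h4 : L⁻¹ ≤ L ^ (-α) := by
      rw [← Real.rpow_neg_one]
      exact Real.rpow_le_rpow_of_exponent_le hL1 (by linarith)
    calc _ ≤ (1 + L) * (72 / L ^ 2) := by gcongr
      _ ≤ (2 * L) * (72 / L ^ 2) := by gcongr; linarith
      _ = 144 * L⁻¹ := by field_simp; norm_num
      _ ≤ 144 * L ^ (-α) := by gcongr
      _ ≤ _ := by
          have : 0 ≤ C * (Real.exp (4 * cheb) + 2) := by positivity
          nlinarith

/-- `core` for functions that are only multiplicative. -/
theorem core_mult : ∃ C : ℝ, 0 < C ∧ ∀ F : ArithmeticFunction ℝ, F.IsMultiplicative →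
    (∀ n, |F n| ≤ 1) → ∀ x : ℝ, 9 ≤ x →
    |∑ n ∈ Icc 1 ⌊x⌋₊, F n / n| ≤
      C * (Real.exp (pSum F x) + Real.log x ^ (-(1 - 2 / Real.pi))) := by
  obtain ⟨C, hC, hin⟩ := inner_sum_bound
  obtain ⟨B, hB, hcor⟩ := corr_sum_le
  refine ⟨B * C, by positivity, fun F hF hb x hx => ?_⟩
  have hps : pSum (cmul F) x = pSum F x := by
    unfold pSum
    refine sum_congr rfl fun p hp => ?_
    rw [cmul_prime _ (mem_filter.1 hp).2]
  have hL1 := log_ge_one (x := x) (by linarith)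
  have hinn := hin (cmul F) (abs_cmul_le hb) x hx
  rw [hps] at hinn
  set M := C * (Real.exp (pSum F x) + Real.log x ^ (-(1 - 2 / Real.pi))) with hM
  have hM0 : 0 ≤ M := by positivity
  have e : ∑ n ∈ Icc 1 ⌊x⌋₊, F n / n =
      ∑ d ∈ Icc 1 ⌊x⌋₊, corr F d / d * ∑ m ∈ Icc 1 (⌊x⌋₊ / d), cmul F m / m := by
    have h := sum_dirichlet (fun d m : ℕ => corr F d / d * (cmul F m / m)) ⌊x⌋₊
    simp only [← mul_sum] at h
    rw [← h]
    refine sum_congr rfl fun n _ => ?_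
    conv_lhs => rw [← corr_mul F]
    rw [ArithmeticFunction.mul_apply, sum_div]
    refine sum_congr rfl fun q hq => ?_
    rw [← (Nat.mem_divisorsAntidiagonal.1 hq).1, cmulA_apply]
    push_cast
    rw [div_mul_div_comm]
  rw [e]
  calc _ ≤ ∑ d ∈ Icc 1 ⌊x⌋₊, |corr F d / d * ∑ m ∈ Icc 1 (⌊x⌋₊ / d), cmul F m / m| :=
        abs_sum_le_sum_abs _ _
    _ ≤ ∑ d ∈ Icc 1 ⌊x⌋₊, |corr F d| * (d : ℝ) ^ (-(2 / 3) : ℝ) * M := by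
        refine sum_le_sum fun d hd => ?_
        rw [mem_Icc] at hd
        have hd0 : (0 : ℝ) < d := by exact_mod_cast hd.1
        have h1 := hinn d hd.1 ((Nat.le_floor_iff (by linarith)).1 hd.2)
        have h2 : (d : ℝ)⁻¹ = (d : ℝ) ^ (-(2 / 3) : ℝ) * (d : ℝ) ^ (-(1 / 3) : ℝ) := by
          rw [← Real.rpow_add hd0, ← Real.rpow_neg_one]; congr 1; norm_num
        rw [abs_mul, abs_div, Nat.abs_cast, div_eq_mul_inv, h2]
        calc _ = |corr F d| * (d : ℝ) ^ (-(2 / 3) : ℝ) *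
              (|∑ m ∈ Icc 1 (⌊x⌋₊ / d), cmul F m / m| * (d : ℝ) ^ (-(1 / 3) : ℝ)) := by ring
          _ ≤ _ := by gcongr
    _ ≤ B * M := by
        rw [← sum_mul]
        gcongr
        exact hcor F hF hb _
    _ = _ := by rw [hM]; ring

/-- The restriction of `f` to integers all of whose prime factors are at most `y`. -/
noncomputable def smoothPart (f : ℕ → ℝ) (y : ℝ) : ArithmeticFunction ℝ :=
  ⟨fun n => if n ≠ 0 ∧ ∀ p : ℕ, p.Prime → p ∣ n → (p : ℝ) ≤ y then f n else 0, by simp⟩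

theorem smoothPart_apply (f : ℕ → ℝ) (y : ℝ) (n : ℕ) : smoothPart f y n =
    if n ≠ 0 ∧ ∀ p : ℕ, p.Prime → p ∣ n → (p : ℝ) ≤ y then f n else 0 := rfl

theorem smoothPart_mult {f : ℕ → ℝ} (hf : IsMult f) (y : ℝ) :
    (smoothPart f y).IsMultiplicative := by
  refine ⟨?_, fun {m n} h => ?_⟩
  · rw [smoothPart_apply, if_pos, hf.1]
    refine ⟨one_ne_zero, fun p hp h1 => absurd (Nat.dvd_one.1 h1) hp.ne_one⟩
  · have key : (m * n ≠ 0 ∧ ∀ p : ℕ, p.Prime → p ∣ m * n → (p : ℝ) ≤ y) ↔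
        (m ≠ 0 ∧ ∀ p : ℕ, p.Prime → p ∣ m → (p : ℝ) ≤ y) ∧
        (n ≠ 0 ∧ ∀ p : ℕ, p.Prime → p ∣ n → (p : ℝ) ≤ y) := by
      constructor
      · rintro ⟨h0, h1⟩
        exact ⟨⟨left_ne_zero_of_mul h0, fun p hp hd => h1 p hp (hd.mul_right n)⟩,
          ⟨right_ne_zero_of_mul h0, fun p hp hd => h1 p hp (hd.mul_left m)⟩⟩
      · rintro ⟨⟨h0, h1⟩, ⟨h2, h3⟩⟩
        refine ⟨mul_ne_zero h0 h2, fun p hp hd => ?_⟩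
        rcases hp.dvd_mul.1 hd with h | h
        exacts [h1 p hp h, h3 p hp h]
    simp only [smoothPart_apply, key]
    rw [ite_and, hf.2 m n h]
    split_ifs <;> simp

theorem pSum_smoothPart (f : ℕ → ℝ) {x y : ℝ} (hy : 2 ≤ y) (hyx : y ≤ x) :
    pSum (smoothPart f y) x = ∑ p ∈ primesUpTo y, f p / p := by
  have hsub : primesUpTo y ⊆ primesUpTo x := by
    intro p hp
    simp only [primesUpTo, mem_filter, mem_Iic] at hp ⊢
    exact ⟨hp.1.trans (Nat.floor_le_floor hyx), hp.2⟩
  unfold pSum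
  rw [← sum_subset hsub]
  · refine sum_congr rfl fun p hp => ?_
    simp only [primesUpTo, mem_filter, mem_Iic] at hp
    rw [smoothPart_apply, if_pos]
    refine ⟨hp.2.ne_zero, fun q hq hd => ?_⟩
    rw [(Nat.prime_dvd_prime_iff_eq hq hp.2).1 hd]
    exact (Nat.le_floor_iff (by linarith)).1 hp.1
  · intro p hp hpy
    simp only [primesUpTo, mem_filter, mem_Iic, not_and] at hp hpy
    rw [smoothPart_apply, if_neg, zero_div]
    rintro ⟨_, h⟩
    exact hpy (Nat.le_floor (h p hp.2 dvd_rfl)) hp.2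

end LogHalasz

theorem stmt10 :
    ∃ C : ℝ, 0 < C ∧ ∃ x₀ : ℝ,
      ∀ f : ℕ → ℝ, (∀ n, f n ∈ Set.Icc (-1 : ℝ) 1) → IsMult f →
        ∀ x : ℝ, x₀ ≤ x → ∀ y : ℝ, 2 ≤ y → y ≤ x →
          |∑ n ∈ (Finset.Icc 1 ⌊x⌋₊).filter
              (fun n : ℕ => ∀ p : ℕ, p.Prime → p ∣ n → (p : ℝ) ≤ y), f n / n| ≤
            C * (Real.log y * Real.exp (-(DsqOne f y))
              + 1 / (Real.log x) ^ ((1 : ℝ) - 2 / Real.pi)) := by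
  obtain ⟨C, hC, hcore⟩ := LogHalasz.core_mult
  obtain ⟨D, hD, hmer⟩ := LogHalasz.mertens_upper
  refine ⟨C * Real.exp D, by positivity, 9, fun f hf hm x hx y hy hyx => ?_⟩
  have hb : ∀ n, |LogHalasz.smoothPart f y n| ≤ 1 := by
    intro n
    rw [LogHalasz.smoothPart_apply]
    split_ifs
    · exact abs_le.2 (hf n)
    · simp
  have h := hcore _ (LogHalasz.smoothPart_mult hm y) hb x hx
  rw [LogHalasz.pSum_smoothPart f hy hyx] at h
  have e : ∑ n ∈ Icc 1 ⌊x⌋₊, LogHalasz.smoothPart f y n / n =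
      ∑ n ∈ (Finset.Icc 1 ⌊x⌋₊).filter
        (fun n : ℕ => ∀ p : ℕ, p.Prime → p ∣ n → (p : ℝ) ≤ y), f n / n := by
    rw [sum_filter]
    refine sum_congr rfl fun n hn => ?_
    have hn0 : n ≠ 0 := by have := (mem_Icc.1 hn).1; omega
    rw [LogHalasz.smoothPart_apply]
    simp only [hn0, ne_eq, not_false_eq_true, true_and]
    split_ifs <;> simp
  rw [e] at h
  have hly : 0 < Real.log y := Real.log_pos (by linarith)
  have hlx : 0 < Real.log x := Real.log_pos (by linarith)
  -- `∑ f(p)/p = ∑ 1/p - 𝔻²`, and the first sum is at most `log log y + D`.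
  have h1 : Real.exp (∑ p ∈ primesUpTo y, f p / p) ≤
      Real.exp D * (Real.log y * Real.exp (-(DsqOne f y))) := by
    have h2 : ∑ p ∈ primesUpTo y, f p / p = ∑ p ∈ primesUpTo y, 1 / (p : ℝ) - DsqOne f y := by
      rw [DsqOne, ← sum_sub_distrib]
      exact sum_congr rfl fun p _ => by ring
    calc _ ≤ Real.exp (D + (Real.log (Real.log y) + -(DsqOne f y))) := by
          apply Real.exp_le_exp.2
          have := hmer y hy
          linarith
      _ = _ := by rw [Real.exp_add, Real.exp_add, Real.exp_log hly]
  have h3 : 1 ≤ Real.exp D := Real.one_le_exp hD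
  have h4 : Real.log x ^ (-(1 - 2 / Real.pi)) = 1 / Real.log x ^ (1 - 2 / Real.pi) := by
    rw [Real.rpow_neg hlx.le, one_div]
  rw [h4] at h
  have h5 : 0 ≤ 1 / Real.log x ^ (1 - 2 / Real.pi) := by positivity
  refine h.trans ?_
  rw [mul_assoc]
  refine mul_le_mul_of_nonneg_left ?_ hC.le
  nlinarith
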